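/- arXiv:2211.03655 — 4 statements merged into one kernel-verified Lean document; each statement's English description precedes it below -/
import Mathlib

section
/- (Kulikov's inequality.) Let 0 < p < q < ∞, α > 1, and set β = qα/p (so that α/p = β/q). For every holomorphic f on the unit disk 𝔻 with ∫_𝔻 |f(z)|^p dA_α(z) < ∞, one has (∫_𝔻 |f(z)|^q dA_β(z))^{1/q} ≤ (∫_𝔻 |f(z)|^p dA_α(z))^{1/p}. -/
open MeasureTheory Metric

/-- The weighted Bergman measure `dA_α` on the unit disk:
density `((α-1)/π)(1-|z|²)^(α-2)` with respect to Lebesgue area measure. -/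
noncomputable def bergmanMeasure (α : ℝ) : Measure ℂ :=
  (volume.restrict (ball (0 : ℂ) 1)).withDensity
    (fun z => ENNReal.ofReal ((α - 1) / Real.pi * (1 - ‖z‖ ^ 2) ^ (α - 2)))


lemma kul_D (c s : ℝ) (hc : 1 ≤ c) (hs : 0 ≤ s) (hcs : c^2 - s^2 = 1) :
    ∫ τ in (c - s)..(c + s), Real.sqrt (s^2 - (τ - c)^2) / τ = Real.pi * (c - 1) := by
  rcases hs.eq_or_lt with h0 | h0
  · subst h0
    have : c = 1 := by nlinarith
    simp [this]
  have hcs' : 0 < c - s := by nlinarith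
  have key := intervalIntegral.integral_eq_sub_of_hasDerivAt_of_le (a := c - s) (b := c + s)
    (f := fun τ => Real.sqrt (s^2 - (τ - c)^2) + c * Real.arcsin ((τ - c)/s)
      - Real.arcsin ((c * τ - 1) / (s * τ)))
    (f' := fun τ => Real.sqrt (s^2 - (τ - c)^2) / τ) (by linarith) ?_ ?_ ?_
  · rw [key]
    have e1 : (c + s - c)/s = 1 := by field_simp; ring
    have e2 : (c - s - c)/s = -1 := by field_simp; ring
    have e3 : (c * (c+s) - 1)/(s*(c+s)) = 1 := by
      rw [div_eq_one_iff_eq (by positivity)]; nlinarith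
    have e4 : (c * (c-s) - 1)/(s*(c-s)) = -1 := by
      rw [div_eq_iff (by positivity)]; nlinarith
    simp only [e1, e2, e3, e4, Real.arcsin_one, Real.arcsin_neg]
    have e5 : s^2 - (c + s - c)^2 = 0 := by ring
    have e6 : s^2 - (c - s - c)^2 = 0 := by ring
    rw [e5, e6]; ring
  · apply ContinuousOn.sub
    · apply Continuous.continuousOn
      have := Real.continuous_arcsin
      fun_prop
    · apply Real.continuous_arcsin.comp_continuousOn
      apply ContinuousOn.div (by fun_prop) (by fun_prop)
      intro x hx
      have : 0 < x := by linarith [hx.1]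
      positivity
  · intro τ hτ
    have hτ0 : 0 < τ := by linarith [hτ.1]
    have hX : 0 < s^2 - (τ - c)^2 := by nlinarith [hτ.1, hτ.2]
    set Y := Real.sqrt (s^2 - (τ - c)^2) with hY
    have hYp : 0 < Y := Real.sqrt_pos.2 hX
    have hY2 : Y^2 = s^2 - (τ - c)^2 := Real.sq_sqrt hX.le
    have d1 : HasDerivAt (fun τ => Real.sqrt (s^2 - (τ - c)^2)) (-(2*(τ - c)) / (2 * Y)) τ := by
      have : HasDerivAt (fun τ => s^2 - (τ - c)^2) (-(2*(τ - c))) τ := by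
        have := (((hasDerivAt_id τ).sub_const c).pow 2).const_sub (s^2)
        simpa using this
      exact this.sqrt hX.ne'
    have d2 : HasDerivAt (fun τ => Real.arcsin ((τ - c)/s)) (1 / Y) τ := by
      have h1 : HasDerivAt (fun τ => (τ - c)/s) (1/s) τ := by
        simpa using ((hasDerivAt_id τ).sub_const c).div_const s
      have ha : -1 < (τ - c)/s := by rw [lt_div_iff₀ h0]; linarith [hτ.1]
      have hb : (τ - c)/s < 1 := by rw [div_lt_iff₀ h0]; linarith [hτ.2]
      have := (Real.hasDerivAt_arcsin ha.ne' hb.ne).comp τ h1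
      refine this.congr_deriv ?_
      have e : Real.sqrt (1 - ((τ - c)/s)^2) = Y / s := by
        rw [Real.sqrt_eq_iff_mul_self_eq_of_pos (by positivity)]
        field_simp; linarith
      rw [e]; field_simp
    have d3 : HasDerivAt (fun τ => Real.arcsin ((c * τ - 1) / (s * τ))) (1 / (τ * Y)) τ := by
      have h1 : HasDerivAt (fun τ => (c * τ - 1) / (s * τ)) (1/(s * τ^2)) τ := by
        have := (((hasDerivAt_id τ).const_mul c).sub_const 1).div ((hasDerivAt_id τ).const_mul s) (by positivity)
        refine this.congr_deriv ?_
        simp only [id]; field_simp; ring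
      have ha : -1 < (c * τ - 1) / (s * τ) := by rw [lt_div_iff₀ (by positivity)]; nlinarith [hτ.1]
      have hb : (c * τ - 1) / (s * τ) < 1 := by rw [div_lt_iff₀ (by positivity)]; nlinarith [hτ.2]
      have := (Real.hasDerivAt_arcsin ha.ne' hb.ne).comp τ h1
      refine this.congr_deriv ?_
      have e : Real.sqrt (1 - ((c * τ - 1) / (s * τ))^2) = Y / (s * τ) := by
        rw [Real.sqrt_eq_iff_mul_self_eq_of_pos (by positivity)]
        field_simp; nlinarith
      rw [e]; field_simp
    refine ((d1.add (d2.const_mul c)).sub d3).congr_deriv ?_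
    field_simp
    rw [hY2]; nlinarith
  · apply ContinuousOn.intervalIntegrable
    rw [Set.uIcc_of_le (by linarith)]
    apply ContinuousOn.div (by fun_prop) (by fun_prop)
    intro x hx
    have : 0 < x := by linarith [hx.1]
    positivity

lemma kul_ibp {g F : ℂ → ℝ} {U : Set ℂ} (hU : IsOpen U) (hg : ContDiff ℝ 1 g)
    (hc : HasCompactSupport g) (hs : tsupport g ⊆ U) (hF : ContDiffOn ℝ 1 F U) (v : ℂ) :
    ∫ z, g z * fderiv ℝ F z v = - ∫ z, F z * fderiv ℝ g z v := by
  have hP : ContDiff ℝ 1 (fun z => g z * F z) := by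
    rw [contDiff_iff_contDiffAt]
    intro z
    by_cases hz : z ∈ U
    · exact hg.contDiffAt.mul (hF.contDiffAt (hU.mem_nhds hz))
    · have : (fun z => g z * F z) =ᶠ[nhds z] fun _ => 0 := by
        have : (tsupport g)ᶜ ∈ nhds z := (isClosed_tsupport g).isOpen_compl.mem_nhds (fun h => hz (hs h))
        filter_upwards [this] with w hw
        rw [image_eq_zero_of_notMem_tsupport hw, zero_mul]
      exact contDiffAt_const.congr_of_eventuallyEq this
  have hPc : HasCompactSupport (fun z => g z * F z) := hc.mul_right
  have hPd : Continuous (fun z => fderiv ℝ (fun z => g z * F z) z v) :=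
    (hP.continuous_fderiv one_ne_zero).clm_apply continuous_const
  have h0 : ∫ z, fderiv ℝ (fun z => g z * F z) z v = 0 := by
    have := integral_mul_fderiv_eq_neg_fderiv_mul_of_integrable (μ := (volume : Measure ℂ)) (𝕜 := ℝ)
      (f := fun _ => (1:ℝ)) (g := fun z => g z * F z) (v := v) (by simp)
      (by simpa using hPd.integrable_of_hasCompactSupport (hPc.fderiv_apply ℝ v))
      (by simpa using hP.continuous.integrable_of_hasCompactSupport hPc)
      (fun x _ => by fun_prop) (fun x _ => hP.differentiable one_ne_zero x)
    simpa using this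
  have e : ∀ z, fderiv ℝ (fun z => g z * F z) z v = g z * fderiv ℝ F z v + F z * fderiv ℝ g z v := by
    intro z
    by_cases hz : z ∈ tsupport g
    · have h1 := (hF.contDiffAt (hU.mem_nhds (hs hz))).differentiableAt one_ne_zero
      rw [fderiv_fun_mul (hg.differentiable one_ne_zero z) h1]
      simp
    · have h1 : g =ᶠ[nhds z] fun _ => 0 := notMem_tsupport_iff_eventuallyEq.1 hz
      have h2 : (fun z => g z * F z) =ᶠ[nhds z] fun _ => 0 := by
        filter_upwards [h1] with w hw; simp [hw]
      rw [h1.fderiv_eq, h2.fderiv_eq, h1.eq_of_nhds]; simp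
  have i1 : Integrable (fun z => g z * fderiv ℝ F z v) := by
    apply Continuous.integrable_of_hasCompactSupport _ hc.mul_right
    rw [continuous_iff_continuousAt]
    intro z
    by_cases hz : z ∈ U
    · have : ContinuousAt (fderiv ℝ F) z :=
        (hF.continuousOn_fderiv_of_isOpen hU le_rfl).continuousAt (hU.mem_nhds hz)
      exact hg.continuous.continuousAt.mul (this.clm_apply continuousAt_const)
    · have h1 : g =ᶠ[nhds z] fun _ => 0 := notMem_tsupport_iff_eventuallyEq.1 (fun h => hz (hs h))
      have h2 : (fun z => g z * fderiv ℝ F z v) =ᶠ[nhds z] fun _ => 0 := by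
        filter_upwards [h1] with w hw; simp [hw]
      exact continuousAt_const.congr h2.symm
  have i2 : Integrable (fun z => F z * fderiv ℝ g z v) := by
    have : (fun z => F z * fderiv ℝ g z v) = fun z => fderiv ℝ (fun z => g z * F z) z v - g z * fderiv ℝ F z v := by
      ext z; rw [e]; ring
    rw [this]
    exact (hPd.integrable_of_hasCompactSupport (hPc.fderiv_apply ℝ v)).sub i1
  simp_rw [e] at h0
  rw [integral_add i1 i2] at h0
  linarith


lemma kul_int {g F : ℂ → ℝ} {U : Set ℂ} (hU : IsOpen U) (hg : Continuous g)
    (hc : HasCompactSupport g) (hs : tsupport g ⊆ U) (hF : ContinuousOn F U) :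
    Integrable (fun z => g z * F z) := by
  apply Continuous.integrable_of_hasCompactSupport _ hc.mul_right
  rw [continuous_iff_continuousAt]
  intro z
  by_cases hz : z ∈ U
  · exact hg.continuousAt.mul (hF.continuousAt (hU.mem_nhds hz))
  · have h1 : g =ᶠ[nhds z] fun _ => 0 := notMem_tsupport_iff_eventuallyEq.1 (fun h => hz (hs h))
    have h2 : (fun z => g z * F z) =ᶠ[nhds z] fun _ => 0 := by
      filter_upwards [h1] with w hw; simp [hw]
    exact continuousAt_const.congr h2.symm

lemma kul_fub (F : ℂ → ℝ) (hF : Integrable F) :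
    Integrable (fun y : ℝ => ∫ x : ℝ, F ⟨x, y⟩) ∧ ∫ z, F z = ∫ y : ℝ, ∫ x : ℝ, F ⟨x, y⟩ := by
  have mp := Complex.volume_preserving_equiv_real_prod.symm
  have h1 : Integrable (fun q : ℝ × ℝ => F ⟨q.1, q.2⟩) := by
    have := (mp.integrable_comp_emb Complex.measurableEquivRealProd.symm.measurableEmbedding (g := F)).2 hF
    exact this
  have h2 : ∫ z, F z = ∫ q : ℝ × ℝ, F ⟨q.1, q.2⟩ := by
    rw [← mp.integral_comp Complex.measurableEquivRealProd.symm.measurableEmbedding]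
    rfl
  rw [h2]
  exact ⟨h1.integral_prod_right, integral_prod_symm _ h1⟩

lemma kul_T (a b : ℝ) (ha : 0 < a) (hab : a ≤ b) (σ : ℝ → ℝ) (hσ : Continuous σ)
    (h0 : ∀ y, 0 ≤ σ y) (h2 : ∀ y, y ∉ Set.Icc a b → σ y = 0) :
    ∃ (R : ℝ) (T : ℝ → ℝ), 0 ≤ R ∧ ContDiff ℝ 1 T ∧
      (∀ y, 0 < y → HasDerivAt T (σ y * T y / y) y) ∧
      (∀ y ∈ Set.Icc a b, T y ∈ Set.Icc (Real.cosh R - Real.sinh R) (Real.cosh R + Real.sinh R)) ∧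
      T a = Real.cosh R - Real.sinh R ∧ T b = Real.cosh R + Real.sinh R := by
  set κ : ℝ → ℝ := fun u => σ u / max u a with hκ
  have hκc : Continuous κ := by
    apply hσ.div (by fun_prop)
    intro u; have := le_max_right u a; linarith
  have hκ0 : ∀ u, 0 ≤ κ u := fun u => div_nonneg (h0 u) (le_trans ha.le (le_max_right u a))
  have hκe : ∀ u, 0 < u → κ u = σ u / u := by
    intro u hu
    by_cases h : a ≤ u
    · simp [hκ, max_eq_left h]
    · have : σ u = 0 := h2 u (fun h' => h h'.1)
      simp [hκ, this]
  set R := (∫ u in a..b, κ u) / 2 with hR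
  set T : ℝ → ℝ := fun y => Real.exp ((∫ u in a..y, κ u) - R) with hT
  have hii : ∀ x y, IntervalIntegrable κ volume x y := fun x y => hκc.intervalIntegrable x y
  have hd : ∀ y, HasDerivAt T (T y * κ y) y := by
    intro y
    have : HasDerivAt (fun y => (∫ u in a..y, κ u) - R) (κ y) y :=
      (intervalIntegral.integral_hasDerivAt_right (hii _ _)
        (hκc.stronglyMeasurableAtFilter _ _) hκc.continuousAt).sub_const R
    exact this.exp
  have hTc : Continuous T := continuous_iff_continuousAt.2 fun y => (hd y).continuousAt
  have hRp : Real.exp R = Real.cosh R + Real.sinh R := by rw [Real.cosh_add_sinh]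
  have hRm : Real.exp (-R) = Real.cosh R - Real.sinh R := by rw [Real.cosh_sub_sinh]
  have hR0 : 0 ≤ R := by
    have : 0 ≤ ∫ u in a..b, κ u := intervalIntegral.integral_nonneg hab (fun u _ => hκ0 u)
    positivity
  refine ⟨R, T, hR0, ?_, ?_, ?_, ?_, ?_⟩
  · rw [contDiff_one_iff_deriv]
    refine ⟨fun y => (hd y).differentiableAt, ?_⟩
    have : deriv T = fun y => T y * κ y := funext fun y => (hd y).deriv
    rw [this]; exact hTc.mul hκc
  · intro y hy
    refine (hd y).congr_deriv ?_
    rw [hκe y hy]; ring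
  · intro y hy
    rw [← hRp, ← hRm]
    have e : (∫ u in a..y, κ u) + ∫ u in y..b, κ u = 2 * R := by
      rw [intervalIntegral.integral_add_adjacent_intervals (hii _ _) (hii _ _)]; ring
    have p1 : 0 ≤ ∫ u in a..y, κ u := intervalIntegral.integral_nonneg hy.1 (fun u _ => hκ0 u)
    have p2 : 0 ≤ ∫ u in y..b, κ u := intervalIntegral.integral_nonneg hy.2 (fun u _ => hκ0 u)
    constructor <;> apply Real.exp_le_exp.2 <;> linarith
  · rw [← hRm]; simp [hT]
  · rw [← hRp]; simp only [hT]; congr 1; linarith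

lemma kul_alg (c s A E L : ℝ) (hc1 : 1 ≤ c) (hs0 : 0 ≤ s) (hcs : c^2 - s^2 = 1) (hA0 : 0 ≤ A)
    (hE0 : 0 ≤ E) (hL0 : 0 ≤ L)
    (main : c * (A + 2 * Real.pi) - 2 * Real.pi - s * E ≤ s * L) :
    Real.sqrt (A^2 + 4 * Real.pi * A) - E ≤ L := by
  have hp := Real.pi_pos
  rcases hs0.eq_or_lt with hs' | hs'
  · rw [← hs'] at main
    have hcc : c = 1 := by rw [← hs'] at hcs; nlinarith
    have : A = 0 := by rw [hcc] at main; linarith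
    rw [this]; simp; linarith
  · have : s * Real.sqrt (A^2 + 4 * Real.pi * A) ≤ c * (A + 2 * Real.pi) - 2 * Real.pi := by
      have e : s * Real.sqrt (A^2 + 4 * Real.pi * A) = Real.sqrt (s^2 * (A^2 + 4 * Real.pi * A)) := by
        rw [Real.sqrt_mul (by positivity), Real.sqrt_sq hs0]
      rw [e]
      apply Real.sqrt_le_iff.2
      constructor
      · nlinarith [mul_nonneg (sub_nonneg.2 hc1) (by positivity : 0 ≤ A + 2 * Real.pi)]
      · have : s^2 = c^2 - 1 := by linarith
        rw [this]
        have : (c * (A + 2 * Real.pi) - 2 * Real.pi)^2 - (c^2 - 1) * (A^2 + 4 * Real.pi * A)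
          = (A + 2 * Real.pi - 2 * Real.pi * c)^2 := by ring
        nlinarith [sq_nonneg (A + 2 * Real.pi - 2 * Real.pi * c)]
    have : s * (Real.sqrt (A^2 + 4 * Real.pi * A) - E) ≤ s * L := by linarith
    exact le_of_mul_le_mul_left this hs'

set_option maxHeartbeats 1000000 in
lemma kul_iso (g : ℂ → ℝ) (hg : ContDiff ℝ 1 g) (hc : HasCompactSupport g)
    (hs : tsupport g ⊆ {z | 0 < z.im}) (h0 : ∀ z, 0 ≤ g z) (h1 : ∀ z, g z ≤ 1) :
    Real.sqrt ((∫ z, g z ^ 2 / z.im ^ 2) ^ 2 + 4 * Real.pi * (∫ z, g z ^ 2 / z.im ^ 2))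
      - ∫ z, g z * (1 - g z) / z.im ^ 2 ≤
    ∫ z, Real.sqrt ((fderiv ℝ g z 1) ^ 2 + (fderiv ℝ g z Complex.I) ^ 2) / z.im := by
  have hU : IsOpen {z : ℂ | 0 < z.im} := isOpen_lt continuous_const Complex.continuous_im
  -- bounds of the support
  obtain ⟨a, b, B, ha, hab, hB, hsupp⟩ : ∃ a b B : ℝ, 0 < a ∧ a ≤ b ∧ 0 < B ∧
      ∀ z ∈ tsupport g, z.im ∈ Set.Icc a b ∧ z.re ∈ Set.Ioo (-B) B := by
    obtain ⟨M, hM⟩ := (hc.isCompact.image_of_continuousOn (f := fun z : ℂ => (z.im)⁻¹)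
      (Complex.continuous_im.continuousOn.inv₀ (fun z hz => (hs hz).ne'))).bddAbove
    obtain ⟨N, hN⟩ := hc.isCompact.isBounded.exists_norm_le
    have hM' : ∀ z ∈ tsupport g, (z.im)⁻¹ ≤ M := fun z hz => hM ⟨z, hz, rfl⟩
    refine ⟨(|M| + 1)⁻¹, |N| + 1, |N| + 1, by positivity, ?_, by positivity, ?_⟩
    · exact (inv_le_one_of_one_le₀ (by linarith [abs_nonneg M])).trans (by linarith [abs_nonneg N])
    · intro z hz
      have hz0 : 0 < z.im := hs hz
      have h3 := hM' z hz
      have h4 := hN z hz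
      have h5 := Complex.abs_im_le_norm z
      have h6 := Complex.abs_re_le_norm z
      have h7 := abs_le.1 h5
      have h8 := abs_le.1 h6
      refine ⟨⟨?_, ?_⟩, ?_, ?_⟩
      · rw [inv_le_comm₀ (by positivity) hz0]; linarith [le_abs_self M]
      all_goals linarith [le_abs_self N]
  have gz : ∀ z, ¬ (z.im ∈ Set.Icc a b ∧ z.re ∈ Set.Ioo (-B) B) → g z = 0 := fun z hz =>
    image_eq_zero_of_notMem_tsupport (fun h => hz (hsupp z h))
  have gdz : ∀ z v, z ∉ tsupport g → fderiv ℝ g z v = 0 := by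
    intro z v h
    have : fderiv ℝ g z = 0 :=
      image_eq_zero_of_notMem_tsupport (fun h' => h (tsupport_fderiv_subset ℝ h'))
    rw [this]; rfl
  have hgc := hg.continuous
  have hgd : ∀ v, Continuous (fun z => fderiv ℝ g z v) := fun v =>
    (hg.continuous_fderiv one_ne_zero).clm_apply continuous_const
  have hmk : Continuous (fun q : ℝ × ℝ => (⟨q.2, q.1⟩ : ℂ)) := by
    have : (fun q : ℝ × ℝ => (⟨q.2, q.1⟩ : ℂ)) = fun q => (q.2 : ℂ) + q.1 * Complex.I := by
      ext q; simp [Complex.ext_iff]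
    rw [this]; fun_prop
  -- the horizontal variation
  set J : ℝ → ℝ := fun y => ∫ x in (-B)..B, |fderiv ℝ g ⟨x, y⟩ 1| with hJ
  have hJc : Continuous J := by
    apply intervalIntegral.continuous_parametric_intervalIntegral_of_continuous'
    exact ((hgd 1).comp hmk).abs
  have hJ0 : ∀ y, 0 ≤ J y := fun y =>
    intervalIntegral.integral_nonneg (by linarith) (fun x _ => abs_nonneg _)
  have hJfull : ∀ y, ∫ x : ℝ, |fderiv ℝ g ⟨x, y⟩ 1| = J y := by
    intro y
    rw [hJ]; simp only
    rw [intervalIntegral.integral_of_le (by linarith)]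
    symm
    apply setIntegral_eq_integral_of_forall_compl_eq_zero
    intro x hx
    rw [gdz, abs_zero]
    intro h
    exact hx ⟨(hsupp _ h).2.1, (hsupp _ h).2.2.le⟩
  have hgJ : ∀ z, 2 * g z ≤ J z.im := by
    intro z
    by_cases hz : z.im ∈ Set.Icc a b ∧ z.re ∈ Set.Ioo (-B) B
    swap
    · rw [gz z hz]; simpa using hJ0 z.im
    have hder : ∀ x : ℝ, HasDerivAt (fun x : ℝ => g ⟨x, z.im⟩) (fderiv ℝ g ⟨x, z.im⟩ 1) x := by
      intro x
      have h1 : HasDerivAt (fun x : ℝ => (⟨x, z.im⟩ : ℂ)) 1 x := by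
        have : (fun x : ℝ => (⟨x, z.im⟩ : ℂ)) = fun x : ℝ => (x : ℂ) + z.im * Complex.I := by
          ext q; simp [Complex.ext_iff]
        rw [this]
        exact (Complex.ofRealCLM.hasDerivAt).add_const _
      exact ((hg.differentiable one_ne_zero) _).hasFDerivAt.comp_hasDerivAt x h1
    have hcx : Continuous (fun x : ℝ => fderiv ℝ g ⟨x, z.im⟩ 1) :=
      (hgd 1).comp (hmk.comp (by fun_prop : Continuous (fun x : ℝ => (z.im, x))))
    have f1 := intervalIntegral.integral_eq_sub_of_hasDerivAt (a := -B) (b := z.re)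
      (fun x _ => hder x) (hcx.intervalIntegrable _ _)
    have f2 := intervalIntegral.integral_eq_sub_of_hasDerivAt (a := z.re) (b := B)
      (fun x _ => hder x) (hcx.intervalIntegrable _ _)
    have z1 : g ⟨-B, z.im⟩ = 0 := gz _ (fun h => by simpa using h.2.1)
    have z2 : g ⟨B, z.im⟩ = 0 := gz _ (fun h => by simpa using h.2.2)
    have n1 := intervalIntegral.abs_integral_le_integral_abs (f := fun x : ℝ => fderiv ℝ g ⟨x, z.im⟩ 1)
      (μ := volume) hz.2.1.le
    have n2 := intervalIntegral.abs_integral_le_integral_abs (f := fun x : ℝ => fderiv ℝ g ⟨x, z.im⟩ 1)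
      (μ := volume) hz.2.2.le
    have n3 : J z.im = _ := (intervalIntegral.integral_add_adjacent_intervals
      (hcx.abs.intervalIntegrable (μ := volume) (-B) z.re) (hcx.abs.intervalIntegrable z.re B)).symm
    rw [f1, z1] at n1
    rw [f2, z2] at n2
    rw [n3]
    have := le_abs_self (g ⟨z.re, z.im⟩ - 0)
    have := neg_le_abs (0 - g ⟨z.re, z.im⟩)
    have : g z = g ⟨z.re, z.im⟩ := rfl
    linarith
  set σ : ℝ → ℝ := fun y => min 1 (J y / 2) with hσ
  have hσc : Continuous σ := by fun_prop
  have hσ0 : ∀ y, 0 ≤ σ y := fun y => le_min zero_le_one (by have := hJ0 y; positivity)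
  have hσ1 : ∀ y, σ y ≤ 1 := fun y => min_le_left _ _
  have hσJ : ∀ y, 2 * σ y ≤ J y := fun y => by have := min_le_right 1 (J y / 2); simp only [hσ]; linarith
  have hσg : ∀ z, g z ≤ σ z.im := fun z => le_min (h1 z) (by linarith [hgJ z])
  have hσs : ∀ y, y ∉ Set.Icc a b → σ y = 0 := by
    intro y hy
    have : J y = 0 := by
      rw [← hJfull]
      simp_rw [fun x : ℝ => gdz ⟨x, y⟩ 1 (fun h => hy (hsupp _ h).1)]
      simp
    simp [hσ, this]
  obtain ⟨R, T, hR0, hTC, hTd, hTr, hTa, hTb⟩ := kul_T a b ha hab σ hσc hσ0 hσs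
  set c := Real.cosh R with hcdef
  set s := Real.sinh R with hsdef
  have hcs : c^2 - s^2 = 1 := Real.cosh_sq_sub_sinh_sq R
  have hc1 : 1 ≤ c := Real.one_le_cosh R
  have hs0 : 0 ≤ s := Real.sinh_nonneg_iff.2 hR0
  have hTc := hTC.continuous
  have htsim : ∀ z, z ∉ tsupport g → g z = 0 := fun z hz => image_eq_zero_of_notMem_tsupport hz
  set A := ∫ z, g z ^ 2 / z.im ^ 2 with hA
  set E := ∫ z, g z * (1 - g z) / z.im ^ 2 with hE
  set L := ∫ z, Real.sqrt ((fderiv ℝ g z 1) ^ 2 + (fderiv ℝ g z Complex.I) ^ 2) / z.im with hL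
  have hcim : ContinuousOn (fun z : ℂ => (z.im)⁻¹) {z | 0 < z.im} :=
    Complex.continuous_im.continuousOn.inv₀ (fun z hz => ne_of_gt hz)
  have hcim2 : ContinuousOn (fun z : ℂ => (z.im ^ 2)⁻¹) {z | 0 < z.im} :=
    (Complex.continuous_im.pow 2).continuousOn.inv₀ (fun z hz => (pow_pos hz 2).ne')
  have sub1 : ∀ v, tsupport (fun z => fderiv ℝ g z v) ⊆ tsupport g := fun v =>
    tsupport_fderiv_apply_subset ℝ v
  have cs1 : ∀ v, HasCompactSupport (fun z => fderiv ℝ g z v) := fun v => hc.fderiv_apply ℝ v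
  have iA : Integrable (fun z => g z ^ 2 / z.im ^ 2) := by
    refine (kul_int hU hgc hc hs (hgc.continuousOn.mul hcim2)).congr (Filter.Eventually.of_forall fun z => ?_)
    simp only [div_eq_mul_inv, Pi.mul_apply, Pi.sub_apply]; ring
  have iE : Integrable (fun z => g z * (1 - g z) / z.im ^ 2) := by
    refine (kul_int hU hgc hc hs (((continuous_const (y := (1:ℝ))).sub hgc).continuousOn.mul hcim2)).congr (Filter.Eventually.of_forall fun z => ?_)
    simp only [div_eq_mul_inv, Pi.mul_apply, Pi.sub_apply]; ring
  have iL : Integrable (fun z => Real.sqrt ((fderiv ℝ g z 1) ^ 2 + (fderiv ℝ g z Complex.I) ^ 2) / z.im) := by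
    have hcont : Continuous (fun z => Real.sqrt ((fderiv ℝ g z 1) ^ 2 + (fderiv ℝ g z Complex.I) ^ 2)) :=
      Real.continuous_sqrt.comp (((hgd 1).pow 2).add ((hgd Complex.I).pow 2))
    have hz : ∀ z, z ∉ tsupport g → Real.sqrt ((fderiv ℝ g z 1) ^ 2 + (fderiv ℝ g z Complex.I) ^ 2) = 0 := by
      intro z h; rw [gdz z _ h, gdz z _ h]; simp
    refine (kul_int (F := fun z => (z.im)⁻¹) hU hcont (HasCompactSupport.intro hc.isCompact hz) ?_ hcim).congr
      (Filter.Eventually.of_forall fun z => ?_)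
    · refine subset_trans ?_ hs
      apply closure_minimal _ (isClosed_tsupport g)
      intro z h; by_contra h'; exact h (hz z h')
    · simp only [div_eq_mul_inv]
  -- first term
  set Q : ℝ → ℝ := fun y => Real.sqrt (s^2 - (T y - c)^2) / y with hQ
  have iX : Integrable (fun z : ℂ => |fderiv ℝ g z 1| * Q z.im) := by
    refine kul_int hU (hgd 1).abs ((cs1 1).comp_left (g := fun t : ℝ => |t|) abs_zero) ?_ ?_
    · refine subset_trans (closure_mono ?_) ((sub1 1).trans hs)
      intro z h; simpa using h
    · apply ContinuousOn.div
      · fun_prop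
      · fun_prop
      · intro z hz; exact ne_of_gt hz
  have t1 : 2 * (Real.pi * (c - 1)) ≤ ∫ z : ℂ, |fderiv ℝ g z 1| * Q z.im := by
    obtain ⟨k1, k2⟩ := kul_fub _ iX
    rw [k2]
    simp only [integral_mul_const, hJfull] at k1 ⊢
    have hsub := intervalIntegral.integral_comp_mul_deriv'' (a := a) (b := b) (f := T)
      (f' := fun y => σ y * T y / y) (g := fun τ => Real.sqrt (s^2 - (τ - c)^2) / τ)
      hTc.continuousOn ?_ ?_ ?_
    · rw [hTa, hTb, kul_D c s hc1 hs0 hcs] at hsub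
      rw [← hsub, ← intervalIntegral.integral_const_mul, intervalIntegral.integral_of_le hab,
        ← integral_indicator measurableSet_Ioc]
      refine integral_mono_of_nonneg ?_ k1 ?_
      · apply Filter.Eventually.of_forall
        intro y
        apply Set.indicator_nonneg
        intro y hy
        have hy0 : 0 < y := lt_trans ha hy.1
        have hT0 : 0 < T y := lt_of_lt_of_le (by nlinarith) (hTr y ⟨hy.1.le, hy.2⟩).1
        simp only [Function.comp]
        have := hσ0 y
        positivity
      · apply Filter.Eventually.of_forall
        intro y
        by_cases hy : y ∈ Set.Ioc a b
        · simp only [Set.indicator_of_mem hy, Function.comp]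
          have hy0 : 0 < y := lt_trans ha hy.1
          have hT0 : 0 < T y := lt_of_lt_of_le (by nlinarith) (hTr y ⟨hy.1.le, hy.2⟩).1
          have e : 2 * (Real.sqrt (s^2 - (T y - c)^2) / T y * (σ y * T y / y)) = (2 * σ y) * Q y := by
            simp only [hQ]; field_simp
          rw [e]
          apply mul_le_mul_of_nonneg_right (hσJ y)
          simp only [hQ]; positivity
        · simp only [Set.indicator_of_notMem hy]
          by_cases hy0 : 0 ≤ y
          · have := hJ0 y
            simp only [hQ]; positivity
          · have : J y = 0 := by
              rw [← hJfull]
              simp_rw [fun x : ℝ => gdz ⟨x, y⟩ 1 (fun h => by have := (hsupp _ h).1.1; simp at this; linarith)]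
              simp
            simp [this]
    · intro y hy
      rw [min_eq_left hab, max_eq_right hab] at hy
      exact (hTd y (lt_trans ha hy.1)).hasDerivWithinAt
    · rw [Set.uIcc_of_le hab]
      apply ContinuousOn.div (by fun_prop) (by fun_prop)
      intro y hy; exact (lt_of_lt_of_le ha hy.1).ne'
    · rw [Set.uIcc_of_le hab]
      apply ContinuousOn.div (by fun_prop) (by fun_prop)
      rintro _ ⟨y, hy, rfl⟩
      exact (lt_of_lt_of_le (by nlinarith) (hTr y hy).1).ne'
  -- second term
  set F : ℂ → ℝ := fun z => (T z.im - c) / z.im with hF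
  have hFC : ContDiffOn ℝ 1 F {z | 0 < z.im} := by
    apply ContDiffOn.div
    · exact ((hTC.comp Complex.imCLM.contDiff).sub contDiff_const).contDiffOn
    · exact Complex.imCLM.contDiff.contDiffOn
    · intro z hz; exact ne_of_gt hz
  have hFd : ∀ z : ℂ, 0 < z.im → fderiv ℝ F z Complex.I = ((σ z.im - 1) * T z.im + c) / z.im ^ 2 := by
    intro z hz
    have d1 : HasDerivAt (fun y => (T y - c) / y) (((σ z.im - 1) * T z.im + c) / z.im ^ 2) z.im := by
      refine (((hTd _ hz).sub_const c).div (hasDerivAt_id _) hz.ne').congr_deriv ?_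
      simp only [id]; field_simp; ring
    have d2 := d1.comp_hasFDerivAt z (Complex.imCLM.hasFDerivAt)
    have : HasFDerivAt F _ z := d2
    rw [this.fderiv]; simp
  have ibp := kul_ibp hU hg hc hs hFC Complex.I
  have iF : Integrable (fun z => fderiv ℝ g z Complex.I * F z) :=
    kul_int hU (hgd _) (cs1 _) ((sub1 _).trans hs) hFC.continuousOn
  have iG : Integrable (fun z => g z * fderiv ℝ F z Complex.I) :=
    kul_int hU hgc hc hs ((hFC.continuousOn_fderiv_of_isOpen hU le_rfl).clm_apply continuousOn_const)
  have t2 : c * A - s * E ≤ ∫ z, g z * fderiv ℝ F z Complex.I := by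
    rw [hA, hE, ← integral_const_mul, ← integral_const_mul, ← integral_sub (iA.const_mul c) (iE.const_mul s)]
    apply integral_mono ((iA.const_mul c).sub (iE.const_mul s)) iG
    intro z
    by_cases hz : z ∈ tsupport g
    · have hz0 : 0 < z.im := hs hz
      have hTz := hTr z.im (hsupp z hz).1
      simp only [Pi.sub_apply]
      rw [hFd z hz0]
      have e : c * (g z ^ 2 / z.im ^ 2) - s * (g z * (1 - g z) / z.im ^ 2)
        = (g z * (c * g z - s * (1 - g z))) / z.im ^ 2 := by ring
      rw [e, ← mul_div_assoc]
      apply div_le_div_of_nonneg_right _ (by positivity)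
      apply mul_le_mul_of_nonneg_left _ (h0 z)
      have hT0 : 0 < T z.im := lt_of_lt_of_le (by nlinarith) hTz.1
      have q1 : (g z - 1) * T z.im ≤ (σ z.im - 1) * T z.im :=
        mul_le_mul_of_nonneg_right (by linarith [hσg z]) hT0.le
      have q2 : (1 - g z) * T z.im ≤ (1 - g z) * (c + s) :=
        mul_le_mul_of_nonneg_left hTz.2 (by linarith [h1 z])
      linarith
    · simp [htsim z hz]
  have t3 : (∫ z : ℂ, |fderiv ℝ g z 1| * Q z.im) - ∫ z, F z * fderiv ℝ g z Complex.I ≤ s * L := by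
    have iF' : Integrable (fun z => F z * fderiv ℝ g z Complex.I) := by simpa [mul_comm] using iF
    rw [hL, ← integral_const_mul, ← integral_sub iX iF']
    apply integral_mono (iX.sub iF') (iL.const_mul s)
    intro z
    by_cases hz : z ∈ tsupport g
    · have hz0 : 0 < z.im := hs hz
      have hTz := hTr z.im (hsupp z hz).1
      simp only [Pi.sub_apply, hQ, hF]
      set l := Real.sqrt (s^2 - (T z.im - c)^2)
      have hl : l^2 = s^2 - (T z.im - c)^2 := Real.sq_sqrt (by nlinarith [hTz.1, hTz.2])
      set u := fderiv ℝ g z 1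
      set v := fderiv ℝ g z Complex.I
      have e : |u| * (l / z.im) - (T z.im - c) / z.im * v = (|u| * l - (T z.im - c) * v) / z.im := by ring
      rw [e, ← mul_div_assoc]
      apply div_le_div_of_nonneg_right _ hz0.le
      have : s * Real.sqrt (u^2 + v^2) = Real.sqrt (s^2 * (u^2+v^2)) := by
        rw [Real.sqrt_mul (by positivity), Real.sqrt_sq hs0]
      rw [this]
      apply Real.le_sqrt_of_sq_le
      have hu : |u|^2 = u^2 := sq_abs u
      have : s^2 = l^2 + (T z.im - c)^2 := by linarith
      rw [this, ← hu]
      nlinarith [sq_nonneg (|u| * (T z.im - c) + l * v)]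
    · simp [gdz z _ hz]
  have hA0 : 0 ≤ A := integral_nonneg fun z => by positivity
  have hE0 : 0 ≤ E := integral_nonneg fun z => by
    have := h0 z; have := h1 z
    simp only
    apply div_nonneg (mul_nonneg (by linarith) (by linarith)) (by positivity)
  have hL0 : 0 ≤ L := integral_nonneg_of_ae <| Filter.Eventually.of_forall fun z => by
    by_cases hz : z ∈ tsupport g
    · have hz0 : 0 < z.im := hs hz
      simp only; positivity
    · simp [gdz z _ hz]
  have main : c * (A + 2 * Real.pi) - 2 * Real.pi - s * E ≤ s * L := by linarith
  exact kul_alg c s A E L hc1 hs0 hcs hA0 hE0 hL0 main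


lemma kul_int2 {h : ℂ → ℝ} {U K : Set ℂ} (hU : IsOpen U) (hK : IsCompact K) (hKU : K ⊆ U)
    (hc : ContinuousOn h U) (h0 : ∀ z, z ∉ K → h z = 0) : Integrable h := by
  apply Continuous.integrable_of_hasCompactSupport _ (HasCompactSupport.intro hK h0)
  rw [continuous_iff_continuousAt]
  intro z
  by_cases hz : z ∈ U
  · exact hc.continuousAt (hU.mem_nhds hz)
  · have h2 : h =ᶠ[nhds z] fun _ => 0 := by
      filter_upwards [hK.isClosed.isOpen_compl.mem_nhds (fun h => hz (hKU h))] with w hw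
      exact h0 w hw
    exact continuousAt_const.congr h2.symm

lemma kul_step (s t K : ℝ) (hst : s < t) (hK : 1 / (t - s) < K) :
    ∃ φ : ℝ → ℝ, ContDiff ℝ 1 φ ∧ (∀ x ≤ s, φ x = 0) ∧ (∀ x, t ≤ x → φ x = 1) ∧
      (∀ x, 0 ≤ φ x) ∧ (∀ x, φ x ≤ 1) ∧
      (∀ x, 0 ≤ deriv φ x) ∧ (∀ x, deriv φ x ≤ K) ∧ (∀ x, x ∉ Set.Ioo s t → deriv φ x = 0) := by
  have hts : 0 < t - s := by linarith
  have hK0 : 0 < K := lt_trans (by positivity) hK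
  have hKi : 1 / K < t - s := by rw [div_lt_comm₀ hK0 hts]; exact hK
  set κ := (t - s - 1 / K) / 2 with hκ
  have hκ0 : 0 < κ := by simp only [hκ]; linarith
  set ψ : ℝ → ℝ := fun x => max 0 (min 1 (min ((x - s)/κ) ((t - x)/κ))) with hψ
  have hψc : Continuous ψ := by fun_prop
  have hψ0 : ∀ x, 0 ≤ ψ x := fun x => le_max_left _ _
  have hψ1 : ∀ x, ψ x ≤ 1 := fun x => max_le zero_le_one (min_le_left _ _)
  have hψz : ∀ x, x ∉ Set.Ioo s t → ψ x = 0 := by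
    intro x hx
    apply max_eq_left
    by_cases h : s < x
    · have : t ≤ x := by by_contra h'; exact hx ⟨h, by linarith⟩
      exact (min_le_right _ _).trans ((min_le_right _ _).trans (div_nonpos_of_nonpos_of_nonneg (by linarith) hκ0.le))
    · exact (min_le_right _ _).trans ((min_le_left _ _).trans (div_nonpos_of_nonpos_of_nonneg (by linarith) hκ0.le))
  have hii : ∀ x y, IntervalIntegrable ψ volume x y := fun x y => hψc.intervalIntegrable x y
  set Z := ∫ x in s..t, ψ x with hZ
  have hKp : 0 < 1 / K := by positivity
  have hZK : 1 / K ≤ Z := by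
    have e1 : Z = (∫ x in s..(s+κ), ψ x) + (∫ x in (s+κ)..(t-κ), ψ x) + ∫ x in (t-κ)..t, ψ x := by
      rw [intervalIntegral.integral_add_adjacent_intervals (hii _ _) (hii _ _),
        intervalIntegral.integral_add_adjacent_intervals (hii _ _) (hii _ _)]
    have e2 : 0 ≤ ∫ x in s..(s+κ), ψ x := intervalIntegral.integral_nonneg (by linarith) (fun x _ => hψ0 x)
    have e3 : 0 ≤ ∫ x in (t-κ)..t, ψ x := intervalIntegral.integral_nonneg (by linarith) (fun x _ => hψ0 x)
    have hle : s + κ ≤ t - κ := by simp only [hκ]; linarith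
    have e4 : ∫ x in (s+κ)..(t-κ), ψ x = ∫ x in (s+κ)..(t-κ), (1:ℝ) := by
      apply intervalIntegral.integral_congr
      intro x hx
      rw [Set.uIcc_of_le hle] at hx
      have h1 : 1 ≤ (x - s)/κ := by rw [le_div_iff₀ hκ0]; linarith [hx.1]
      have h2 : 1 ≤ (t - x)/κ := by rw [le_div_iff₀ hκ0]; linarith [hx.2]
      simp only [hψ]
      rw [min_eq_left (le_min h1 h2)]; simp
    rw [e4] at e1
    simp at e1
    have : t - κ - (s + κ) = 1 / K := by simp only [hκ]; ring
    rw [one_div] at *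
    linarith
  have hZ0 : 0 < Z := lt_of_lt_of_le (by positivity) hZK
  set φ : ℝ → ℝ := fun x => (∫ u in s..x, ψ u) / Z with hφ
  have hd : ∀ x, HasDerivAt φ (ψ x / Z) x := fun x =>
    (intervalIntegral.integral_hasDerivAt_right (hii _ _)
        (hψc.stronglyMeasurableAtFilter _ _) hψc.continuousAt).div_const Z
  have hder : deriv φ = fun x => ψ x / Z := funext fun x => (hd x).deriv
  have hmono : Monotone φ := monotone_of_deriv_nonneg (fun x => (hd x).differentiableAt)
    (fun x => by rw [hder]; exact div_nonneg (hψ0 x) hZ0.le)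
  have hs0 : ∀ x ≤ s, φ x = 0 := by
    intro x hx
    have : ∫ u in s..x, ψ u = ∫ u in s..x, (0:ℝ) := by
      apply intervalIntegral.integral_congr
      intro u hu
      rw [Set.uIcc_of_ge hx] at hu
      exact hψz u (fun h => by linarith [h.1, hu.2])
    simp [hφ, this]
  have ht1 : ∀ x, t ≤ x → φ x = 1 := by
    intro x hx
    have : ∫ u in t..x, ψ u = ∫ u in t..x, (0:ℝ) := by
      apply intervalIntegral.integral_congr
      intro u hu
      rw [Set.uIcc_of_le hx] at hu
      exact hψz u (fun h => by linarith [h.2, hu.1])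
    have e := intervalIntegral.integral_add_adjacent_intervals (hii s t) (hii t x)
    rw [this] at e
    simp only [intervalIntegral.integral_zero, add_zero] at e
    simp only [hφ]
    rw [← e, ← hZ, div_self hZ0.ne']
  refine ⟨φ, ?_, hs0, ht1, ?_, ?_, ?_, ?_, ?_⟩
  · rw [contDiff_one_iff_deriv]
    exact ⟨fun x => (hd x).differentiableAt, by rw [hder]; fun_prop⟩
  · intro x
    rcases le_total x s with h | h
    · rw [hs0 x h]
    · rw [← hs0 s le_rfl]; exact hmono h
  · intro x
    rcases le_total x t with h | h
    · rw [← ht1 t le_rfl]; exact hmono h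
    · rw [ht1 x h]
  · intro x; rw [hder]; exact div_nonneg (hψ0 x) hZ0.le
  · intro x; rw [hder]; simp only
    rw [div_le_iff₀ hZ0]
    have : 1 ≤ K * Z := by
      rw [div_le_iff₀ hK0] at hZK; linarith
    linarith [hψ1 x]
  · intro x hx; rw [hder]; simp [hψz x hx]

/-- Laplacian of `p log|G| + α log y`. -/
lemma kul_lap {G : ℂ → ℂ} {p α : ℝ} (hG : DifferentiableOn ℂ G {z | 0 < z.im}) (z : ℂ)
    (hz : 0 < z.im) (hGz : G z ≠ 0) :
    ContDiffAt ℝ 2 (fun z => p * Real.log ‖G z‖ + α * Real.log z.im) z ∧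
    fderiv ℝ (fun w => fderiv ℝ (fun z => p * Real.log ‖G z‖ + α * Real.log z.im) w 1) z 1 +
    fderiv ℝ (fun w => fderiv ℝ (fun z => p * Real.log ‖G z‖ + α * Real.log z.im) w Complex.I) z Complex.I
      = - α / z.im ^ 2 := by
  have hU : IsOpen {z : ℂ | 0 < z.im} := isOpen_lt continuous_const Complex.continuous_im
  have han : AnalyticAt ℂ G z := hG.analyticAt (hU.mem_nhds hz)
  obtain ⟨c1, l1⟩ := han.harmonicAt_log_norm hGz
  have c2 : ContDiffAt ℝ 2 (fun z : ℂ => Real.log z.im) z :=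
    ContDiffAt.log Complex.imCLM.contDiff.contDiffAt hz.ne'
  have c3 : ContDiffAt ℝ 2 (fun z => p * Real.log ‖G z‖ + α * Real.log z.im) z :=
    (contDiffAt_const.mul c1).add (contDiffAt_const.mul c2)
  refine ⟨c3, ?_⟩
  have conv : ∀ (u : ℂ → ℝ), ContDiffAt ℝ 2 u z → ∀ v, fderiv ℝ (fun w => fderiv ℝ u w v) z v =
      fderiv ℝ (fderiv ℝ u) z v v := by
    intro u hu v
    have : DifferentiableAt ℝ (fderiv ℝ u) z :=
      (hu.fderiv_right (m := 1) (by norm_num)).differentiableAt one_ne_zero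
    rw [fderiv_clm_apply this (differentiableAt_const v)]
    simp
  have lapc : ∀ (u : ℂ → ℝ), Laplacian.laplacian u z = fderiv ℝ (fderiv ℝ u) z 1 1 + fderiv ℝ (fderiv ℝ u) z Complex.I Complex.I := by
    intro u
    rw [InnerProductSpace.laplacian_eq_iteratedFDeriv_complexPlane]
    simp [iteratedFDeriv_two_apply]
  rw [conv _ c3, conv _ c3, ← lapc]
  have e : (fun z => p * Real.log ‖G z‖ + α * Real.log z.im) =
      (p • fun z => Real.log ‖G z‖) + (α • fun z : ℂ => Real.log z.im) := by
    ext z; simp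
  have c1' : ContDiffAt ℝ 2 (p • fun z => Real.log ‖G z‖) z := c1.const_smul p
  have c2' : ContDiffAt ℝ 2 (α • fun z : ℂ => Real.log z.im) z := c2.const_smul α
  rw [e, ContDiffAt.laplacian_add c1' c2',
    InnerProductSpace.laplacian_smul _ c1, InnerProductSpace.laplacian_smul _ c2, l1.eq_of_nhds, lapc, ← conv _ c2, ← conv _ c2]
  have d : ∀ w : ℂ, 0 < w.im → ∀ v, fderiv ℝ (fun z : ℂ => Real.log z.im) w v = (w.im)⁻¹ * v.im := by
    intro w hw v
    have := (Real.hasDerivAt_log hw.ne').comp_hasFDerivAt w Complex.imCLM.hasFDerivAt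
    have h2 : HasFDerivAt (fun z : ℂ => Real.log z.im) _ w := this
    rw [h2.fderiv]; simp
  have d2 : ∀ v, (fun w => fderiv ℝ (fun z : ℂ => Real.log z.im) w v) =ᶠ[nhds z] fun w => (w.im)⁻¹ * v.im := by
    intro v
    filter_upwards [hU.mem_nhds hz] with w hw
    exact d w hw v
  have d3 : ∀ v, fderiv ℝ (fun w : ℂ => (w.im)⁻¹ * v.im) z v = -(z.im^2)⁻¹ * v.im * v.im := by
    intro v
    have := ((hasDerivAt_inv hz.ne').comp_hasFDerivAt z Complex.imCLM.hasFDerivAt).mul_const v.im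
    have h2 : HasFDerivAt (fun w : ℂ => (w.im)⁻¹ * v.im) _ z := this
    rw [h2.fderiv]; simp; ring
  rw [(d2 1).fderiv_eq, (d2 Complex.I).fderiv_eq, d3, d3]
  simp
  ring


lemma kul_level0 {G : ℂ → ℂ} {p α : ℝ} (hα : 0 < α) (hp : 0 < p)
    (hG : DifferentiableOn ℂ G {z | 0 < z.im})
    {W : ℂ → ℝ} (hW0 : ∀ z : ℂ, z.im ≤ 0 → W z = 0)
    (hWH : ∀ z : ℂ, 0 < z.im → W z = ‖G z‖ ^ p * z.im ^ α)
    (hcomp : ∀ s : ℝ, 0 < s → IsCompact {z | s ≤ W z})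
    (s t K : ℝ) (hs : 0 < s) (hst : s < t) (hK : 1 / (t - s) < K) :
    √((∫ z in {z | t < W z}, 1 / z.im ^ 2) ^ 2 + 4 * Real.pi * (∫ z in {z | t < W z}, 1 / z.im ^ 2))
      - ((∫ z in {z | s < W z}, 1 / z.im ^ 2) - (∫ z in {z | t < W z}, 1 / z.im ^ 2)) ≤
    √(α * (∫ z in {z | s < W z}, 1 / z.im ^ 2) * (K * t * ((∫ z in {z | s < W z}, 1 / z.im ^ 2)
      - (∫ z in {z | t < W z}, 1 / z.im ^ 2)))) := by
  obtain ⟨φ, hφ, φs, φt, φ0, φ1, d0, dK, dz⟩ := kul_step s t K hst hK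
  have hK0 : 0 < K := lt_trans (by have : 0 < t - s := by linarith
                                   positivity) hK
  have ht : 0 < t := hs.trans hst
  have hH : IsOpen {z : ℂ | 0 < z.im} := isOpen_lt continuous_const Complex.continuous_im
  set U : Set ℂ := {z | 0 < z.im} ∩ G ⁻¹' {0}ᶜ with hU
  have hUo : IsOpen U := hG.continuousOn.isOpen_inter_preimage hH isOpen_compl_singleton
  set u : ℂ → ℝ := fun z => p * Real.log ‖G z‖ + α * Real.log z.im with hu
  have hWu : ∀ z ∈ U, W z = Real.exp (u z) := by
    intro z hz
    have h1 : 0 < ‖G z‖ := norm_pos_iff.2 hz.2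
    rw [hWH z hz.1, Real.rpow_def_of_pos h1, Real.rpow_def_of_pos hz.1, ← Real.exp_add]
    congr 1; simp only [hu]; ring
  have hWU : ∀ z, 0 < W z → z ∈ U := by
    intro z hz
    have h1 : 0 < z.im := by
      by_contra h; rw [hW0 z (not_lt.1 h)] at hz; exact lt_irrefl _ hz
    refine ⟨h1, ?_⟩
    intro h
    rw [hWH z h1, h, norm_zero, Real.zero_rpow hp.ne', zero_mul] at hz; exact lt_irrefl _ hz
  set Ks : Set ℂ := {z | s ≤ W z} with hKs
  have hKc : IsCompact Ks := hcomp s hs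
  have hKU : Ks ⊆ U := fun z hz => hWU z (lt_of_lt_of_le hs hz)
  have huC : ∀ z ∈ U, ContDiffAt ℝ 2 u z := fun z hz => (kul_lap hG z hz.1 hz.2).1
  have huL : ∀ z ∈ U, fderiv ℝ (fun w => fderiv ℝ u w 1) z 1 +
    fderiv ℝ (fun w => fderiv ℝ u w Complex.I) z Complex.I = - α / z.im ^ 2 :=
    fun z hz => (kul_lap hG z hz.1 hz.2).2
  set g : ℂ → ℝ := fun z => φ (W z) with hgdef
  have hgK : ∀ z, z ∉ Ks → g z = 0 := fun z hz => φs _ (not_le.1 hz).le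
  have hgev : ∀ z, z ∉ Ks → g =ᶠ[nhds z] fun _ => 0 := by
    intro z hz
    filter_upwards [hKc.isClosed.isOpen_compl.mem_nhds hz] with w hw
    exact hgK w hw
  have hgevU : ∀ z ∈ U, g =ᶠ[nhds z] fun w => φ (Real.exp (u w)) := by
    intro z hz
    filter_upwards [hUo.mem_nhds hz] with w hw
    simp only [hgdef, hWu w hw]
  have hg : ContDiff ℝ 1 g := by
    rw [contDiff_iff_contDiffAt]
    intro z
    by_cases hz : z ∈ U
    · have h1 : ContDiffAt ℝ 1 (fun w => φ (Real.exp (u w))) z :=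
        hφ.contDiffAt.comp z (((huC z hz).of_le (by norm_num)).exp)
      exact h1.congr_of_eventuallyEq (hgevU z hz)
    · exact contDiffAt_const.congr_of_eventuallyEq (hgev z (fun h => hz (hKU h)))
  have hgcs : HasCompactSupport g := HasCompactSupport.intro hKc hgK
  have hgts : tsupport g ⊆ U := by
    refine (closure_minimal ?_ hKc.isClosed).trans hKU
    intro z hz; by_contra h; exact hz (hgK z h)
  set P : ℂ → ℝ := fun z => deriv φ (W z) * W z with hP
  have hPK : ∀ z, z ∉ Ks → P z = 0 := by
    intro z hz
    have : deriv φ (W z) = 0 := dz _ (fun h => hz h.1.le)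
    simp [hP, this]
  have hfd : ∀ z v, fderiv ℝ g z v = P z * fderiv ℝ u z v := by
    intro z v
    by_cases hz : z ∈ U
    · rw [(hgevU z hz).fderiv_eq]
      have h1 := ((huC z hz).differentiableAt two_ne_zero).hasFDerivAt.exp
      have h2 := ((hφ.differentiable one_ne_zero).differentiableAt (x := Real.exp (u z))).hasDerivAt.comp_hasFDerivAt z h1
      have h3 : HasFDerivAt (fun w => φ (Real.exp (u w))) _ z := h2
      rw [h3.fderiv]
      simp only [hP, hWu z hz]
      simp; ring
    · have hz' : z ∉ Ks := fun h => hz (hKU h)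
      rw [(hgev z hz').fderiv_eq, hPK z hz']; simp
  have hWc : ContinuousOn W U := by
    have : ContinuousOn (fun z => Real.exp (u z)) U := by
      intro z hz; exact ((huC z hz).continuousAt.rexp).continuousWithinAt
    exact this.congr hWu
  have hPc : ContinuousOn P U := by
    have h1 : Continuous (deriv φ) := hφ.continuous_deriv le_rfl
    exact (h1.comp_continuousOn hWc).mul hWc
  have hyc : ContinuousOn (fun z : ℂ => z.im) U := Complex.continuous_im.continuousOn
  have hyne : ∀ z ∈ U, z.im ^ 2 ≠ 0 := fun z hz => (pow_pos hz.1 2).ne'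
  have hFC : ∀ v, ContDiffOn ℝ 1 (fun w => fderiv ℝ u w v) U := by
    intro v z hz
    have : ContDiffAt ℝ 1 (fderiv ℝ u) z := (huC z hz).fderiv_right (by norm_num)
    exact (this.clm_apply contDiffAt_const).contDiffWithinAt
  have hFc : ∀ v, ContinuousOn (fun w => fderiv ℝ u w v) U := fun v => (hFC v).continuousOn
  have hFFc : ∀ v, ContinuousOn (fun z => fderiv ℝ (fun w => fderiv ℝ u w v) z v) U := by
    intro v
    exact ((hFC v).continuousOn_fderiv_of_isOpen hUo le_rfl).clm_apply continuousOn_const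
  have hgc : ContinuousOn g U := hg.continuous.continuousOn
  have hi2 : ContinuousOn (fun z : ℂ => 1 / z.im ^ 2) U :=
    continuousOn_const.div (hyc.pow 2) hyne
  set D2 : ℂ → ℝ := fun z => (fderiv ℝ u z 1) ^ 2 + (fderiv ℝ u z Complex.I) ^ 2 with hD2
  have hD2c : ContinuousOn D2 U := ((hFc 1).pow 2).add ((hFc Complex.I).pow 2)
  have hD20 : ∀ z, 0 ≤ D2 z := fun z => by simp only [hD2]; positivity
  have mk : ∀ {h : ℂ → ℝ}, ContinuousOn h U → (∀ z, z ∉ Ks → h z = 0) → Integrable h :=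
    fun hc h0 => kul_int2 hUo hKc hKU hc h0
  -- energy
  have hE : ∫ z, P z * D2 z = α * ∫ z, g z * (1 / z.im ^ 2) := by
    have e1 := kul_ibp hUo hg hgcs hgts (hFC 1) 1
    have e2 := kul_ibp hUo hg hgcs hgts (hFC Complex.I) Complex.I
    have i1 : Integrable (fun z => g z * fderiv ℝ (fun w => fderiv ℝ u w 1) z 1) :=
      mk (hgc.mul (hFFc 1)) (fun z hz => by simp [hgK z hz])
    have i2 : Integrable (fun z => g z * fderiv ℝ (fun w => fderiv ℝ u w Complex.I) z Complex.I) :=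
      mk (hgc.mul (hFFc Complex.I)) (fun z hz => by simp [hgK z hz])
    have j : ∀ v, Integrable (fun z => fderiv ℝ u z v * fderiv ℝ g z v) := by
      intro v
      simp only [hfd]
      exact mk ((hFc v).mul (hPc.mul (hFc v))) (fun z hz => by simp [hPK z hz])
    have e3 : ∫ z, g z * (-α / z.im ^ 2) = ∫ z, (g z * fderiv ℝ (fun w => fderiv ℝ u w 1) z 1 + g z * fderiv ℝ (fun w => fderiv ℝ u w Complex.I) z Complex.I) := by
      congr 1; ext z
      by_cases hz : z ∈ U
      · rw [← mul_add, huL z hz]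
      · simp [hgK z (fun h => hz (hKU h))]
    rw [integral_add i1 i2, e1, e2, ← neg_add, ← integral_add (j 1) (j Complex.I)] at e3
    have e4 : ∫ z, g z * (-α / z.im ^ 2) = - (α * ∫ z, g z * (1 / z.im ^ 2)) := by
      rw [← integral_const_mul, ← integral_neg]; congr 1; ext z; ring
    rw [e4] at e3
    have e5 := neg_injective e3
    rw [e5]; congr 1; ext z; simp only [hfd, hD2]; ring
  -- measure
  have hSo : ∀ r, 0 < r → IsOpen {z | r < W z} := by
    intro r hr
    have := hWc.isOpen_inter_preimage hUo (isOpen_Ioi (a := r))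
    convert this using 1
    ext z; constructor
    · intro h; exact ⟨hWU z (hr.trans h), h⟩
    · intro h; exact h.2
  have hSi : ∀ r, s ≤ r → IntegrableOn (fun z : ℂ => 1 / z.im ^ 2) {z | r < W z} := by
    intro r hr
    have : IntegrableOn (fun z : ℂ => 1 / z.im ^ 2) Ks := (hi2.mono hKU).integrableOn_compact hKc
    exact this.mono_set (fun z hz => hr.trans (le_of_lt hz))
  set Is : ℂ → ℝ := Set.indicator {z | s < W z} (fun z : ℂ => 1 / z.im ^ 2) with hIs
  set It : ℂ → ℝ := Set.indicator {z | t < W z} (fun z : ℂ => 1 / z.im ^ 2) with hIt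
  have iIs : Integrable Is := (integrable_indicator_iff (hSo s hs).measurableSet).2 (hSi s le_rfl)
  have iIt : Integrable It := (integrable_indicator_iff (hSo t ht).measurableSet).2 (hSi t hst.le)
  have eIs : ∫ z in {z | s < W z}, 1 / z.im ^ 2 = ∫ z, Is z := (integral_indicator (hSo s hs).measurableSet).symm
  have eIt : ∫ z in {z | t < W z}, 1 / z.im ^ 2 = ∫ z, It z := (integral_indicator (hSo t ht).measurableSet).symm
  rw [eIs, eIt]
  set ms := ∫ z, Is z
  set mt := ∫ z, It z
  have pos2 : ∀ z : ℂ, 0 ≤ 1 / z.im ^ 2 := fun z => by positivity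
  have cases3 : ∀ z, (W z ≤ s ∧ Is z = 0 ∧ It z = 0) ∨ (s < W z ∧ W z ≤ t ∧ Is z = 1 / z.im ^ 2 ∧ It z = 0)
      ∨ (t < W z ∧ Is z = 1 / z.im ^ 2 ∧ It z = 1 / z.im ^ 2) := by
    intro z
    rcases le_or_gt (W z) s with h | h
    · left; exact ⟨h, Set.indicator_of_notMem (by simpa using h) _, Set.indicator_of_notMem (by simpa using h.trans hst.le) _⟩
    · rcases le_or_gt (W z) t with h' | h'
      · right; left; exact ⟨h, h', Set.indicator_of_mem (by simpa using h) _, Set.indicator_of_notMem (by simpa using h') _⟩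
      · right; right; exact ⟨h', Set.indicator_of_mem (by simpa using h) _, Set.indicator_of_mem (by simpa using h') _⟩
  have mt0 : 0 ≤ mt := integral_nonneg (fun z => Set.indicator_nonneg (fun z _ => pos2 z) z)
  have iA : Integrable (fun z => g z ^ 2 / z.im ^ 2) :=
    mk ((hgc.pow 2).div (hyc.pow 2) hyne) (fun z hz => by simp [hgK z hz])
  have iB : Integrable (fun z => g z * (1 - g z) / z.im ^ 2) :=
    mk ((hgc.mul (continuousOn_const.sub hgc)).div (hyc.pow 2) hyne) (fun z hz => by simp [hgK z hz])
  have iG : Integrable (fun z => g z * (1 / z.im ^ 2)) :=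
    mk (hgc.mul hi2) (fun z hz => by simp [hgK z hz])
  have iE : Integrable (fun z => P z * D2 z) :=
    mk (hPc.mul hD2c) (fun z hz => by simp [hPK z hz])
  have iQ : Integrable (fun z => P z * (1 / z.im ^ 2)) :=
    mk (hPc.mul hi2) (fun z hz => by simp [hPK z hz])
  have iL : Integrable (fun z => P z * (√(D2 z) / z.im)) :=
    mk (hPc.mul ((hD2c.sqrt).div hyc (fun z hz => hz.1.ne'))) (fun z hz => by simp [hPK z hz])
  have P0 : ∀ z, 0 ≤ P z := by
    intro z
    by_cases h : s ≤ W z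
    · exact mul_nonneg (d0 _) (hs.le.trans h)
    · rw [hPK z h]
  have bA : mt ≤ ∫ z, g z ^ 2 / z.im ^ 2 := by
    refine integral_mono iIt iA (fun z => ?_)
    have h0 : 0 ≤ g z ^ 2 / z.im ^ 2 := by positivity
    rcases cases3 z with ⟨-, -, h⟩ | ⟨-, -, -, h⟩ | ⟨h', -, h⟩
    · simpa [h] using h0
    · simpa [h] using h0
    · simp [h, hgdef, φt _ h'.le]
  have bG : ∫ z, g z * (1 / z.im ^ 2) ≤ ms := by
    refine integral_mono iG iIs (fun z => ?_)
    have h0 : g z * (1 / z.im ^ 2) ≤ 1 * (1 / z.im ^ 2) := mul_le_mul_of_nonneg_right (φ1 _) (pos2 z)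
    rcases cases3 z with ⟨h', h, -⟩ | ⟨-, -, h, -⟩ | ⟨h', h, -⟩
    · simp [h, hgdef, φs _ h']
    · simpa [h] using h0
    · simpa [h] using h0
  have bB : ∫ z, g z * (1 - g z) / z.im ^ 2 ≤ ms - mt := by
    rw [← integral_sub iIs iIt]
    refine integral_mono iB (iIs.sub iIt) (fun z => ?_)
    have h0 : (g z * (1 - g z)) * (1 / z.im ^ 2) ≤ 1 * (1 / z.im ^ 2) := by
      refine mul_le_mul_of_nonneg_right ?_ (pos2 z)
      nlinarith [φ0 (W z), φ1 (W z), sq_nonneg (g z)]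
    rw [mul_one_div, one_mul] at h0
    rcases cases3 z with ⟨h', h, h2⟩ | ⟨-, -, h, h2⟩ | ⟨h', h, h2⟩
    · simp [h, h2, hgdef, φs _ h']
    · simpa [h, h2] using h0
    · simp [h, h2, hgdef, φt _ h'.le]
  have bQ : ∫ z, P z * (1 / z.im ^ 2) ≤ K * t * (ms - mt) := by
    rw [← integral_sub iIs iIt, ← integral_const_mul]
    refine integral_mono iQ ((iIs.sub iIt).const_mul _) (fun z => ?_)
    rcases cases3 z with ⟨h', h, h2⟩ | ⟨h3, h4, h, h2⟩ | ⟨h', h, h2⟩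
    · have : P z = 0 := by simp only [hP, dz _ (fun h : W z ∈ Set.Ioo s t => absurd h.1 (not_lt.2 h')), zero_mul]
      simp [h, h2, this]
    · have : P z ≤ K * t := mul_le_mul (dK _) h4 (hs.trans h3).le hK0.le
      simp only [h, h2, sub_zero]
      exact mul_le_mul_of_nonneg_right this (pos2 z)
    · have : P z = 0 := by simp only [hP, dz _ (fun h : W z ∈ Set.Ioo s t => absurd h.2 (not_lt.2 h'.le)), zero_mul]
      simp [h, h2, this]
  -- Cauchy Schwarz
  have cs : (∫ z, P z * (√(D2 z) / z.im)) ^ 2 ≤ (∫ z, P z * D2 z) * (∫ z, P z * (1 / z.im ^ 2)) := by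
    have : ∀ x : ℝ, 0 ≤ (∫ z, P z * D2 z) * (x * x) + (-2 * (∫ z, P z * (√(D2 z) / z.im))) * x + (∫ z, P z * (1 / z.im ^ 2)) := by
      intro x
      have h1 : 0 ≤ ∫ z, (P z * D2 z * (x * x) + (-2 * x) * (P z * (√(D2 z) / z.im)) + P z * (1 / z.im ^ 2)) := by
        refine integral_nonneg (fun z => ?_)
        have h2 : P z * D2 z * (x * x) + (-2 * x) * (P z * (√(D2 z) / z.im)) + P z * (1 / z.im ^ 2)
          = P z * (x * √(D2 z) - 1 / z.im) ^ 2 := by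
          have := Real.sq_sqrt (hD20 z)
          rw [← this]; simp only [Real.sqrt_sq (Real.sqrt_nonneg _)]; ring
        simp only [Pi.zero_apply]
        rw [h2]; exact mul_nonneg (P0 z) (sq_nonneg _)
      have i3 : Integrable (fun z => P z * D2 z * (x * x) + (-2 * x) * (P z * (√(D2 z) / z.im))) := (iE.mul_const _).add (iL.const_mul _)
      rw [integral_add i3 iQ, integral_add (iE.mul_const _) (iL.const_mul _), integral_mul_const, integral_const_mul] at h1
      linarith
    have := discrim_le_zero this
    rw [discrim] at this
    nlinarith
  have iso := kul_iso g hg hgcs (fun z hz => (hgts hz).1) (fun z => φ0 _) (fun z => φ1 _)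
  have eL : ∫ z, √((fderiv ℝ g z 1) ^ 2 + (fderiv ℝ g z Complex.I) ^ 2) / z.im = ∫ z, P z * (√(D2 z) / z.im) := by
    congr 1; ext z
    rw [hfd, hfd, mul_pow (P z), mul_pow (P z), ← mul_add, Real.sqrt_mul (sq_nonneg _), Real.sqrt_sq (P0 z), mul_div_assoc]
  rw [eL] at iso
  have Q0 : 0 ≤ ∫ z, P z * (1 / z.im ^ 2) := integral_nonneg (fun z => mul_nonneg (P0 z) (pos2 z))
  have E1 : ∫ z, P z * D2 z ≤ α * ms := by rw [hE]; exact mul_le_mul_of_nonneg_left bG hα.le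
  have E0 : 0 ≤ ∫ z, P z * D2 z := integral_nonneg (fun z => mul_nonneg (P0 z) (hD20 z))
  have L1 : ∫ z, P z * (√(D2 z) / z.im) ≤ √(α * ms * (K * t * (ms - mt))) := by
    apply Real.le_sqrt_of_sq_le
    exact cs.trans (mul_le_mul E1 bQ Q0 (E0.trans E1))
  have S1 : √(mt ^ 2 + 4 * Real.pi * mt) ≤ √((∫ z, g z ^ 2 / z.im ^ 2) ^ 2 + 4 * Real.pi * (∫ z, g z ^ 2 / z.im ^ 2)) := by
    apply Real.sqrt_le_sqrt
    have := Real.pi_pos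
    gcongr
  linarith

lemma kul_level {G : ℂ → ℂ} {p α : ℝ} (hα : 0 < α) (hp : 0 < p)
    (hG : DifferentiableOn ℂ G {z | 0 < z.im})
    {W : ℂ → ℝ} (hW0 : ∀ z : ℂ, z.im ≤ 0 → W z = 0)
    (hWH : ∀ z : ℂ, 0 < z.im → W z = ‖G z‖ ^ p * z.im ^ α)
    (hcomp : ∀ s : ℝ, 0 < s → IsCompact {z | s ≤ W z})
    {m : ℝ → ℝ} (hm : ∀ t, m t = ∫ z in {z | t < W z}, 1 / z.im ^ 2)
    (s t : ℝ) (hs : 0 < s) (hst : s < t) :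
    √(m t ^ 2 + 4 * Real.pi * m t) - (m s - m t) ≤ √(α * m s * (1 / (t - s) * t * (m s - m t))) := by
  have h : ∀ᶠ K in nhdsWithin (1 / (t - s)) (Set.Ioi (1 / (t - s))),
    √(m t ^ 2 + 4 * Real.pi * m t) - (m s - m t) ≤ √(α * m s * (K * t * (m s - m t))) := by
    filter_upwards [self_mem_nhdsWithin] with K hK
    have := kul_level0 hα hp hG hW0 hWH hcomp s t K hs hst hK
    simpa only [hm] using this
  refine ge_of_tendsto ?_ h
  have : Continuous (fun K : ℝ => √(α * m s * (K * t * (m s - m t)))) := by fun_prop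
  exact (this.tendsto _).mono_left nhdsWithin_le_nhds


lemma kul_bisect (P : ℝ → ℝ → Prop)
    (step : ∀ x y, x < y → P x y → P x ((x+y)/2) ∨ P ((x+y)/2) y) (a b : ℝ) (hab : a < b) (h : P a b) :
    ∃ u v : ℕ → ℝ, ∃ T, Monotone u ∧ Antitone v ∧ (∀ n, u n < v n) ∧ (∀ n, P (u n) (v n)) ∧
      (∀ n, a ≤ u n) ∧ (∀ n, v n ≤ b) ∧ Filter.Tendsto u Filter.atTop (nhds T) ∧
      Filter.Tendsto v Filter.atTop (nhds T) ∧ a ≤ T := by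
  have st : ∀ q : {q : ℝ × ℝ // q.1 < q.2 ∧ P q.1 q.2}, ∃ q' : {q : ℝ × ℝ // q.1 < q.2 ∧ P q.1 q.2},
      q.1.1 ≤ q'.1.1 ∧ q'.1.2 ≤ q.1.2 ∧ q'.1.2 - q'.1.1 = (q.1.2 - q.1.1) / 2 := by
    rintro ⟨⟨x, y⟩, hxy, hP⟩
    simp only at hxy hP
    rcases step x y hxy hP with h | h
    · exact ⟨⟨(x, (x+y)/2), by simp only; constructor; linarith; exact h⟩, by simp only; refine ⟨le_rfl, by linarith, by ring⟩⟩
    · exact ⟨⟨((x+y)/2, y), by simp only; constructor; linarith; exact h⟩, by simp only; refine ⟨by linarith, le_rfl, by ring⟩⟩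
  choose f h1 h2 h3 using st
  set q : ℕ → {q : ℝ × ℝ // q.1 < q.2 ∧ P q.1 q.2} := fun n => f^[n] ⟨(a, b), hab, h⟩ with hq
  have hs : ∀ n, q (n+1) = f (q n) := fun n => Function.iterate_succ_apply' f n _
  have hu : Monotone (fun n => (q n).1.1) := monotone_nat_of_le_succ (fun n => by rw [hs]; exact h1 _)
  have hv : Antitone (fun n => (q n).1.2) := antitone_nat_of_succ_le (fun n => by rw [hs]; exact h2 _)
  have hd : ∀ n, (q n).1.2 - (q n).1.1 = (b - a) * (1/2)^n := by
    intro n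
    induction n with
    | zero => simp [hq]
    | succ k ih => rw [hs, h3, ih]; ring
  have ha : ∀ n, a ≤ (q n).1.1 := fun n => hu (Nat.zero_le n)
  have hb : ∀ n, (q n).1.2 ≤ b := fun n => hv (Nat.zero_le n)
  have hlt : ∀ n, (q n).1.1 < (q n).1.2 := fun n => (q n).2.1
  have hbdd : BddAbove (Set.range (fun n => (q n).1.1)) := ⟨b, by rintro _ ⟨n, rfl⟩; exact (hlt n).le.trans (hb n)⟩
  have tu := tendsto_atTop_ciSup hu hbdd
  refine ⟨_, _, _, hu, hv, hlt, fun n => (q n).2.2, ha, hb, tu, ?_, ge_of_tendsto' tu ha⟩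
  have t0 : Filter.Tendsto (fun n : ℕ => (b - a) * (1/2 : ℝ)^n) Filter.atTop (nhds 0) := by
    simpa using (tendsto_pow_atTop_nhds_zero_of_lt_one (by norm_num : (0:ℝ) ≤ 1/2) (by norm_num)).const_mul (b - a)
  have := tu.add t0
  rw [add_zero] at this
  refine this.congr (fun n => ?_)
  rw [← hd]; ring

lemma kul_mono {α : ℝ} (hα : 0 < α) {m : ℝ → ℝ} (m0 : ∀ t, 0 < t → 0 ≤ m t)
    (ma : ∀ s t, 0 < s → s ≤ t → m t ≤ m s)
    (hl : ∀ s t, 0 < s → s < t →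
      √(m t ^ 2 + 4 * Real.pi * m t) - (m s - m t) ≤ √(α * m s * (1 / (t - s) * t * (m s - m t))))
    (a b : ℝ) (ha : 0 < a) (hab : a < b) (hb : 0 < m b) :
    (m b + 4 * Real.pi) * b ^ (1 / α) ≤ (m a + 4 * Real.pi) * a ^ (1 / α) := by
  have hpi := Real.pi_pos
  by_contra hcon
  push Not at hcon
  set N : ℝ → ℝ := fun t => m t + 4 * Real.pi with hN
  have hN0 : ∀ t, 0 < t → 0 < N t := fun t ht => by have := m0 t ht; simp only [hN]; positivity
  set l : ℝ → ℝ := fun t => Real.log (N t) + 1 / α * Real.log t with hldef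
  have hb0 : 0 < b := ha.trans hab
  have hlab : l a < l b := by
    have := Real.log_lt_log (mul_pos (hN0 a ha) (Real.rpow_pos_of_pos ha _)) hcon
    rwa [Real.log_mul (hN0 a ha).ne' (Real.rpow_pos_of_pos ha _).ne', Real.log_mul (hN0 b hb0).ne' (Real.rpow_pos_of_pos hb0 _).ne',
      Real.log_rpow ha, Real.log_rpow hb0] at this
  set c := (l b - l a) / (b - a) with hc
  have hc0 : 0 < c := div_pos (by linarith) (by linarith)
  obtain ⟨u, v, T, hu, hv, huv, hP, hau, hvb, tu, tv, haT⟩ := kul_bisect (fun x y => c * (y - x) ≤ l y - l x)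
    (by
      intro x y hxy h
      by_contra! h'
      obtain ⟨h1, h2⟩ := h'
      have : c * (y - x) = c * ((x+y)/2 - x) + c * (y - (x+y)/2) := by ring
      linarith) a b hab (by simp only [hc]; rw [div_mul_cancel₀ _ (by linarith)])
  have u0 : ∀ n, 0 < u n := fun n => ha.trans_le (hau n)
  have v0 : ∀ n, 0 < v n := fun n => (u0 n).trans (huv n)
  have hT : 0 < T := ha.trans_le haT
  -- key bound
  have key : ∀ n, (m (u n) - m (v n)) ≤ N (u n) * (v n - u n) * (1 / (α * u n) - c) := by
    intro n
    have h1 := hP n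
    simp only [hldef] at h1
    have hx := hN0 _ (u0 n)
    have hy := hN0 _ (v0 n)
    have h2 : Real.log (N (v n)) - Real.log (N (u n)) ≤ N (v n) / N (u n) - 1 := by
      rw [← Real.log_div hy.ne' hx.ne']; exact Real.log_le_sub_one_of_pos (div_pos hy hx)
    have h3 : Real.log (v n) - Real.log (u n) ≤ v n / u n - 1 := by
      rw [← Real.log_div (v0 n).ne' (u0 n).ne']; exact Real.log_le_sub_one_of_pos (div_pos (v0 n) (u0 n))
    have h4 : c * (v n - u n) ≤ (N (v n) / N (u n) - 1) + 1 / α * (v n / u n - 1) := by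
      have := mul_le_mul_of_nonneg_left h3 (by positivity : 0 ≤ 1 / α)
      linarith
    have h5 := mul_le_mul_of_nonneg_left h4 hx.le
    have h6 : N (u n) * ((N (v n) / N (u n) - 1) + 1 / α * (v n / u n - 1)) = N (v n) - N (u n) + N (u n) * (v n - u n) * (1 / (α * u n)) := by
      have := (u0 n).ne'
      field_simp
    rw [h6] at h5
    have h7 : N (v n) - N (u n) = m (v n) - m (u n) := by simp only [hN]; ring
    rw [h7] at h5
    linarith
  -- limits
  have am : Antitone (fun n => m (u n)) := fun i j hij => ma _ _ (u0 i) (hu hij)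
  have vm : Monotone (fun n => m (v n)) := fun i j hij => ma _ _ (v0 j) (hv hij)
  have lbm : ∀ n, m b ≤ m (v n) := fun n => ma _ _ (v0 n) (hvb n)
  have muv : ∀ n, m (v n) ≤ m (u n) := fun n => ma _ _ (u0 n) (huv n).le
  obtain ⟨A, tA⟩ : ∃ A, Filter.Tendsto (fun n => m (u n)) Filter.atTop (nhds A) :=
    ⟨_, tendsto_atTop_ciInf am ⟨m b, by rintro _ ⟨n, rfl⟩; exact (lbm n).trans (muv n)⟩⟩
  have tNA : Filter.Tendsto (fun n => N (u n)) Filter.atTop (nhds (A + 4 * Real.pi)) := tA.add_const _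
  have tR : Filter.Tendsto (fun n => 1 / (α * u n) - c) Filter.atTop (nhds (1 / (α * T) - c)) := by
    refine Filter.Tendsto.sub_const (Filter.Tendsto.div tendsto_const_nhds (tu.const_mul α) (by positivity)) c
  have tη : Filter.Tendsto (fun n => v n - u n) Filter.atTop (nhds 0) := by simpa using tv.sub tu
  have tδ : Filter.Tendsto (fun n => m (u n) - m (v n)) Filter.atTop (nhds 0) := by
    refine tendsto_of_tendsto_of_tendsto_of_le_of_le tendsto_const_nhds ?_ (fun n => by have := muv n; simp only; linarith) key
    simpa using (tNA.mul tη).mul tR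
  have tB : Filter.Tendsto (fun n => m (v n)) Filter.atTop (nhds A) := by simpa using tA.sub tδ
  have A0 : 0 < A := hb.trans_le (ge_of_tendsto' tB lbm)
  have hfin : ∀ n, √(m (v n) ^ 2 + 4 * Real.pi * m (v n)) - (m (u n) - m (v n)) ≤
      √(α * m (u n) * (v n * (N (u n) * (1 / (α * u n) - c)))) := by
    intro n
    refine (hl (u n) (v n) (u0 n) (huv n)).trans (Real.sqrt_le_sqrt ?_)
    have hη : 0 < v n - u n := by have := huv n; linarith
    have h1 : 1 / (v n - u n) * v n * (m (u n) - m (v n)) ≤ v n * (N (u n) * (1 / (α * u n) - c)) := by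
      rw [one_div, inv_mul_eq_div, div_mul_eq_mul_div, div_le_iff₀ hη]
      have := mul_le_mul_of_nonneg_left (key n) (v0 n).le
      linarith
    exact mul_le_mul_of_nonneg_left h1 (mul_nonneg hα.le (m0 _ (u0 n)))
  have lim1 : Filter.Tendsto (fun n => √(m (v n) ^ 2 + 4 * Real.pi * m (v n)) - (m (u n) - m (v n))) Filter.atTop
      (nhds (√(A ^ 2 + 4 * Real.pi * A) - 0)) :=
    (((tB.pow 2).add (tB.const_mul _)).sqrt).sub tδ
  have lim2 : Filter.Tendsto (fun n => √(α * m (u n) * (v n * (N (u n) * (1 / (α * u n) - c))))) Filter.atTop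
      (nhds (√(α * A * (T * ((A + 4 * Real.pi) * (1 / (α * T) - c)))))) :=
    ((tA.const_mul α).mul (tv.mul (tNA.mul tR))).sqrt
  have hle := le_of_tendsto_of_tendsto' lim1 lim2 hfin
  rw [sub_zero] at hle
  have hpos : 0 < A ^ 2 + 4 * Real.pi * A := by positivity
  have hlt : α * A * (T * ((A + 4 * Real.pi) * (1 / (α * T) - c))) < A ^ 2 + 4 * Real.pi * A := by
    have : α * A * (T * ((A + 4 * Real.pi) * (1 / (α * T) - c))) = A ^ 2 + 4 * Real.pi * A - α * A * T * (A + 4 * Real.pi) * c := by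
      field_simp
    rw [this]
    have : 0 < α * A * T * (A + 4 * Real.pi) * c := by positivity
    linarith
  exact absurd hle (not_le.2 ((Real.sqrt_lt_sqrt_iff_of_pos hpos).2 hlt))


noncomputable def kul_m0 (α T t : ℝ) : ℝ := if t < T then 4 * Real.pi * ((T / t) ^ (1 / α) - 1) else 0

lemma kul_m0_int {α T r : ℝ} (hα : 1 < α) (hT : 0 < T) (hr : 1 ≤ r) :
    IntegrableOn (fun t => t ^ (r - 1) * kul_m0 α T t) (Set.Ioi 0) ∧
    ∫ t in Set.Ioi 0, t ^ (r - 1) * kul_m0 α T t = 4 * Real.pi * T ^ r / (r * (r * α - 1)) := by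
  have hα0 : 0 < α := by linarith
  have h1α : 1 / α < 1 := by rw [div_lt_one hα0]; exact hα
  set F : ℝ → ℝ := fun t => 4 * Real.pi * (T ^ (1 / α) * t ^ (r - 1 - 1 / α) - t ^ (r - 1)) with hF
  have i1 : IntervalIntegrable (fun t : ℝ => t ^ (r - 1 - 1 / α)) volume 0 T :=
    intervalIntegral.intervalIntegrable_rpow' (by linarith)
  have i2 : IntervalIntegrable (fun t : ℝ => t ^ (r - 1)) volume 0 T :=
    intervalIntegral.intervalIntegrable_rpow' (by linarith)
  have iF : IntervalIntegrable F volume 0 T := ((i1.const_mul _).sub i2).const_mul _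
  have eF : ∀ t ∈ Set.Ioi (0:ℝ), t ^ (r - 1) * kul_m0 α T t = (Set.Ioc 0 T).indicator F t := by
    intro t ht
    have ht : 0 < t := ht
    unfold kul_m0
    rcases lt_trichotomy t T with h | h | h
    · rw [if_pos h, Set.indicator_of_mem (Set.mem_Ioc.2 ⟨ht, h.le⟩), Real.div_rpow hT.le ht.le, hF]
      simp only
      rw [Real.rpow_sub ht (r-1)]; field_simp
    · rw [if_neg (by linarith), Set.indicator_of_mem (Set.mem_Ioc.2 ⟨ht, h.le⟩), hF]
      simp only
      rw [Real.rpow_sub ht (r-1), h]; have := (Real.rpow_pos_of_pos hT (1/α)).ne'; field_simp; ring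
    · rw [if_neg (by linarith), Set.indicator_of_notMem (by intro h'; linarith [h'.2])]; simp
  have sub : Set.Ioc 0 T ⊆ Set.Ioi (0:ℝ) := fun t ht => ht.1
  constructor
  · refine (integrableOn_congr_fun eF measurableSet_Ioi).2 ?_
    have := (intervalIntegrable_iff_integrableOn_Ioc_of_le hT.le).1 iF
    exact ((integrable_indicator_iff measurableSet_Ioc).2 this).integrableOn
  · rw [setIntegral_congr_fun measurableSet_Ioi eF, setIntegral_indicator measurableSet_Ioc, Set.inter_eq_right.2 sub,
      ← intervalIntegral.integral_of_le hT.le]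
    simp only [hF]
    rw [intervalIntegral.integral_const_mul, intervalIntegral.integral_sub (i1.const_mul _) i2,
      intervalIntegral.integral_const_mul, integral_rpow (Or.inl (by linarith)), integral_rpow (Or.inl (by linarith))]
    have e1 : r - 1 - 1 / α + 1 = r - 1/α := by ring
    have e2 : r - 1 + 1 = r := by ring
    have h2 : 0 < r - 1/α := by linarith
    rw [e1, e2, Real.zero_rpow h2.ne', Real.zero_rpow (by linarith), Real.rpow_sub hT]
    have := (Real.rpow_pos_of_pos hT (1/α)).ne'
    have h3 : 0 < r * α - 1 := by
      have : r - 1/α = (r * α - 1)/α := by field_simp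
      rw [this] at h2; exact (div_pos_iff_of_pos_right hα0).1 h2
    have h4 : r - 1/α = (r * α - 1)/α := by field_simp
    rw [h4]
    have hr0 : r ≠ 0 := by linarith
    have h5 := h3.ne'
    have h5' : α * r - 1 ≠ 0 := by rw [mul_comm]; exact h5
    field_simp
    ring

lemma kul_cross {α T r : ℝ} (hα : 1 < α) (hT : 0 < T) (hr : 1 ≤ r) {m : ℝ → ℝ}
    (ma : ∀ s t, 0 < s → s ≤ t → m t ≤ m s)
    (hm : ∀ a b, 0 < a → a < b → 0 < m b →
      (m b + 4 * Real.pi) * b ^ (1 / α) ≤ (m a + 4 * Real.pi) * a ^ (1 / α)) :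
    ∃ κ : ℝ, ∀ t, 0 < t → t ^ (r - 1) * (m t - kul_m0 α T t) ≤ κ * (m t - kul_m0 α T t) := by
  have hα0 : 0 < α := by linarith
  have hpi := Real.pi_pos
  have hm00 : ∀ t, 0 < t → 0 ≤ kul_m0 α T t := by
    intro t ht
    unfold kul_m0
    split_ifs with h
    · have : 1 ≤ (T / t) ^ (1 / α) := Real.one_le_rpow ((one_le_div ht).2 h.le) (by positivity)
      have : 0 ≤ (T / t) ^ (1 / α) - 1 := by linarith
      positivity
    · exact le_rfl
  set A : Set ℝ := {t | 0 < t ∧ kul_m0 α T t < m t} with hA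
  have down : ∀ a b, 0 < a → a < b → b ∈ A → a ∈ A := by
    intro a b ha hab hb
    obtain ⟨hb0, hb1⟩ := hb
    have hmb : 0 < m b := (hm00 b hb0).trans_lt hb1
    refine ⟨ha, ?_⟩
    have hma : 0 < m a := hmb.trans_le (ma a b ha hab.le)
    have hh := hm a b ha hab hmb
    have h2 : 4 * Real.pi * T ^ (1/α) < (m b + 4 * Real.pi) * b ^ (1/α) := by
      unfold kul_m0 at hb1
      have hbp := Real.rpow_pos_of_pos hb0 (1/α)
      split_ifs at hb1 with h
      · rw [Real.div_rpow hT.le hb0.le] at hb1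
        have h3 : 4 * Real.pi * (T ^ (1/α) / b ^ (1/α)) < m b + 4 * Real.pi := by linarith
        rw [← mul_div_assoc, div_lt_iff₀ hbp] at h3
        exact h3
      · have : T ^ (1/α) ≤ b ^ (1/α) := Real.rpow_le_rpow hT.le (not_lt.1 h) (by positivity)
        have h4 : 4 * Real.pi * T ^ (1/α) ≤ 4 * Real.pi * b ^ (1/α) := by gcongr
        nlinarith [mul_pos hmb hbp]
    unfold kul_m0
    split_ifs with h
    · have hap := Real.rpow_pos_of_pos ha (1/α)
      rw [Real.div_rpow hT.le ha.le]
      have h3 : 4 * Real.pi * (T ^ (1/α) / a ^ (1/α)) < m a + 4 * Real.pi := by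
        rw [← mul_div_assoc, div_lt_iff₀ hap]; linarith
      linarith
    · exact hma
  have hbdd : BddAbove A := by
    by_contra hnb
    have hall : ∀ t, 0 < t → t ∈ A := by
      intro t ht
      rw [bddAbove_def] at hnb
      push Not at hnb
      obtain ⟨b, hb, htb⟩ := hnb t
      exact down t b ht htb hb
    have h1 : 0 < m 1 := (hm00 1 one_pos).trans_lt (hall 1 one_pos).2
    set x := (m 1 + 4 * Real.pi) / (4 * Real.pi) + 1 with hx
    have hx1 : 1 < x := by rw [hx]; have : 0 < (m 1 + 4 * Real.pi) / (4 * Real.pi) := by positivity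
                           linarith
    have hxa : 1 < x ^ α := Real.one_lt_rpow hx1 hα0
    have hmx : 0 < m (x ^ α) := (hm00 _ (by linarith)).trans_lt (hall _ (by linarith)).2
    have := hm 1 (x ^ α) one_pos hxa hmx
    rw [← Real.rpow_mul (by linarith), mul_one_div_cancel hα0.ne', Real.rpow_one, Real.one_rpow, mul_one] at this
    have h2 : 4 * Real.pi * x = m 1 + 4 * Real.pi + 4 * Real.pi := by
      rw [hx]; field_simp
    nlinarith
  rcases A.eq_empty_or_nonempty with he | hne
  · refine ⟨0, fun t ht => ?_⟩
    have h1 : t ∉ A := by rw [he]; exact Set.notMem_empty t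
    have h2 : m t ≤ kul_m0 α T t := by
      by_contra h; exact h1 ⟨ht, not_le.1 h⟩
    rw [zero_mul]
    exact mul_nonpos_of_nonneg_of_nonpos (Real.rpow_nonneg ht.le _) (by linarith)
  · refine ⟨(sSup A) ^ (r - 1), fun t ht => ?_⟩
    have hsup : 0 < sSup A := by
      obtain ⟨b, hb⟩ := hne
      exact hb.1.trans_le (le_csSup hbdd hb)
    rcases lt_trichotomy t (sSup A) with h | h | h
    · obtain ⟨b, hb, htb⟩ := exists_lt_of_lt_csSup hne h
      have h1 := (down t b ht htb hb).2
      exact mul_le_mul_of_nonneg_right (Real.rpow_le_rpow ht.le h.le (by linarith)) (by linarith)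
    · rw [← h]
    · have h1 : t ∉ A := notMem_of_csSup_lt h hbdd
      have h2 : m t ≤ kul_m0 α T t := by
        by_contra h; exact h1 ⟨ht, not_le.1 h⟩
      exact mul_le_mul_of_nonpos_right (Real.rpow_le_rpow hsup.le h.le (by linarith)) (by linarith)

lemma kul_moment {α T r : ℝ} (hα : 1 < α) (hT : 0 < T) (hr : 1 ≤ r) {m : ℝ → ℝ}
    (m0 : ∀ t, 0 < t → 0 ≤ m t)
    (ma : ∀ s t, 0 < s → s ≤ t → m t ≤ m s)
    (hm : ∀ a b, 0 < a → a < b → 0 < m b →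
      (m b + 4 * Real.pi) * b ^ (1 / α) ≤ (m a + 4 * Real.pi) * a ^ (1 / α))
    (hi : IntegrableOn m (Set.Ioi 0)) (hint : ∫ t in Set.Ioi 0, m t = 4 * Real.pi * T / (α - 1)) :
    ∫⁻ t in Set.Ioi 0, ENNReal.ofReal (t ^ (r - 1) * m t) ≤
      ENNReal.ofReal (4 * Real.pi * T ^ r / (r * (r * α - 1))) := by
  obtain ⟨κ, hκ⟩ := kul_cross (T := T) (r := r) hα hT hr ma hm
  obtain ⟨i1, e1⟩ := kul_m0_int hα hT hr
  obtain ⟨i2, e2⟩ := kul_m0_int hα hT le_rfl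
  simp only [sub_self, Real.rpow_zero, one_mul, Real.rpow_one] at i2 e2
  have iR : IntegrableOn (fun t => t ^ (r - 1) * kul_m0 α T t + κ * (m t - kul_m0 α T t)) (Set.Ioi 0) :=
    i1.add ((hi.sub i2).const_mul κ)
  have eR : ∫ t in Set.Ioi 0, (t ^ (r - 1) * kul_m0 α T t + κ * (m t - kul_m0 α T t)) = 4 * Real.pi * T ^ r / (r * (r * α - 1)) := by
    have i3 : IntegrableOn (fun t => κ * (m t - kul_m0 α T t)) (Set.Ioi 0) := (hi.sub i2).const_mul κ
    rw [integral_add i1 i3, e1, integral_const_mul, integral_sub hi i2, hint, e2]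
    ring
  rw [← eR, ofReal_integral_eq_lintegral_ofReal iR]
  · refine setLIntegral_mono' measurableSet_Ioi (fun t ht => ENNReal.ofReal_le_ofReal ?_)
    linarith [hκ t ht]
  · refine (ae_restrict_iff' measurableSet_Ioi).2 (Filter.Eventually.of_forall (fun t ht => ?_))
    have := mul_nonneg (Real.rpow_nonneg (le_of_lt ht) (r-1)) (m0 t ht)
    simp only [Pi.zero_apply]
    linarith [hκ t ht]


lemma kul_sub {f : ℂ → ℂ} {c : ℂ} {R p : ℝ} (hR : 0 < R) (hp : 0 < p)
    (hf : AnalyticOnNhd ℂ f (closedBall c R)) :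
    ‖f c‖ ^ p ≤ Real.circleAverage (fun z => ‖f z‖ ^ p) c R := by
  have hRa : |R| = R := abs_of_pos hR
  by_cases hfc : f c = 0
  · rw [hfc, norm_zero, Real.zero_rpow hp.ne']
    exact Real.circleAverage_nonneg_of_nonneg (fun z _ => by positivity)
  have hJ := AnalyticOnNhd.circleAverage_log_norm (c := c) (R := R) (f := f) hR.ne' (by rwa [hRa]) hfc
  set a := ‖f c‖ ^ p with ha
  have hn : 0 < ‖f c‖ := norm_pos_iff.2 hfc
  have ha0 : 0 < a := Real.rpow_pos_of_pos hn _
  set L := Real.log ‖f c‖ with hL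
  have hsum : 0 ≤ ∑ᶠ u, (MeromorphicOn.divisor f (closedBall c |R|) u : ℝ) * Real.log (R * ‖c - u‖⁻¹) := by
    refine finsum_nonneg (fun u => ?_)
    by_cases hu : u ∈ closedBall c |R|
    · refine mul_nonneg ?_ ?_
      · have h1 : AnalyticOnNhd ℂ f (closedBall c |R|) := by rwa [hRa]
        exact_mod_cast MeromorphicOn.AnalyticOnNhd.divisor_nonneg h1 u
      · by_cases h : ‖c - u‖ = 0
        · simp [h]
        · apply Real.log_nonneg
          rw [← div_eq_mul_inv, one_le_div (lt_of_le_of_ne (norm_nonneg _) (Ne.symm h))]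
          rw [hRa, mem_closedBall, dist_eq_norm, norm_sub_rev] at hu; exact hu
    · rw [Function.locallyFinsuppWithin.apply_eq_zero_of_notMem _ hu]; simp
  have hge : L ≤ Real.circleAverage (fun z => Real.log ‖f z‖) c R := by linarith
  have hcs : ContinuousOn (fun z => ‖f z‖ ^ p) (sphere c R) :=
    ((hf.continuousOn.mono sphere_subset_closedBall).norm).rpow_const (fun _ _ => Or.inr hp.le)
  have hci : CircleIntegrable (fun z => ‖f z‖ ^ p) c R := hcs.circleIntegrable hR.le
  have hli : CircleIntegrable (fun z => Real.log ‖f z‖) c R :=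
    MeromorphicOn.circleIntegrable_log_norm (by rw [hRa]; exact (hf.mono sphere_subset_closedBall).meromorphicOn)
  set f1 : ℂ → ℝ := fun z => if f z = 0 then L - 1 / p else Real.log ‖f z‖ with hf1
  have hcod : (fun z => Real.log ‖f z‖) =ᶠ[Filter.codiscreteWithin (sphere c |R|)] f1 := by
    rw [hRa]
    have h1 := hf.preimage_zero_mem_codiscreteWithin hfc (mem_closedBall_self hR.le)
      (isConnected_closedBall hR.le)
    have h2 := Filter.codiscreteWithin_mono (sphere_subset_closedBall (x := c) (ε := R)) h1
    filter_upwards [h2] with z hz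
    have : f z ≠ 0 := hz
    simp [hf1, this]
  rw [Real.circleAverage_congr_codiscreteWithin hcod hR.ne'] at hge
  have hf1i := hli.congr_codiscreteWithin hcod
  have e1 : (fun z => L - 1 / p + (1 / (p * a)) * ‖f z‖ ^ p) = fun z => (L - 1/p) + ((1 / (p * a)) • fun z => ‖f z‖ ^ p) z := by
    ext z; simp
  have hψi : CircleIntegrable (fun z => L - 1 / p + (1 / (p * a)) * ‖f z‖ ^ p) c R := by
    apply ContinuousOn.circleIntegrable hR.le
    exact continuousOn_const.add (continuousOn_const.mul hcs)
  have hmono := Real.circleAverage_mono hf1i hψi (fun z hz => by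
    simp only [hf1]
    split_ifs with h
    · have : 0 ≤ (1 / (p * a)) * ‖f z‖ ^ p := by positivity
      linarith
    · have hz0 : 0 < ‖f z‖ := norm_pos_iff.2 h
      have h1 := Real.log_le_sub_one_of_pos (x := ‖f z‖ ^ p / a) (by positivity)
      rw [Real.log_div (by positivity) ha0.ne', ha, Real.log_rpow hz0, Real.log_rpow hn, ← ha] at h1
      have h2 : Real.log ‖f z‖ - L ≤ (‖f z‖ ^ p / a - 1) / p := by
        rw [le_div_iff₀ hp]; linarith
      have h3 : (‖f z‖ ^ p / a - 1) / p = - (1 / p) + (1 / (p * a)) * ‖f z‖ ^ p := by field_simp; ring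
      linarith)
  have hav : Real.circleAverage (fun z => L - 1 / p + (1 / (p * a)) * ‖f z‖ ^ p) c R =
      L - 1 / p + (1 / (p * a)) * Real.circleAverage (fun z => ‖f z‖ ^ p) c R := by
    rw [e1, Real.circleAverage_fun_add (circleIntegrable_const _ _ _) (hci.const_smul), Real.circleAverage_smul,
      Real.circleAverage_const, smul_eq_mul]
  rw [hav] at hmono
  have : 1 / p ≤ (1 / (p * a)) * Real.circleAverage (fun z => ‖f z‖ ^ p) c R := by linarith
  rw [one_div_mul_eq_div, div_le_div_iff₀ hp (by positivity), one_mul] at this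
  nlinarith

lemma kul_area {f : ℂ → ℂ} {c : ℂ} {ρ p : ℝ} (hρ : 0 < ρ) (hp : 0 < p)
    (hf : AnalyticOnNhd ℂ f (ball c ρ)) :
    ENNReal.ofReal (Real.pi * ρ ^ 2 * ‖f c‖ ^ p) ≤ ∫⁻ z in ball c ρ, ENNReal.ofReal (‖f z‖ ^ p) := by
  have hpi := Real.pi_pos
  set F : ℂ → ENNReal := fun z => ENNReal.ofReal (‖f z‖ ^ p) with hF
  have hFc : ContinuousOn (fun z => ‖f z‖ ^ p) (ball c ρ) :=
    hf.continuousOn.norm.rpow_const (fun _ _ => Or.inr hp.le)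
  set Q : Set (ℝ × ℝ) := Set.Ioo 0 ρ ×ˢ Set.Ioo (-Real.pi) Real.pi with hQ
  set Φ : ℝ × ℝ → ℂ := fun x => circleMap c x.1 x.2 with hΦ
  have hΦc : Continuous Φ := by
    simp only [hΦ, circleMap]; fun_prop
  have hmaps : ∀ x ∈ Q, Φ x ∈ ball c ρ := by
    intro x hx
    have : Φ x ∈ sphere c |x.1| := circleMap_mem_sphere' c x.1 x.2
    rw [mem_sphere, abs_of_pos hx.1.1] at this
    rw [mem_ball, this]; exact hx.1.2
  have e1 : ∫⁻ z in ball c ρ, F z = ∫⁻ x in polarCoord.target, ENNReal.ofReal x.1 • (ball c ρ).indicator F (Φ x) := by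
    rw [← lintegral_indicator measurableSet_ball, ← lintegral_add_left_eq_self _ c, ← Complex.lintegral_comp_polarCoord_symm]
    congr 1; ext x
    congr 2
    simp only [Complex.polarCoord_symm_apply, hΦ, circleMap]
    rw [Complex.exp_mul_I]; simp
  have e2 : ∫⁻ x in Q, ENNReal.ofReal x.1 * F (Φ x) ≤ ∫⁻ z in ball c ρ, F z := by
    rw [e1]
    have hsub : Q ⊆ polarCoord.target := by
      rintro x ⟨hx1, hx2⟩
      exact ⟨hx1.1, hx2⟩
    refine le_trans (le_of_eq ?_) (lintegral_mono_set hsub)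
    refine setLIntegral_congr_fun (measurableSet_Ioo.prod measurableSet_Ioo) (fun x hx => ?_)
    simp only [smul_eq_mul]
    rw [Set.indicator_of_mem (hmaps x hx)]
  refine le_trans ?_ e2
  have hm : AEMeasurable (fun x : ℝ × ℝ => ENNReal.ofReal x.1 * F (Φ x)) ((volume.restrict (Set.Ioo 0 ρ)).prod (volume.restrict (Set.Ioo (-Real.pi) Real.pi))) := by
    rw [Measure.prod_restrict, ← Measure.volume_eq_prod]
    refine ContinuousOn.aemeasurable ?_ (measurableSet_Ioo.prod measurableSet_Ioo)
    have h1 : ContinuousOn (fun x : ℝ × ℝ => x.1 * ‖f (Φ x)‖ ^ p) Q :=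
      continuousOn_fst.mul (hFc.comp hΦc.continuousOn hmaps)
    have h2 := ENNReal.continuous_ofReal.comp_continuousOn h1
    refine h2.congr (fun x hx => ?_)
    simp only [hF, Function.comp]
    rw [ENNReal.ofReal_mul hx.1.1.le]
  rw [hQ, Measure.volume_eq_prod, ← Measure.prod_restrict, lintegral_prod _ hm]
  set a := ‖f c‖ ^ p with ha
  have ha0 : 0 ≤ a := by positivity
  have inner : ∀ r ∈ Set.Ioo 0 ρ, ENNReal.ofReal (r * (2 * Real.pi * a)) ≤
      ∫⁻ θ in Set.Ioo (-Real.pi) Real.pi, ENNReal.ofReal r * F (Φ (r, θ)) := by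
    intro r hr
    have h1 := kul_sub (c := c) hr.1 hp (hf.mono (closedBall_subset_ball hr.2))
    rw [Real.circleAverage_eq_integral_add (-Real.pi), intervalIntegral.integral_comp_add_right (fun θ => ‖f (circleMap c r θ)‖ ^ p)] at h1
    have e3 : (0 : ℝ) + -Real.pi = -Real.pi := by ring
    have e4 : 2 * Real.pi + -Real.pi = Real.pi := by ring
    rw [e3, e4, intervalIntegral.integral_of_le (by linarith), integral_Ioc_eq_integral_Ioo, smul_eq_mul, ← ha] at h1
    have h2 : 2 * Real.pi * a ≤ ∫ θ in Set.Ioo (-Real.pi) Real.pi, ‖f (circleMap c r θ)‖ ^ p := by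
      rw [inv_mul_eq_div, le_div_iff₀ (by positivity)] at h1
      linarith
    have hcont : Continuous (fun θ => ‖f (circleMap c r θ)‖ ^ p) := by
      have : ∀ θ, circleMap c r θ ∈ ball c ρ := by
        intro θ
        have := circleMap_mem_sphere' c r θ
        rw [mem_sphere, abs_of_pos hr.1] at this
        rw [mem_ball, this]; exact hr.2
      exact hFc.comp_continuous (continuous_circleMap c r) this
    have hint : IntegrableOn (fun θ => ‖f (circleMap c r θ)‖ ^ p) (Set.Ioo (-Real.pi) Real.pi) :=
      (hcont.integrableOn_Icc (a := -Real.pi) (b := Real.pi)).mono_set Set.Ioo_subset_Icc_self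
    rw [lintegral_const_mul']
    · rw [ENNReal.ofReal_mul hr.1.le]
      gcongr
      simp only [hF, hΦ]
      rw [← ofReal_integral_eq_lintegral_ofReal hint (Filter.Eventually.of_forall (fun θ => by positivity))]
      exact ENNReal.ofReal_le_ofReal h2
    · exact ENNReal.ofReal_ne_top
  refine le_trans ?_ (setLIntegral_mono' measurableSet_Ioo inner)
  have hint : IntegrableOn (fun r : ℝ => r * (2 * Real.pi * a)) (Set.Ioo 0 ρ) :=
    ((continuous_id.mul continuous_const).integrableOn_Icc (a := 0) (b := ρ)).mono_set Set.Ioo_subset_Icc_self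
  rw [← ofReal_integral_eq_lintegral_ofReal hint]
  · rw [← integral_Ioc_eq_integral_Ioo, ← intervalIntegral.integral_of_le hρ.le, intervalIntegral.integral_mul_const, integral_id]
    apply ENNReal.ofReal_le_ofReal
    apply le_of_eq; ring
  · refine (ae_restrict_iff' measurableSet_Ioo).2 (Filter.Eventually.of_forall (fun r hr => ?_))
    have := hr.1
    simp only [Pi.zero_apply]; positivity

lemma kul_decay {f : ℂ → ℂ} {p α : ℝ} (hp : 0 < p) (hα : 1 < α)
    (hf : DifferentiableOn ℂ f (ball (0 : ℂ) 1))
    (hfin : ∫⁻ z in ball (0:ℂ) 1, ENNReal.ofReal (‖f z‖ ^ p * (1 - ‖z‖ ^ 2) ^ (α - 2)) ≠ ⊤)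
    (s : ℝ) (hs : 0 < s) :
    ∃ ρ < 1, ∀ z ∈ ball (0:ℂ) 1, s ≤ ‖f z‖ ^ p * (1 - ‖z‖ ^ 2) ^ α → ‖z‖ ≤ ρ := by
  have hpi := Real.pi_pos
  set κ : ℝ := 3 ^ (-|α - 2|) with hκ
  have hκ0 : 0 < κ := Real.rpow_pos_of_pos (by norm_num) _
  set C : ℝ := s * Real.pi * κ / (4 * 2 ^ α) with hC
  have hC0 : 0 < C := by positivity
  obtain ⟨δ, hδ, hδs⟩ := exists_pos_setLIntegral_lt_of_measure_lt hfin (ε := ENNReal.ofReal C) (by simpa using hC0)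
  obtain ⟨d0, hd0, hd0v⟩ : ∃ d0 : ℝ, 0 < d0 ∧ ∀ d, 0 < d → d < d0 → ENNReal.ofReal (Real.pi * (d/2)^2) < δ := by
    have : Filter.Tendsto (fun d : ℝ => ENNReal.ofReal (Real.pi * (d/2)^2)) (nhds 0) (nhds 0) := by
      have : Continuous (fun d : ℝ => ENNReal.ofReal (Real.pi * (d/2)^2)) := ENNReal.continuous_ofReal.comp (by fun_prop)
      simpa using this.tendsto 0
    have h2 := this.eventually (gt_mem_nhds hδ)
    obtain ⟨ε, hε, h3⟩ := Metric.eventually_nhds_iff.1 h2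
    exact ⟨ε, hε, fun d h0 h1 => h3 (by simpa [abs_of_pos h0] using h1)⟩
  refine ⟨1 - d0, by linarith, fun z hz hsz => ?_⟩
  by_contra hcon
  push Not at hcon
  have hz1 : ‖z‖ < 1 := by simpa using hz
  set d := 1 - ‖z‖ with hd
  have hdp : 0 < d := by linarith
  have hdd : d < d0 := by linarith
  have hd1 : d ≤ 1 := by have := norm_nonneg z; linarith
  have hsubb : ball z (d/2) ⊆ ball (0:ℂ) 1 := by
    intro w hw
    rw [mem_ball, dist_eq_norm] at hw
    rw [mem_ball_zero_iff]
    have := norm_le_norm_add_norm_sub' w z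
    linarith
  have hA := kul_area (c := z) (ρ := d/2) (p := p) (by positivity) hp
    ((hf.mono hsubb).analyticOnNhd isOpen_ball)
  have hvol : volume.restrict (ball (0:ℂ) 1) (ball z (d/2)) < δ := by
    refine lt_of_le_of_lt (Measure.restrict_apply_le _ _) ?_
    rw [Complex.volume_ball]
    convert hd0v d hdp hdd using 1
    rw [ENNReal.ofReal_mul hpi.le, ← ENNReal.ofReal_pow (by positivity), mul_comm]
    congr 1
    rw [← ENNReal.ofReal_coe_nnreal]; rfl
  have hB := hδs _ hvol
  rw [Measure.restrict_restrict measurableSet_ball, Set.inter_eq_left.2 hsubb] at hB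
  -- compare
  have hcmp : ∀ w ∈ ball z (d/2), ENNReal.ofReal (κ * d ^ (α - 2)) * ENNReal.ofReal (‖f w‖ ^ p) ≤
      ENNReal.ofReal (‖f w‖ ^ p * (1 - ‖w‖ ^ 2) ^ (α - 2)) := by
    intro w hw
    rw [mem_ball, dist_eq_norm] at hw
    rw [← ENNReal.ofReal_mul (by positivity)]
    apply ENNReal.ofReal_le_ofReal
    rw [mul_comm]
    refine mul_le_mul_of_nonneg_left ?_ (by positivity)
    have h1 := norm_le_norm_add_norm_sub' w z
    have h2 := norm_le_norm_add_norm_sub' z w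
    rw [norm_sub_rev] at h2
    have hw0 := norm_nonneg w
    set x := (1 - ‖w‖^2) / d with hx
    have hx1 : 1/3 ≤ x := by rw [hx, le_div_iff₀ hdp]; nlinarith
    have hx2 : x ≤ 3 := by rw [hx, div_le_iff₀ hdp]; nlinarith
    have hx0 : 0 < x := by linarith
    have e : 1 - ‖w‖^2 = x * d := by rw [hx]; field_simp
    rw [e, Real.mul_rpow hx0.le hdp.le]
    refine mul_le_mul_of_nonneg_right ?_ (by positivity)
    rw [hκ]
    rcases le_total 0 (α - 2) with h | h
    · rw [abs_of_nonneg h, Real.rpow_neg (by norm_num), ← Real.inv_rpow (by norm_num)]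
      exact Real.rpow_le_rpow (by norm_num) (by linarith) h
    · rw [abs_of_nonpos h, neg_neg]
      exact Real.rpow_le_rpow_of_nonpos hx0 hx2 h
  have hD : ENNReal.ofReal (κ * d ^ (α - 2)) * ENNReal.ofReal (Real.pi * (d/2) ^ 2 * ‖f z‖ ^ p) < ENNReal.ofReal C := by
    refine lt_of_le_of_lt ?_ hB
    refine le_trans (mul_le_mul_right hA _) ?_
    rw [← lintegral_const_mul' _ _ ENNReal.ofReal_ne_top]
    exact setLIntegral_mono' measurableSet_ball hcmp
  rw [← ENNReal.ofReal_mul (by positivity), ENNReal.ofReal_lt_ofReal_iff hC0] at hD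
  have hE : (1 - ‖z‖^2) ^ α ≤ 2 ^ α * d ^ α := by
    rw [← Real.mul_rpow (by norm_num) hdp.le]
    have := norm_nonneg z
    exact Real.rpow_le_rpow (by nlinarith) (by rw [hd]; nlinarith) (by linarith)
  have hG : s ≤ ‖f z‖ ^ p * (2 ^ α * d ^ α) := hsz.trans (mul_le_mul_of_nonneg_left hE (by positivity))
  have hda : d ^ (α - 2) * d ^ 2 = d ^ α := by
    rw [← Real.rpow_natCast d 2, ← Real.rpow_add hdp]; congr 1; push_cast; ring
  have hH : κ * d ^ (α - 2) * (Real.pi * (d/2) ^ 2 * ‖f z‖ ^ p) = κ * Real.pi / 4 * (‖f z‖ ^ p * d ^ α) := by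
    rw [← hda]; ring
  rw [hH, hC, lt_div_iff₀ (by positivity)] at hD
  have := mul_le_mul_of_nonneg_left hG (by positivity : 0 ≤ κ * Real.pi)
  nlinarith


lemma kul_half {G : ℂ → ℂ} {p α r T : ℝ} (hα : 1 < α) (hp : 0 < p) (hr : 1 ≤ r) (hT : 0 < T)
    (hG : DifferentiableOn ℂ G {z | 0 < z.im})
    {W : ℂ → ℝ} (hW0 : ∀ z : ℂ, z.im ≤ 0 → W z = 0)
    (hWH : ∀ z : ℂ, 0 < z.im → W z = ‖G z‖ ^ p * z.im ^ α)
    (hcomp : ∀ s : ℝ, 0 < s → IsCompact {z | s ≤ W z})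
    (hTW : ∫⁻ z, ENNReal.ofReal (1 / z.im ^ 2) * ENNReal.ofReal (W z) = ENNReal.ofReal (4 * Real.pi * T / (α - 1))) :
    ∫⁻ z, ENNReal.ofReal (1 / z.im ^ 2) * ENNReal.ofReal (W z ^ r) ≤ ENNReal.ofReal (4 * Real.pi * T ^ r / (r * α - 1)) := by
  have hα0 : 0 < α := by linarith
  have hpi := Real.pi_pos
  have hH : IsOpen {z : ℂ | 0 < z.im} := isOpen_lt continuous_const Complex.continuous_im
  have hWn : ∀ z, 0 ≤ W z := by
    intro z
    rcases le_or_gt z.im 0 with h | h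
    · rw [hW0 z h]
    · rw [hWH z h]; positivity
  have hWpos : ∀ z, 0 < W z → 0 < z.im := by
    intro z hz; by_contra h; rw [hW0 z (not_lt.1 h)] at hz; exact lt_irrefl _ hz
  have hWc : ContinuousOn W {z | 0 < z.im} := by
    have : ContinuousOn (fun z : ℂ => ‖G z‖ ^ p * z.im ^ α) {z | 0 < z.im} :=
      (hG.continuousOn.norm.rpow_const (fun _ _ => Or.inr hp.le)).mul
        (Complex.continuous_im.continuousOn.rpow_const (fun _ _ => Or.inr hα0.le))
    exact this.congr hWH
  have hSo : ∀ t, 0 ≤ t → IsOpen {z | t < W z} := by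
    intro t ht
    have := hWc.isOpen_inter_preimage hH (isOpen_Ioi (a := t))
    convert this using 1
    ext z; constructor
    · intro h; exact ⟨hWpos z (lt_of_le_of_lt ht h), h⟩
    · intro h; exact h.2
  have hWm : Measurable W := by
    apply measurable_of_Ioi
    intro t
    rcases le_or_gt 0 t with h | h
    · exact (hSo t h).measurableSet
    · have : W ⁻¹' Set.Ioi t = Set.univ := by
        ext z; simp only [Set.mem_preimage, Set.mem_Ioi, Set.mem_univ, iff_true]; exact h.trans_le (hWn z)
      rw [this]; exact MeasurableSet.univ
  have hi2 : ContinuousOn (fun z : ℂ => 1 / z.im ^ 2) {z | 0 < z.im} :=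
    continuousOn_const.div (Complex.continuous_im.continuousOn.pow 2) (fun z hz => (pow_pos hz 2).ne')
  have hSi : ∀ t, 0 < t → IntegrableOn (fun z : ℂ => 1 / z.im ^ 2) {z | t < W z} := by
    intro t ht
    have : IntegrableOn (fun z : ℂ => 1 / z.im ^ 2) {z | t ≤ W z} :=
      (hi2.mono (fun z hz => hWpos z (lt_of_lt_of_le ht hz))).integrableOn_compact (hcomp t ht)
    exact this.mono_set (fun z (hz : t < W z) => (le_of_lt hz : t ≤ W z))
  set m : ℝ → ℝ := fun t => ∫ z in {z | t < W z}, 1 / z.im ^ 2 with hm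
  have m0 : ∀ t, 0 < t → 0 ≤ m t := fun t _ => integral_nonneg (fun z => by positivity)
  have ma : ∀ s t, 0 < s → s ≤ t → m t ≤ m s := by
    intro s t hs hst
    refine setIntegral_mono_set (hSi s hs) (Filter.Eventually.of_forall (fun z => by simp only [Pi.zero_apply]; positivity)) ?_
    exact Filter.Eventually.of_forall (fun z (hz : t < W z) => lt_of_le_of_lt hst hz)
  have hlev := kul_level hα0 hp hG hW0 hWH hcomp (m := m) (fun t => rfl)
  have hmono := kul_mono hα0 m0 ma hlev
  set lam : Measure ℂ := volume.withDensity (fun z : ℂ => ENNReal.ofReal (1 / z.im ^ 2)) with hlam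
  have hdm : Measurable (fun z : ℂ => ENNReal.ofReal (1 / z.im ^ 2)) :=
    ENNReal.measurable_ofReal.comp (measurable_const.div (Complex.measurable_im.pow_const 2))
  have hlt : ∀ t, 0 < t → lam {z | t < W z} = ENNReal.ofReal (m t) := by
    intro t ht
    rw [hlam, withDensity_apply _ (hSo t ht.le).measurableSet, hm,
      ofReal_integral_eq_lintegral_ofReal (hSi t ht) (Filter.Eventually.of_forall (fun z => by simp only [Pi.zero_apply]; positivity))]
  have lay : ∀ q, 0 < q → ∫⁻ z, ENNReal.ofReal (1 / z.im ^ 2) * ENNReal.ofReal (W z ^ q) =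
      ENNReal.ofReal q * ∫⁻ t in Set.Ioi 0, ENNReal.ofReal (t ^ (q - 1) * m t) := by
    intro q hq
    have h1 := lintegral_rpow_eq_lintegral_meas_lt_mul lam (Filter.Eventually.of_forall hWn) hWm.aemeasurable hq
    have hgm : Measurable (fun z => ENNReal.ofReal (W z ^ q)) := ENNReal.measurable_ofReal.comp (hWm.pow_const q)
    rw [hlam, lintegral_withDensity_eq_lintegral_mul _ hdm hgm] at h1
    simp only [Pi.mul_apply] at h1
    rw [h1]
    congr 1
    refine setLIntegral_congr_fun measurableSet_Ioi (fun t ht => ?_)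
    rw [← hlam, hlt t ht, mul_comm, ENNReal.ofReal_mul (Real.rpow_nonneg (le_of_lt ht) _)]
  have h1 := lay 1 one_pos
  simp only [Real.rpow_one, sub_self, Real.rpow_zero, one_mul, ENNReal.ofReal_one] at h1
  rw [hTW] at h1
  have hae : 0 ≤ᵐ[volume.restrict (Set.Ioi 0)] m :=
    (ae_restrict_iff' measurableSet_Ioi).2 (Filter.Eventually.of_forall (fun t ht => m0 t ht))
  have hsm : AEStronglyMeasurable m (volume.restrict (Set.Ioi 0)) := by
    have : AntitoneOn m (Set.Ioi 0) := fun s hs t _ hst => ma s t hs hst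
    exact (aemeasurable_restrict_of_antitoneOn measurableSet_Ioi this).aestronglyMeasurable
  have hi : IntegrableOn m (Set.Ioi 0) := by
    refine ⟨hsm, ?_⟩
    rw [hasFiniteIntegral_iff_ofReal hae, ← h1]; exact ENNReal.ofReal_lt_top
  have hint : ∫ t in Set.Ioi 0, m t = 4 * Real.pi * T / (α - 1) := by
    have h2 := ofReal_integral_eq_lintegral_ofReal hi hae
    rw [← h1] at h2
    have : 0 < α - 1 := by linarith
    exact (ENNReal.ofReal_eq_ofReal_iff (integral_nonneg_of_ae hae) (by positivity)).1 h2
  have hfin := kul_moment hα hT hr m0 ma hmono hi hint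
  have hr0 : 0 < r := by linarith
  rw [lay r hr0]
  refine (mul_le_mul_right hfin _).trans ?_
  rw [← ENNReal.ofReal_mul hr0.le]
  apply ENNReal.ofReal_le_ofReal
  apply le_of_eq
  have : 0 < r * α - 1 := by nlinarith
  field_simp


noncomputable def kulC (z : ℂ) : ℂ := (z - Complex.I) / (z + Complex.I)
noncomputable def kulCi (z : ℂ) : ℂ := Complex.I * (1 + z) / (1 - z)

lemma kul_ne {z : ℂ} (hz : 0 < z.im) : z + Complex.I ≠ 0 := by
  intro h
  have := congrArg Complex.im h
  simp at this; linarith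

lemma kulC_norm {z : ℂ} (hz : 0 < z.im) : 1 - ‖kulC z‖ ^ 2 = 4 * z.im / ‖z + Complex.I‖ ^ 2 := by
  have h := kul_ne hz
  have h2 : 0 < ‖z + Complex.I‖ ^ 2 := by have := norm_pos_iff.2 h; positivity
  rw [kulC, norm_div, div_pow, eq_div_iff h2.ne', sub_mul, div_mul_cancel₀ _ h2.ne', ← Complex.normSq_eq_norm_sq, ← Complex.normSq_eq_norm_sq, Complex.normSq_apply, Complex.normSq_apply]
  simp; ring

lemma kulC_mem {z : ℂ} (hz : 0 < z.im) : kulC z ∈ ball (0:ℂ) 1 := by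
  have h := kulC_norm hz
  have h2 : 0 < 4 * z.im / ‖z + Complex.I‖ ^ 2 := by have := norm_pos_iff.2 (kul_ne hz); positivity
  rw [mem_ball_zero_iff]
  nlinarith [norm_nonneg (kulC z)]

lemma kul_ne1 {z : ℂ} (hz : z ∈ ball (0:ℂ) 1) : 1 - z ≠ 0 := by
  intro h
  have : z = 1 := (sub_eq_zero.1 h).symm
  rw [this] at hz; simp at hz

lemma kulCi_im {z : ℂ} (hz : z ∈ ball (0:ℂ) 1) : 0 < (kulCi z).im := by
  have h := kul_ne1 hz
  have h1 : 0 < Complex.normSq (1 - z) := Complex.normSq_pos.2 h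
  have h2 : (kulCi z).im = (1 - ‖z‖^2) / Complex.normSq (1 - z) := by
    rw [kulCi, Complex.div_im, ← Complex.normSq_eq_norm_sq, Complex.normSq_apply z]
    simp only [Complex.mul_im, Complex.mul_re, Complex.I_re, Complex.I_im, Complex.add_re, Complex.add_im, Complex.sub_re, Complex.sub_im, Complex.one_re, Complex.one_im]
    field_simp; ring
  rw [h2]
  rw [mem_ball_zero_iff] at hz
  have : 0 < 1 - ‖z‖^2 := by nlinarith [norm_nonneg z]
  positivity

lemma kulC_Ci {z : ℂ} (hz : z ∈ ball (0:ℂ) 1) : kulC (kulCi z) = z := by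
  have h := kul_ne1 hz
  have h2 := kul_ne (kulCi_im hz)
  rw [kulC, div_eq_iff h2, kulCi]
  field_simp
  ring

lemma kulCi_C {z : ℂ} (hz : 0 < z.im) : kulCi (kulC z) = z := by
  have h := kul_ne hz
  have h2 := kul_ne1 (kulC_mem hz)
  rw [kulCi, div_eq_iff h2, kulC]
  field_simp
  ring_nf

lemma kulC_image : kulC '' {z | 0 < z.im} = ball (0:ℂ) 1 := by
  ext z; constructor
  · rintro ⟨w, hw, rfl⟩; exact kulC_mem hw
  · intro hz; exact ⟨kulCi z, kulCi_im hz, kulC_Ci hz⟩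

lemma kulC_deriv {z : ℂ} (hz : 0 < z.im) : HasDerivAt kulC (2 * Complex.I / (z + Complex.I) ^ 2) z := by
  have h := kul_ne hz
  have := ((hasDerivAt_id z).sub_const Complex.I).div ((hasDerivAt_id z).add_const Complex.I) h
  refine HasDerivAt.congr_deriv (f := kulC) this ?_
  simp only [id]; ring

lemma kul_det (c : ℂ) : (((ContinuousLinearMap.toSpanSingleton ℂ c : ℂ →L[ℂ] ℂ).restrictScalars ℝ)).det = ‖c‖ ^ 2 := by
  simp [ContinuousLinearMap.det, LinearMap.det_restrictScalars,
      Algebra.norm_complex_eq, Complex.normSq_eq_norm_sq]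

lemma kul_transfer (k : ℂ → ENNReal) :
    ∫⁻ z in ball (0:ℂ) 1, ENNReal.ofReal (1 / (1 - ‖z‖ ^ 2) ^ 2) * k z =
    ∫⁻ z in {z : ℂ | 0 < z.im}, ENNReal.ofReal (1 / (4 * z.im ^ 2)) * k (kulC z) := by
  have hH : MeasurableSet {z : ℂ | 0 < z.im} := (isOpen_lt continuous_const Complex.continuous_im).measurableSet
  rw [← kulC_image, lintegral_image_eq_lintegral_abs_det_fderiv_mul volume hH
    (f' := fun z => (ContinuousLinearMap.toSpanSingleton ℂ (2 * Complex.I / (z + Complex.I) ^ 2)).restrictScalars ℝ)]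
  · refine setLIntegral_congr_fun hH (fun z hz => ?_)
    have hz : 0 < z.im := hz
    rw [← mul_assoc, kul_det, kulC_norm hz, ← ENNReal.ofReal_mul (by positivity)]
    congr 2
    have := norm_pos_iff.2 (kul_ne hz)
    rw [abs_of_nonneg (by positivity), norm_div, norm_mul, norm_pow, Complex.norm_I]
    simp only [Complex.norm_ofNat]
    field_simp
    norm_num
  · intro z hz
    exact ((kulC_deriv hz).hasFDerivAt.restrictScalars ℝ).hasFDerivWithinAt
  · intro z hz w hw h
    rw [← kulCi_C hz, ← kulCi_C hw, h]

lemma kul_one_sub {z : ℂ} (hz : z ∈ ball (0:ℂ) 1) : 0 < 1 - ‖z‖ ^ 2 := by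
  rw [mem_ball_zero_iff] at hz
  nlinarith [norm_nonneg z]

lemma kul_wcont {f : ℂ → ℂ} {p γ : ℝ} (hp : 0 < p) (hf : DifferentiableOn ℂ f (ball (0 : ℂ) 1)) :
    ContinuousOn (fun z => ‖f z‖ ^ p * (1 - ‖z‖ ^ 2) ^ γ) (ball (0:ℂ) 1) := by
  refine (hf.continuousOn.norm.rpow_const (fun z _ => Or.inr hp.le)).mul ?_
  refine ContinuousOn.rpow_const (by fun_prop) (fun z hz => Or.inl (kul_one_sub hz).ne')

lemma kul_pt {z : ℂ} (hz : z ∈ ball (0:ℂ) 1) (a p γ : ℝ) :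
    a ^ p * (1 - ‖z‖ ^ 2) ^ (γ - 2) = 1 / (1 - ‖z‖ ^ 2) ^ 2 * (a ^ p * (1 - ‖z‖ ^ 2) ^ γ) := by
  have := kul_one_sub hz
  rw [Real.rpow_sub this, Real.rpow_two]; field_simp

lemma kul_berg {f : ℂ → ℂ} {p γ : ℝ} (hp : 0 < p) (hγ : 1 < γ) (hf : DifferentiableOn ℂ f (ball (0 : ℂ) 1)) :
    ∫⁻ z, ENNReal.ofReal (‖f z‖ ^ p) ∂(bergmanMeasure γ) =
    ENNReal.ofReal ((γ - 1) / Real.pi) * ∫⁻ z in ball (0:ℂ) 1, ENNReal.ofReal (‖f z‖ ^ p * (1 - ‖z‖ ^ 2) ^ (γ - 2)) := by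
  have hc : 0 ≤ (γ - 1) / Real.pi := div_nonneg (by linarith) Real.pi_pos.le
  have hd : Measurable (fun z : ℂ => ENNReal.ofReal ((γ - 1) / Real.pi * (1 - ‖z‖ ^ 2) ^ (γ - 2))) :=
    ENNReal.measurable_ofReal.comp (measurable_const.mul ((measurable_const.sub (measurable_norm.pow_const 2)).pow_const _))
  have hfm : AEMeasurable (fun z => ENNReal.ofReal (‖f z‖ ^ p)) (volume.restrict (ball (0:ℂ) 1)) :=
    ENNReal.measurable_ofReal.comp_aemeasurable ((hf.continuousOn.norm.rpow_const (fun z _ => Or.inr hp.le)).aemeasurable measurableSet_ball)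
  rw [bergmanMeasure, lintegral_withDensity_eq_lintegral_mul₀ hd.aemeasurable hfm, ← lintegral_const_mul' _ _ ENNReal.ofReal_ne_top]
  refine setLIntegral_congr_fun measurableSet_ball (fun z hz => ?_)
  have := kul_one_sub hz
  rw [Pi.mul_apply, ← ENNReal.ofReal_mul (by positivity), ← ENNReal.ofReal_mul hc]
  congr 1; ring

lemma kul_berg2 {f : ℂ → ℂ} {p γ : ℝ} (hp : 0 < p) (hγ : 1 < γ) (hf : DifferentiableOn ℂ f (ball (0 : ℂ) 1)) :
    ∫⁻ z, ENNReal.ofReal (‖f z‖ ^ p) ∂(bergmanMeasure γ) =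
    ENNReal.ofReal ((γ - 1) / Real.pi) * ∫⁻ z in ball (0:ℂ) 1,
      ENNReal.ofReal (1 / (1 - ‖z‖ ^ 2) ^ 2) * ENNReal.ofReal (‖f z‖ ^ p * (1 - ‖z‖ ^ 2) ^ γ) := by
  rw [kul_berg hp hγ hf]
  congr 1
  refine setLIntegral_congr_fun measurableSet_ball (fun z hz => ?_)
  have := kul_one_sub hz
  rw [kul_pt hz, ENNReal.ofReal_mul (by positivity)]

noncomputable def kulW (f : ℂ → ℂ) (p α : ℝ) (z : ℂ) : ℝ :=
  if 0 < z.im then ‖f (kulC z)‖ ^ p * (1 - ‖kulC z‖ ^ 2) ^ α else 0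

noncomputable def kulG (f : ℂ → ℂ) (p α : ℝ) (z : ℂ) : ℂ :=
  f (kulC z) * Complex.exp (-((2 * α / p : ℝ) : ℂ) * Complex.log ((z + Complex.I) / 2))

lemma kulG_diff {f : ℂ → ℂ} (p α : ℝ) (hf : DifferentiableOn ℂ f (ball (0 : ℂ) 1)) :
    DifferentiableOn ℂ (kulG f p α) {z | 0 < z.im} := by
  intro z hz
  have hz : 0 < z.im := hz
  apply DifferentiableAt.differentiableWithinAt
  have h1 : DifferentiableAt ℂ f (kulC z) := (hf _ (kulC_mem hz)).differentiableAt (isOpen_ball.mem_nhds (kulC_mem hz))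
  have h2 : DifferentiableAt ℂ (fun z => f (kulC z)) z := h1.comp z (kulC_deriv hz).differentiableAt
  refine h2.mul (DifferentiableAt.cexp ((differentiableAt_const _).mul (DifferentiableAt.clog (by fun_prop) ?_)))
  rw [Complex.mem_slitPlane_iff]; right
  have : ((z + Complex.I) / 2).im = (z.im + 1) / 2 := by simp
  rw [this]; positivity

lemma kulG_norm {f : ℂ → ℂ} {p α : ℝ} (hp : 0 < p) {z : ℂ} (hz : 0 < z.im) :
    kulW f p α z = ‖kulG f p α z‖ ^ p * z.im ^ α := by
  have hn := norm_pos_iff.2 (kul_ne hz)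
  have h2 : 0 < ‖(z + Complex.I) / 2‖ := by rw [norm_div]; simp; exact kul_ne hz
  have e : ‖Complex.exp (-((2 * α / p : ℝ) : ℂ) * Complex.log ((z + Complex.I) / 2))‖ ^ p = ((‖z + Complex.I‖ / 2) ^ 2) ^ (-α) := by
    rw [Complex.norm_exp, ← Real.exp_mul, ← Complex.ofReal_neg, Complex.re_ofReal_mul, Complex.log_re,
      norm_div, Complex.norm_ofNat, Real.rpow_def_of_pos (by positivity), Real.log_pow]
    congr 1; push_cast; field_simp
  rw [kulW, if_pos hz, kulG, norm_mul, Real.mul_rpow (norm_nonneg _) (norm_nonneg _), e, kulC_norm hz, mul_assoc]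
  congr 1
  rw [Real.rpow_neg (by positivity), ← Real.inv_rpow (by positivity), ← Real.mul_rpow (by positivity) hz.le]
  congr 1
  field_simp; norm_num

lemma kulW_comp {f : ℂ → ℂ} {p α : ℝ} (hp : 0 < p) (hα : 1 < α) (hf : DifferentiableOn ℂ f (ball (0 : ℂ) 1))
    (hfin : ∫⁻ z in ball (0:ℂ) 1, ENNReal.ofReal (‖f z‖^p * (1-‖z‖^2)^(α-2)) ≠ ⊤) (s : ℝ) (hs : 0 < s) :
    IsCompact {z | s ≤ kulW f p α z} := by
  obtain ⟨ρ, hρ, h⟩ := kul_decay hp hα hf hfin s hs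
  have hsub : closedBall (0:ℂ) ρ ⊆ ball 0 1 := closedBall_subset_ball hρ
  have hK : IsCompact (closedBall (0:ℂ) ρ ∩ {z | s ≤ ‖f z‖ ^ p * (1 - ‖z‖ ^ 2) ^ α}) := by
    have : IsClosed (closedBall (0:ℂ) ρ ∩ (fun z => ‖f z‖ ^ p * (1 - ‖z‖ ^ 2) ^ α) ⁻¹' Set.Ici s) :=
      ((kul_wcont hp hf).mono hsub).preimage_isClosed_of_isClosed isClosed_closedBall isClosed_Ici
    exact (isCompact_closedBall (0:ℂ) ρ).of_isClosed_subset this Set.inter_subset_left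
  have : {z | s ≤ kulW f p α z} = kulCi '' (closedBall (0:ℂ) ρ ∩ {z | s ≤ ‖f z‖ ^ p * (1 - ‖z‖ ^ 2) ^ α}) := by
    ext z; constructor
    · intro hz
      have hz : s ≤ kulW f p α z := hz
      by_cases hi : 0 < z.im
      · rw [kulW, if_pos hi] at hz
        exact ⟨kulC z, ⟨mem_closedBall_zero_iff.2 (h _ (kulC_mem hi) hz), hz⟩, kulCi_C hi⟩
      · rw [kulW, if_neg hi] at hz; linarith
    · rintro ⟨w, ⟨hw, hw2⟩, rfl⟩
      have hb := hsub hw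
      show s ≤ kulW f p α (kulCi w)
      rw [kulW, if_pos (kulCi_im hb), kulC_Ci hb]; exact hw2
  rw [this]
  refine hK.image_of_continuousOn ?_
  refine ContinuousOn.div (by fun_prop) (by fun_prop) (fun z hz => kul_ne1 (hsub hz.1))

lemma kulW_trans (f : ℂ → ℂ) {p α r : ℝ} (hr : 0 < r) :
    ∫⁻ z in ball (0:ℂ) 1, ENNReal.ofReal (1 / (1 - ‖z‖ ^ 2) ^ 2) * ENNReal.ofReal ((‖f z‖ ^ p * (1 - ‖z‖ ^ 2) ^ α) ^ r) =
    ENNReal.ofReal (1 / 4) * ∫⁻ z, ENNReal.ofReal (1 / z.im ^ 2) * ENNReal.ofReal (kulW f p α z ^ r) := by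
  have hH : MeasurableSet {z : ℂ | 0 < z.im} := (isOpen_lt continuous_const Complex.continuous_im).measurableSet
  rw [kul_transfer (fun z => ENNReal.ofReal ((‖f z‖ ^ p * (1 - ‖z‖ ^ 2) ^ α) ^ r)),
    ← lintegral_const_mul' _ _ ENNReal.ofReal_ne_top, ← lintegral_indicator hH]
  congr 1; ext z
  by_cases hz : 0 < z.im
  · rw [Set.indicator_of_mem (show z ∈ {z : ℂ | 0 < z.im} from hz), kulW, if_pos hz, ← mul_assoc, ← ENNReal.ofReal_mul (p := 1 / 4) (by norm_num)]
    congr 2; field_simp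
  · rw [Set.indicator_of_notMem (show z ∉ {z : ℂ | 0 < z.im} from hz), kulW, if_neg hz, Real.zero_rpow hr.ne']
    simp

lemma kul_main {f : ℂ → ℂ} {p q α : ℝ} (hp : 0 < p) (hpq : p < q) (hα : 1 < α)
    (hf : DifferentiableOn ℂ f (ball (0 : ℂ) 1)) {J : ℝ} (hJ0 : 0 ≤ J)
    (hJ : ∫⁻ z, ENNReal.ofReal (‖f z‖ ^ p) ∂(bergmanMeasure α) = ENNReal.ofReal J) :
    ∫⁻ z, ENNReal.ofReal (‖f z‖ ^ q) ∂(bergmanMeasure (q / p * α)) ≤ ENNReal.ofReal (J ^ (q / p)) := by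
  have hq : 0 < q := by linarith
  have hr : 1 < q / p := by rw [one_lt_div hp]; exact hpq
  have hr0 : 0 < q / p := by linarith
  set r := q / p with hrd
  have hβ : 1 < r * α := by nlinarith
  have ha : 0 < α - 1 := by linarith
  have hb : 0 < r * α - 1 := by linarith
  have hpi := Real.pi_pos
  have hq2 : ∫⁻ z, ENNReal.ofReal (‖f z‖ ^ q) ∂(bergmanMeasure (r * α)) = ENNReal.ofReal ((r * α - 1) / Real.pi) *
      ∫⁻ z in ball (0:ℂ) 1, ENNReal.ofReal (1 / (1 - ‖z‖ ^ 2) ^ 2) * ENNReal.ofReal ((‖f z‖ ^ p * (1 - ‖z‖ ^ 2) ^ α) ^ r) := by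
    rw [kul_berg2 hq hβ hf]
    congr 1
    refine setLIntegral_congr_fun measurableSet_ball (fun z hz => ?_)
    have := kul_one_sub hz
    have e : (‖f z‖ ^ p * (1 - ‖z‖ ^ 2) ^ α) ^ r = ‖f z‖ ^ q * (1 - ‖z‖ ^ 2) ^ (r * α) := by
      rw [Real.mul_rpow (by positivity) (by positivity), ← Real.rpow_mul (norm_nonneg _), ← Real.rpow_mul this.le,
        mul_comm α r, hrd, mul_div_cancel₀ _ hp.ne']
    rw [e]
  rcases hJ0.eq_or_lt with h0 | hJp
  · subst h0
    rw [kul_berg2 hp hα hf, ENNReal.ofReal_zero] at hJ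
    have h1 : ENNReal.ofReal ((α - 1) / Real.pi) ≠ 0 := by
      rw [Ne, ENNReal.ofReal_eq_zero, not_le]; positivity
    have h2 := (mul_eq_zero.1 hJ).resolve_left h1
    have hm : AEMeasurable (fun z : ℂ => ENNReal.ofReal (1 / (1 - ‖z‖ ^ 2) ^ 2) * ENNReal.ofReal (‖f z‖ ^ p * (1 - ‖z‖ ^ 2) ^ α))
        (volume.restrict (ball (0:ℂ) 1)) := by
      refine AEMeasurable.mul ?_ (ENNReal.measurable_ofReal.comp_aemeasurable ((kul_wcont hp hf).aemeasurable measurableSet_ball))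
      exact (ENNReal.measurable_ofReal.comp (measurable_const.div ((measurable_const.sub (measurable_norm.pow_const 2)).pow_const 2))).aemeasurable
    rw [lintegral_eq_zero_iff' hm] at h2
    have h3 : ∫⁻ z in ball (0:ℂ) 1, ENNReal.ofReal (1 / (1 - ‖z‖ ^ 2) ^ 2) * ENNReal.ofReal ((‖f z‖ ^ p * (1 - ‖z‖ ^ 2) ^ α) ^ r) = 0 := by
      rw [← lintegral_zero (μ := volume.restrict (ball (0:ℂ) 1))]
      apply lintegral_congr_ae
      filter_upwards [h2, ae_restrict_mem measurableSet_ball] with z hz hzb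
      have := kul_one_sub hzb
      have h4 : ENNReal.ofReal (1 / (1 - ‖z‖ ^ 2) ^ 2) ≠ 0 := by
        rw [Ne, ENNReal.ofReal_eq_zero, not_le]; positivity
      have h5 := ENNReal.ofReal_eq_zero.1 ((mul_eq_zero.1 hz).resolve_left h4)
      have h6 : ‖f z‖ ^ p * (1 - ‖z‖ ^ 2) ^ α = 0 := le_antisymm h5 (by positivity)
      rw [h6, Real.zero_rpow hr0.ne']; simp
    rw [hq2, h3, mul_zero]; exact zero_le
  · have hfin : ∫⁻ z in ball (0:ℂ) 1, ENNReal.ofReal (‖f z‖^p * (1-‖z‖^2)^(α-2)) ≠ ⊤ := by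
      intro h
      rw [kul_berg hp hα hf, h, ENNReal.mul_top] at hJ
      · exact ENNReal.ofReal_ne_top hJ.symm
      · rw [Ne, ENNReal.ofReal_eq_zero, not_le]; positivity
    have hTW : ∫⁻ z : ℂ, ENNReal.ofReal (1 / z.im ^ 2) * ENNReal.ofReal (kulW f p α z) = ENNReal.ofReal (4 * Real.pi * J / (α - 1)) := by
      have h1 := kulW_trans f (p := p) (α := α) one_pos
      simp only [Real.rpow_one] at h1
      rw [kul_berg2 hp hα hf, h1, ← mul_assoc, ← ENNReal.ofReal_mul (by positivity)] at hJ
      have : 4 * Real.pi * J / (α - 1) = (4 * Real.pi / (α - 1)) * J := by ring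
      rw [this, ENNReal.ofReal_mul (by positivity), ← hJ, ← mul_assoc, ← ENNReal.ofReal_mul (by positivity)]
      have : 4 * Real.pi / (α - 1) * ((α - 1) / Real.pi * (1 / 4)) = 1 := by field_simp
      rw [this, ENNReal.ofReal_one, one_mul]
    have hfinal := kul_half hα hp hr.le hJp (kulG_diff p α hf) (W := kulW f p α)
      (fun z hz => by rw [kulW, if_neg (not_lt.2 hz)]) (fun z hz => kulG_norm hp hz) (kulW_comp hp hα hf hfin) hTW
    rw [hq2, kulW_trans f hr0, ← mul_assoc, ← ENNReal.ofReal_mul (by positivity)]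
    refine (mul_le_mul_right hfinal _).trans ?_
    rw [← ENNReal.ofReal_mul (by positivity)]
    apply ENNReal.ofReal_le_ofReal
    apply le_of_eq
    field_simp

theorem kulikov_inequality
    (p q α β : ℝ) (hp : 0 < p) (hpq : p < q) (hα : 1 < α) (hβ : β = q * α / p)
    (f : ℂ → ℂ) (hf : DifferentiableOn ℂ f (ball (0 : ℂ) 1))
    (hfp : Integrable (fun z => ‖f z‖ ^ p) (bergmanMeasure α)) :
    (∫ z, ‖f z‖ ^ q ∂(bergmanMeasure β)) ^ (1 / q) ≤
      (∫ z, ‖f z‖ ^ p ∂(bergmanMeasure α)) ^ (1 / p) := by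
  have hβ2 : β = q / p * α := by rw [hβ]; ring
  have hq : 0 < q := by linarith
  have hJ0 : 0 ≤ ∫ z, ‖f z‖ ^ p ∂(bergmanMeasure α) := integral_nonneg (fun z => by positivity)
  have hJ := ofReal_integral_eq_lintegral_ofReal hfp (Filter.Eventually.of_forall (fun z => by simp only [Pi.zero_apply]; positivity))
  have hm := kul_main hp hpq hα hf hJ0 hJ.symm
  rw [← hβ2] at hm
  set J := ∫ z, ‖f z‖ ^ p ∂(bergmanMeasure α)
  have hle : ∫ z, ‖f z‖ ^ q ∂(bergmanMeasure β) ≤ J ^ (q / p) := by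
    by_cases hi : Integrable (fun z => ‖f z‖ ^ q) (bergmanMeasure β)
    · have h2 := ofReal_integral_eq_lintegral_ofReal hi (Filter.Eventually.of_forall (fun z => by simp only [Pi.zero_apply]; positivity))
      rw [← h2] at hm
      exact (ENNReal.ofReal_le_ofReal_iff (by positivity)).1 hm
    · rw [integral_undef hi]; positivity
  calc _ ≤ (J ^ (q / p)) ^ (1 / q) := Real.rpow_le_rpow (integral_nonneg (fun z => by positivity)) hle (by positivity)
    _ = J ^ (1 / p) := by
      rw [← Real.rpow_mul hJ0]; congr 1; field_simp
end

section
/- Let 0 < p < q < ∞, α > 1, β = qα/p, C ∈ ℂ and a ∈ 𝔻. The function f(z) = C(1 − az)^{−2α/p} attains equality in Kulikov's inequality: (∫_𝔻 |f(z)|^q dA_β(z))^{1/q} = (∫_𝔻 |f(z)|^p dA_α(z))^{1/p}. -/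
open MeasureTheory Metric

open ComplexConjugate in
lemma ke_identity (a z : ℂ) :
    ‖1 - a * z‖ ^ 2 - ‖conj a - z‖ ^ 2 = (1 - ‖a‖ ^ 2) * (1 - ‖z‖ ^ 2) := by
  simp only [Complex.sq_norm, Complex.normSq_apply]
  simp
  ring

lemma ke_ne (a z : ℂ) (ha : ‖a‖ < 1) (hz : ‖z‖ < 1) : 1 - a * z ≠ 0 := by
  intro h
  have h1 : a * z = 1 := (sub_eq_zero.mp h).symm
  have h2 : ‖a‖ * ‖z‖ = 1 := by rw [← norm_mul, h1, norm_one]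
  nlinarith [norm_nonneg a, norm_nonneg z]

open ComplexConjugate in
lemma ke_norm_phi (a z : ℂ) (ha : ‖a‖ < 1) (hz : ‖z‖ < 1) :
    1 - ‖(conj a - z) / (1 - a * z)‖ ^ 2
      = (1 - ‖a‖ ^ 2) * (1 - ‖z‖ ^ 2) / ‖1 - a * z‖ ^ 2 := by
  have h : ‖1 - a * z‖ ≠ 0 := norm_ne_zero_iff.mpr (ke_ne a z ha hz)
  rw [← ke_identity, norm_div]
  generalize ‖1 - a * z‖ = N at *
  field_simp

lemma ke_one_sub_pos (z : ℂ) (hz : ‖z‖ < 1) : 0 < 1 - ‖z‖ ^ 2 := by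
  nlinarith [norm_nonneg z]

open ComplexConjugate in
lemma ke_phi_lt (a z : ℂ) (ha : ‖a‖ < 1) (hz : ‖z‖ < 1) :
    ‖(conj a - z) / (1 - a * z)‖ < 1 := by
  have h : 0 < ‖1 - a * z‖ := norm_pos_iff.mpr (ke_ne a z ha hz)
  have h1 := ke_norm_phi a z ha hz
  have h2 : 0 < (1 - ‖a‖ ^ 2) * (1 - ‖z‖ ^ 2) / ‖1 - a * z‖ ^ 2 := by
    have := ke_one_sub_pos a ha
    have := ke_one_sub_pos z hz
    positivity
  rw [← h1] at h2
  nlinarith [norm_nonneg ((conj a - z) / (1 - a * z))]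

open ComplexConjugate in
lemma ke_invol (a z : ℂ) (ha : ‖a‖ < 1) (hz : ‖z‖ < 1) :
    (conj a - (conj a - z) / (1 - a * z)) / (1 - a * ((conj a - z) / (1 - a * z))) = z := by
  have h := ke_ne a z ha hz
  have h2 : 1 - a * conj a ≠ 0 := ke_ne a _ ha (by simpa using ha)
  have e1 : conj a - (conj a - z) / (1 - a * z) = z * (1 - a * conj a) / (1 - a * z) := by
    rw [eq_div_iff h, sub_mul, div_mul_cancel₀ _ h]; ring
  have e2 : 1 - a * ((conj a - z) / (1 - a * z)) = (1 - a * conj a) / (1 - a * z) := by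
    rw [eq_div_iff h, sub_mul, mul_assoc, div_mul_cancel₀ _ h]; ring
  rw [e1, e2, div_div_div_cancel_right₀ h, mul_div_cancel_right₀ _ h2]

open ComplexConjugate in
lemma ke_deriv (a z : ℂ) (ha : ‖a‖ < 1) (hz : ‖z‖ < 1) :
    HasDerivAt (fun z => (conj a - z) / (1 - a * z))
      ((a * conj a - 1) / (1 - a * z) ^ 2) z := by
  have h := ke_ne a z ha hz
  have h1 : HasDerivAt (fun z => conj a - z) (-1) z := by
    simpa using (hasDerivAt_id z).const_sub (conj a)
  have h2 : HasDerivAt (fun z => 1 - a * z) (-a) z := by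
    simpa using ((hasDerivAt_id z).const_mul a).const_sub 1
  have h3 := h1.div h2 h
  have e : (a * conj a - 1) / (1 - a * z) ^ 2
      = (-1 * (1 - a * z) - (conj a - z) * -a) / (1 - a * z) ^ 2 := by
    congr 1; ring
  rw [e]
  exact h3

lemma ke_det (c : ℂ) :
    ((ContinuousLinearMap.toSpanSingleton ℂ c).restrictScalars ℝ).det = ‖c‖ ^ 2 := by
  rw [Complex.sq_norm]
  simp [ContinuousLinearMap.det, LinearMap.det_restrictScalars, Algebra.norm_complex_apply]

lemma ke_radial (α : ℝ) (hα : 1 < α) :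
    ∫ z in ball (0 : ℂ) 1, (α - 1) / Real.pi * (1 - ‖z‖ ^ 2) ^ (α - 2) = 1 := by
  have h1 : ∫ z in ball (0 : ℂ) 1, (α - 1) / Real.pi * (1 - ‖z‖ ^ 2) ^ (α - 2)
      = ∫ z : ℂ, (Set.Iio (1:ℝ)).indicator
        (fun r => (α - 1) / Real.pi * (1 - r ^ 2) ^ (α - 2)) ‖z‖ := by
    rw [← integral_indicator measurableSet_ball]
    congr 1
    ext z
    by_cases h : ‖z‖ < 1 <;> simp [Set.indicator, h]
  rw [h1, integral_fun_norm_addHaar]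
  have h2 : ∫ y in Set.Ioi (0:ℝ), y ^ (Module.finrank ℝ ℂ - 1) • (Set.Iio (1:ℝ)).indicator
        (fun r => (α - 1) / Real.pi * (1 - r ^ 2) ^ (α - 2)) y
      = ∫ y in (0:ℝ)..1, (α - 1) / Real.pi * (y * (1 - y ^ 2) ^ (α - 2)) := by
    rw [intervalIntegral.integral_of_le zero_le_one, integral_Ioc_eq_integral_Ioo,
      ← integral_indicator measurableSet_Ioo, ← integral_indicator measurableSet_Ioi]
    congr 1
    ext y
    by_cases h0 : 0 < y <;> by_cases h1 : y < 1 <;> simp [Set.indicator_apply, h0, h1]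
    ring
  have hc : ContinuousOn (fun y : ℝ => - (1 - y ^ 2) ^ (α - 1) / (2 * Real.pi)) (Set.Icc 0 1) := by
    apply Continuous.continuousOn
    have : Continuous (fun y : ℝ => (1 - y ^ 2) ^ (α - 1)) :=
      Continuous.rpow_const (by fun_prop) (fun x => Or.inr (by linarith))
    fun_prop
  have hd : ∀ y ∈ Set.Ioo (0:ℝ) 1, HasDerivAt
      (fun y : ℝ => - (1 - y ^ 2) ^ (α - 1) / (2 * Real.pi))
      ((α - 1) / Real.pi * (y * (1 - y ^ 2) ^ (α - 2))) y := by
    intro y hy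
    have hpos : 0 < 1 - y ^ 2 := by nlinarith [hy.1, hy.2]
    have e : HasDerivAt (fun y : ℝ => 1 - y ^ 2) (-(2 * y)) y := by
      simpa using (hasDerivAt_pow 2 y).const_sub 1
    have h3 := ((e.rpow_const (p := α - 1) (Or.inl hpos.ne')).neg.div_const (2 * Real.pi))
    rw [show α - 1 - 1 = α - 2 by ring] at h3
    have e4 : (α - 1) / Real.pi * (y * (1 - y ^ 2) ^ (α - 2))
        = -(-(2 * y) * (α - 1) * (1 - y ^ 2) ^ (α - 2)) / (2 * Real.pi) := by
      field_simp
    rw [e4]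
    exact h3
  have hi : IntervalIntegrable (fun y : ℝ => (α - 1) / Real.pi * (y * (1 - y ^ 2) ^ (α - 2)))
      volume 0 1 := by
    apply intervalIntegral.intervalIntegrable_deriv_of_nonneg
      (g := fun y : ℝ => - (1 - y ^ 2) ^ (α - 1) / (2 * Real.pi))
    · simpa using hc
    · simpa using hd
    · intro y hy
      simp only [zero_le_one, inf_of_le_left, sup_of_le_right] at hy
      have hpos : 0 < 1 - y ^ 2 := by nlinarith [hy.1, hy.2]
      have := hy.1
      have : 0 < α - 1 := by linarith
      positivity
  rw [h2, intervalIntegral.integral_eq_sub_of_hasDerivAt_of_le zero_le_one hc hd hi]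
  have : (0:ℝ) ^ (α - 1) = 0 := Real.zero_rpow (by linarith)
  simp [Measure.real, Complex.volume_ball, this]
  field_simp

open ComplexConjugate in
lemma ke_main (α : ℝ) (hα : 1 < α) (a : ℂ) (ha : ‖a‖ < 1) :
    ∫ z in ball (0 : ℂ) 1, ((α - 1) / Real.pi * (1 - ‖z‖ ^ 2) ^ (α - 2)) *
      ‖1 - a * z‖ ^ (-2 * α) = (1 - ‖a‖ ^ 2) ^ (-α) := by
  have hA := ke_one_sub_pos a ha
  have himg : (fun z => (conj a - z) / (1 - a * z)) '' ball (0:ℂ) 1 = ball 0 1 := by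
    ext w
    simp only [Set.mem_image, mem_ball_zero_iff]
    constructor
    · rintro ⟨z, hz, rfl⟩
      exact ke_phi_lt a z ha hz
    · intro hw
      exact ⟨_, ke_phi_lt a w ha hw, ke_invol a w ha hw⟩
  have hinj : Set.InjOn (fun z => (conj a - z) / (1 - a * z)) (ball (0:ℂ) 1) := by
    intro x hx y hy hxy
    rw [mem_ball_zero_iff] at hx hy
    simp only at hxy
    rw [← ke_invol a x ha hx, hxy, ke_invol a y ha hy]
  have key := integral_image_eq_integral_abs_det_fderiv_smul volume
    (measurableSet_ball (x := (0:ℂ)) (ε := 1))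
    (fun z hz => ((ke_deriv a z ha (mem_ball_zero_iff.mp hz)).hasFDerivAt.restrictScalars
      ℝ).hasFDerivWithinAt) hinj
    (fun z => (α - 1) / Real.pi * (1 - ‖z‖ ^ 2) ^ (α - 2))
  rw [himg, ke_radial α hα] at key
  have h3 : ∫ z in ball (0 : ℂ) 1, ((α - 1) / Real.pi * (1 - ‖z‖ ^ 2) ^ (α - 2)) *
      ‖1 - a * z‖ ^ (-2 * α) = ∫ z in ball (0 : ℂ) 1, (1 - ‖a‖ ^ 2) ^ (-α) *
      (|((ContinuousLinearMap.toSpanSingleton ℂ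
        ((a * conj a - 1) / (1 - a * z) ^ 2)).restrictScalars ℝ).det| •
        ((α - 1) / Real.pi * (1 - ‖(conj a - z) / (1 - a * z)‖ ^ 2) ^ (α - 2))) := by
    apply setIntegral_congr_fun measurableSet_ball
    intro z hz
    rw [mem_ball_zero_iff] at hz
    have hZ := ke_one_sub_pos z hz
    have hN : 0 < ‖1 - a * z‖ := norm_pos_iff.mpr (ke_ne a z ha hz)
    simp only
    rw [ke_det, ke_norm_phi a z ha hz, norm_div, norm_pow]
    have e : ‖a * conj a - 1‖ = 1 - ‖a‖ ^ 2 := by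
      rw [Complex.mul_conj, Complex.normSq_eq_norm_sq, ← norm_neg, neg_sub,
        ← Complex.ofReal_one, ← Complex.ofReal_sub, Complex.norm_real, Real.norm_of_nonneg hA.le]
    rw [e]
    generalize ‖1 - a * z‖ = N at *
    generalize 1 - ‖a‖ ^ 2 = A at *
    generalize 1 - ‖z‖ ^ 2 = Z at *
    rw [abs_of_nonneg (by positivity), Real.div_rpow (by positivity) (by positivity),
      Real.mul_rpow hA.le hZ.le, smul_eq_mul]
    have e1 : A ^ (α - 2) = A ^ α / A ^ 2 := by
      rw [Real.rpow_sub hA]; norm_num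
    have e2 : (N ^ 2) ^ (α - 2) = (N ^ α) ^ 2 / N ^ 4 := by
      have e5 : (N ^ 2) ^ α = (N ^ α) ^ 2 := by
        rw [← Real.rpow_natCast N 2, ← Real.rpow_mul hN.le,
          ← Real.rpow_natCast (N ^ α) 2, ← Real.rpow_mul hN.le, mul_comm α]
      rw [Real.rpow_sub (by positivity), e5, Real.rpow_two, ← pow_mul]
    have e3 : N ^ (-2 * α) = ((N ^ α) ^ 2)⁻¹ := by
      rw [← Real.rpow_natCast (N ^ α) 2, ← Real.rpow_mul hN.le, ← Real.rpow_neg hN.le]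
      congr 1
      push_cast; ring
    rw [e1, e2, e3, Real.rpow_neg hA.le]
    have : 0 < A ^ α := by positivity
    have : 0 < N ^ α := by positivity
    field_simp
  rw [h3, integral_const_mul, ← key, mul_one]

lemma ke_bergman (α : ℝ) (hα : 1 < α) (g : ℂ → ℝ) :
    ∫ z, g z ∂(bergmanMeasure α) =
      ∫ z in ball (0 : ℂ) 1, ((α - 1) / Real.pi * (1 - ‖z‖ ^ 2) ^ (α - 2)) * g z := by
  unfold bergmanMeasure
  rw [integral_withDensity_eq_integral_toReal_smul (by fun_prop) (by simp)]
  apply setIntegral_congr_fun measurableSet_ball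
  intro z hz
  have hZ := ke_one_sub_pos z (mem_ball_zero_iff.mp hz)
  have : 0 < α - 1 := by linarith
  simp only [smul_eq_mul]
  rw [ENNReal.toReal_ofReal (by positivity)]

lemma ke_value (p s α γ : ℝ) (hp : 0 < p) (hs : 0 < s) (hγ : 1 < γ) (h : γ = s * α / p)
    (C : ℂ) (a : ℂ) (ha : ‖a‖ < 1) :
    (∫ z, ‖C * (1 - a * z) ^ ((-2 * α / p : ℝ) : ℂ)‖ ^ s ∂(bergmanMeasure γ)) ^ (1 / s)
      = ‖C‖ * (1 - ‖a‖ ^ 2) ^ (-α / p) := by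
  have hA := ke_one_sub_pos a ha
  have e : ∀ z, ‖C * (1 - a * z) ^ ((-2 * α / p : ℝ) : ℂ)‖ ^ s
      = ‖C‖ ^ s * ‖1 - a * z‖ ^ (-2 * γ) := by
    intro z
    rw [norm_mul, Complex.norm_cpow_real, Real.mul_rpow (by positivity) (by positivity),
      ← Real.rpow_mul (by positivity), h]
    congr 2
    ring
  simp_rw [e]
  rw [integral_const_mul, ke_bergman γ hγ, ke_main γ hγ a ha,
    Real.mul_rpow (by positivity) (by positivity), ← Real.rpow_mul (by positivity),
    ← Real.rpow_mul hA.le, mul_one_div_cancel hs.ne', Real.rpow_one, h]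
  congr 2
  field_simp

theorem kulikov_extremizers
    (p q α β : ℝ) (hp : 0 < p) (hpq : p < q) (hα : 1 < α) (hβ : β = q * α / p)
    (C : ℂ) (a : ℂ) (ha : a ∈ ball (0 : ℂ) 1)
    (f : ℂ → ℂ) (hf : ∀ z, f z = C * (1 - a * z) ^ ((-2 * α / p : ℝ) : ℂ)) :
    (∫ z, ‖f z‖ ^ q ∂(bergmanMeasure β)) ^ (1 / q) =
      (∫ z, ‖f z‖ ^ p ∂(bergmanMeasure α)) ^ (1 / p) := by
  rw [mem_ball_zero_iff] at ha
  simp_rw [hf]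
  have hβ1 : 1 < β := by
    rw [hβ, lt_div_iff₀ hp]
    nlinarith
  rw [ke_value p q α β hp (hp.trans hpq) hβ1 hβ C a ha,
    ke_value p p α α hp hp hα (by field_simp) C a ha]
end

section
/- Let p ≥ 2 and let f be holomorphic on the unit disk 𝔻. Then the function Φ_p(r) = (1/2π) ∫₀^{2π} |f(√r · e^{iθ})|^p dθ is convex on the interval (0,1). -/
open MeasureTheory Metric

noncomputable section
namespace CM

def wl (P Q : ℂ) : ℂ →L[ℝ] ℂ :=
  P • (ContinuousLinearMap.id ℝ ℂ) + Q • (Complex.conjCLE : ℂ →L[ℝ] ℂ)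

lemma wl_apply (P Q h : ℂ) : wl P Q h = P * h + Q * (starRingEnd ℂ) h := by
  simp [wl]

def HasW (U : ℂ → ℂ) (P Q z : ℂ) : Prop := HasFDerivAt U (wl P Q) z

def circ (r θ : ℝ) : ℂ := (Real.sqrt r : ℂ) * Complex.exp (θ * Complex.I)

lemma circ_norm (r θ : ℝ) : ‖circ r θ‖ = Real.sqrt r := by
  simp [circ, Complex.norm_exp_ofReal_mul_I, abs_of_nonneg (Real.sqrt_nonneg r)]

lemma circ_mem {r : ℝ} (hr : r < 1) (θ : ℝ) : circ r θ ∈ ball (0 : ℂ) 1 := by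
  rw [mem_ball_zero_iff, circ_norm, Real.sqrt_lt' one_pos]; simpa using hr

lemma circ_cont : Continuous (fun x : ℝ × ℝ => circ x.1 x.2) := by
  unfold circ; fun_prop

lemma circ_conj {r : ℝ} (hr : 0 ≤ r) (θ : ℝ) :
    circ r θ * (starRingEnd ℂ) (circ r θ) = r := by
  rw [Complex.mul_conj, Complex.normSq_eq_norm_sq, circ_norm, Real.sq_sqrt hr]

lemma circ_deriv_r {r : ℝ} (hr : 0 < r) (θ : ℝ) :
    HasDerivAt (fun r => circ r θ) ((1 / (2 * r) : ℝ) • circ r θ) r := by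
  have h := ((Real.hasDerivAt_sqrt hr.ne').ofReal_comp).mul_const (Complex.exp (θ * Complex.I))
  refine h.congr_deriv ?_
  have h1 : (Real.sqrt r : ℂ) * (Real.sqrt r : ℂ) = r := by
    rw [← Complex.ofReal_mul, Real.mul_self_sqrt hr.le]
  have h2 : (Real.sqrt r : ℂ) ≠ 0 := by
    simpa using (Real.sqrt_pos.2 hr).ne'
  simp only [circ, Complex.real_smul]
  push_cast
  rw [← h1]
  field_simp

lemma circ_deriv_t (r θ : ℝ) :
    HasDerivAt (fun θ : ℝ => circ r θ) (Complex.I * circ r θ) θ := by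
  have h : HasDerivAt (fun θ : ℝ => (θ : ℂ) * Complex.I) Complex.I θ := by
    simpa using (Complex.ofRealCLM.hasDerivAt (x := θ)).mul_const Complex.I
  refine ((h.cexp).const_mul (Real.sqrt r : ℂ)).congr_deriv ?_
  simp only [circ]; ring

lemma circ_per (r : ℝ) : circ r (2 * Real.pi) = circ r 0 := by
  simp [circ]

def mn (U : ℂ → ℂ) (r : ℝ) : ℂ := ∫ θ in (0 : ℝ)..(2 * Real.pi), U (circ r θ)

lemma comp_cont {U : ℂ → ℂ} (hU : ContinuousOn U (ball 0 1)) {r : ℝ} (hr : r < 1) :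
    Continuous (fun θ => U (circ r θ)) :=
  hU.comp_continuous (circ_cont.comp (by fun_prop : Continuous (fun θ : ℝ => (r, θ))))
    (fun θ => circ_mem hr θ)

lemma mn_cont {U : ℂ → ℂ} (hU : ContinuousOn U (ball 0 1)) :
    ContinuousOn (mn U) (Set.Iio 1) := by
  rw [continuousOn_iff_continuous_domRestrict]
  have : Continuous (fun x : Set.Iio (1:ℝ) => ∫ θ in (0 : ℝ)..(2 * Real.pi), U (circ x.1 θ)) := by
    apply intervalIntegral.continuous_parametric_intervalIntegral_of_continuous'
    refine hU.comp_continuous (circ_cont.comp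
      (by fun_prop : Continuous (fun x : Set.Iio (1:ℝ) × ℝ => ((x.1 : ℝ), x.2)))) ?_
    rintro ⟨x, θ⟩
    exact circ_mem x.2 θ
  exact this

lemma mn_deriv {U P Q : ℂ → ℂ} (hU : ContDiffOn ℝ 1 U (ball 0 1))
    (hW : ∀ z ∈ ball (0 : ℂ) 1, HasW U (P z) (Q z) z) {r : ℝ} (h0 : 0 < r) (h1 : r < 1) :
    HasDerivAt (mn U) ((1 / r : ℝ) • mn (fun z => z * P z) r) r ∧
    HasDerivAt (mn U) ((1 / r : ℝ) • mn (fun z => (starRingEnd ℂ) z * Q z) r) r := by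
  have hL : ContinuousOn (fun z => wl (P z) (Q z)) (ball (0:ℂ) 1) := by
    refine (hU.continuousOn_fderiv_of_isOpen isOpen_ball le_rfl).congr ?_
    intro z hz
    exact (hW z hz).fderiv.symm
  have hUc := hU.continuousOn
  have c1 : ContinuousOn (fun z => wl (P z) (Q z) z) (ball (0:ℂ) 1) := hL.clm_apply continuousOn_id
  have c2 : ContinuousOn (fun z => wl (P z) (Q z) (Complex.I * z)) (ball (0:ℂ) 1) :=
    hL.clm_apply (by fun_prop)
  have dr : ∀ x : ℝ, 0 < x → x < 1 → ∀ θ : ℝ, HasDerivAt (fun x => U (circ x θ))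
      ((1 / (2 * x) : ℝ) • wl (P (circ x θ)) (Q (circ x θ)) (circ x θ)) x := by
    intro x hx hx1 θ
    have hh : HasFDerivAt U (wl (P (circ x θ)) (Q (circ x θ))) (circ x θ) := hW _ (circ_mem hx1 θ)
    have := hh.comp_hasDerivAt x (circ_deriv_r hx θ)
    rwa [ContinuousLinearMap.map_smul] at this
  have dt : ∀ θ : ℝ, HasDerivAt (fun θ => U (circ r θ))
      (wl (P (circ r θ)) (Q (circ r θ)) (Complex.I * circ r θ)) θ := fun θ =>
    (hW _ (circ_mem h1 θ)).comp_hasDerivAt θ (circ_deriv_t r θ)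
  have e2 : (∫ θ in (0 : ℝ)..(2 * Real.pi),
      wl (P (circ r θ)) (Q (circ r θ)) (Complex.I * circ r θ)) = 0 := by
    rw [intervalIntegral.integral_eq_sub_of_hasDerivAt (fun θ _ => dt θ)
      ((comp_cont c2 h1).intervalIntegrable _ _), circ_per, sub_self]
  obtain ⟨b, hb1, hb2⟩ := exists_between h1
  have hcomp : IsCompact (Set.Icc (r/2) b ×ˢ Set.Icc (0:ℝ) (2 * Real.pi)) :=
    isCompact_Icc.prod isCompact_Icc
  have hcc : ContinuousOn (fun x : ℝ × ℝ => (1 / (2 * x.1) : ℝ) •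
      wl (P (circ x.1 x.2)) (Q (circ x.1 x.2)) (circ x.1 x.2))
      (Set.Icc (r/2) b ×ˢ Set.Icc (0:ℝ) (2 * Real.pi)) := by
    refine ContinuousOn.fun_smul ?_ ?_
    · apply ContinuousOn.div (by fun_prop) (by fun_prop)
      rintro ⟨x, y⟩ ⟨⟨hx, -⟩, -⟩
      simp only at hx ⊢
      linarith
    · refine c1.comp circ_cont.continuousOn ?_
      rintro ⟨x, y⟩ ⟨⟨-, hx⟩, -⟩
      exact circ_mem (lt_of_le_of_lt hx hb2) y
  obtain ⟨C, hC⟩ := hcomp.exists_bound_of_continuousOn hcc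
  have main := (intervalIntegral.hasDerivAt_integral_of_dominated_loc_of_deriv_le
    (μ := volume) (a := 0) (b := 2 * Real.pi) (bound := fun _ => C)
    (F := fun x θ => U (circ x θ)) (x₀ := r) (s := Set.Ioo (r/2) b)
    (F' := fun x θ => (1 / (2 * x) : ℝ) • wl (P (circ x θ)) (Q (circ x θ)) (circ x θ))
    (Ioo_mem_nhds (by linarith) hb1)
    (by
      filter_upwards [Iio_mem_nhds h1] with x hx
      exact (comp_cont hUc hx).aestronglyMeasurable)
    ((comp_cont hUc h1).intervalIntegrable _ _)
    (((comp_cont c1 h1).const_smul (1 / (2 * r))).aestronglyMeasurable)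
    (by
      refine Filter.Eventually.of_forall fun t ht x hx => ?_
      rw [Set.uIoc_of_le (by positivity)] at ht
      exact hC (x, t) ⟨Set.Ioo_subset_Icc_self hx, Set.Ioc_subset_Icc_self ht⟩)
    (by simp)
    (by
      refine Filter.Eventually.of_forall fun t ht x hx => ?_
      exact dr x (by linarith [hx.1]) (lt_trans hx.2 hb2) t)).2
  have i1 := (comp_cont c1 h1).intervalIntegrable (μ := volume) 0 (2 * Real.pi)
  have i2 := ((comp_cont c2 h1).const_mul Complex.I).intervalIntegrable (μ := volume) 0 (2 * Real.pi)
  have k1 : ∀ θ, circ r θ * P (circ r θ) = (1/2 : ℂ) *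
      (wl (P (circ r θ)) (Q (circ r θ)) (circ r θ) -
        Complex.I * wl (P (circ r θ)) (Q (circ r θ)) (Complex.I * circ r θ)) := by
    intro θ
    simp only [wl_apply, map_mul, Complex.conj_I]
    linear_combination (-1/2 * P (circ r θ) * circ r θ + 1/2 * Q (circ r θ) * (starRingEnd ℂ) (circ r θ)) * -(Complex.I_sq)
  have k2 : ∀ θ, (starRingEnd ℂ) (circ r θ) * Q (circ r θ) = (1/2 : ℂ) *
      (wl (P (circ r θ)) (Q (circ r θ)) (circ r θ) +
        Complex.I * wl (P (circ r θ)) (Q (circ r θ)) (Complex.I * circ r θ)) := by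
    intro θ
    simp only [wl_apply, map_mul, Complex.conj_I]
    linear_combination (-1/2 * P (circ r θ) * circ r θ + 1/2 * Q (circ r θ) * (starRingEnd ℂ) (circ r θ)) * (Complex.I_sq)
  constructor
  · refine main.congr_deriv ?_
    simp only [mn, k1]
    rw [intervalIntegral.integral_const_mul, intervalIntegral.integral_sub i1 i2,
      intervalIntegral.integral_const_mul, e2, intervalIntegral.integral_smul]
    simp only [Complex.real_smul]; push_cast; field_simp; simp
  · refine main.congr_deriv ?_
    simp only [mn, k2]
    rw [intervalIntegral.integral_const_mul, intervalIntegral.integral_add i1 i2,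
      intervalIntegral.integral_const_mul, e2, intervalIntegral.integral_smul]
    simp only [Complex.real_smul]; push_cast; field_simp; simp

lemma HasW.mul {U V : ℂ → ℂ} {P Q P' Q' z : ℂ} (h : HasW U P Q z) (h' : HasW V P' Q' z) :
    HasW (fun z => U z * V z) (P * V z + U z * P') (Q * V z + U z * Q') z := by
  unfold HasW at *
  refine (HasFDerivAt.mul h h').congr_fderiv ?_
  ext x; simp [wl_apply]; ring

lemma HasW.add {U V : ℂ → ℂ} {P Q P' Q' z : ℂ} (h : HasW U P Q z) (h' : HasW V P' Q' z) :
    HasW (fun z => U z + V z) (P + P') (Q + Q') z := by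
  unfold HasW at *
  refine (HasFDerivAt.add h h').congr_fderiv ?_
  ext x; simp [wl_apply]; ring

lemma HasW.sub {U V : ℂ → ℂ} {P Q P' Q' z : ℂ} (h : HasW U P Q z) (h' : HasW V P' Q' z) :
    HasW (fun z => U z - V z) (P - P') (Q - Q') z := by
  unfold HasW at *
  refine (HasFDerivAt.sub h h').congr_fderiv ?_
  ext x; simp [wl_apply]; ring

lemma HasW.const (c z : ℂ) : HasW (fun _ => c) 0 0 z := by
  unfold HasW
  refine (hasFDerivAt_const c z).congr_fderiv ?_
  ext x; simp [wl_apply]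

lemma HasW.holo {U : ℂ → ℂ} {U' z : ℂ} (h : HasDerivAt U U' z) : HasW U U' 0 z := by
  unfold HasW
  refine (h.hasFDerivAt.restrictScalars ℝ).congr_fderiv ?_
  ext x; simp [wl_apply]; simp [mul_comm]

lemma HasW.conj {U : ℂ → ℂ} {P Q z : ℂ} (h : HasW U P Q z) :
    HasW (fun z => (starRingEnd ℂ) (U z)) ((starRingEnd ℂ) Q) ((starRingEnd ℂ) P) z := by
  unfold HasW at *
  refine ((Complex.conjCLE : ℂ →L[ℝ] ℂ).hasFDerivAt.comp z h).congr_fderiv ?_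
  ext x; simp [wl_apply]; simp [add_comm]

lemma HasW.comp {g U : ℂ → ℂ} {P Q z g' : ℂ} (hg : HasDerivAt g g' (U z)) (h : HasW U P Q z) :
    HasW (fun z => g (U z)) (g' * P) (g' * Q) z := by
  unfold HasW at *
  refine ((hg.hasFDerivAt.restrictScalars ℝ).comp z h).congr_fderiv ?_
  ext x; simp [wl_apply]; ring

lemma HasW.cq {U : ℂ → ℂ} {P Q Q' z : ℂ} (h : HasW U P Q z) (e : Q = Q') : HasW U P Q' z :=
  e ▸ h

lemma HasW.cp {U : ℂ → ℂ} {P Q P' z : ℂ} (h : HasW U P Q z) (e : P = P') : HasW U P' Q z :=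
  e ▸ h

lemma mn_deriv2 {U P Q : ℂ → ℂ} (hU : ContDiffOn ℝ 1 U (ball 0 1))
    (hW : ∀ z ∈ ball (0 : ℂ) 1, HasW U (P z) (Q z) z) {r : ℝ} (h0 : 0 < r) (h1 : r < 1) :
    HasDerivAt (fun r => (mn (fun z => z * U z) r).re) (mn Q r).re r := by
  have h := (mn_deriv (U := fun z => z * U z) (contDiffOn_id.mul hU)
    (fun z hz => (HasW.holo (hasDerivAt_id z)).mul (hW z hz)) h0 h1).2
  refine (Complex.reCLM.hasFDerivAt.comp_hasDerivAt r h).congr_deriv ?_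
  have : ((1 / r : ℝ) • mn (fun z => (starRingEnd ℂ) z * (0 * U z + id z * Q z)) r) = mn Q r := by
    unfold mn
    rw [← intervalIntegral.integral_smul]
    congr 1; ext θ
    have := circ_conj h0.le θ
    simp only [id, Complex.real_smul]; push_cast
    have hr : (r : ℂ) ≠ 0 := by exact_mod_cast h0.ne'
    field_simp
    linear_combination Q (circ r θ) * this
  simp only [Complex.reCLM_apply]
  rw [this]

lemma mn_deriv1 {U P Q : ℂ → ℂ} (hU : ContDiffOn ℝ 1 U (ball 0 1))
    (hW : ∀ z ∈ ball (0 : ℂ) 1, HasW U (P z) (Q z) z) {r : ℝ} (h0 : 0 < r) (h1 : r < 1) :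
    HasDerivAt (fun r => (mn U r).re) ((mn (fun z => z * P z) r).re / r) r := by
  refine (Complex.reCLM.hasFDerivAt.comp_hasDerivAt r
    (mn_deriv hU hW h0 h1).1).congr_deriv ?_
  rw [Complex.reCLM_apply, Complex.real_smul, Complex.re_ofReal_mul]; ring

lemma mn_nonneg {w : ℂ → ℂ} (hw : ∀ z ∈ ball (0 : ℂ) 1, 0 ≤ (w z).re) {r : ℝ} (h1 : r < 1) :
    0 ≤ (mn w r).re := by
  unfold mn
  by_cases h : IntervalIntegrable (fun θ => w (circ r θ)) volume 0 (2 * Real.pi)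
  · have := Complex.reCLM.intervalIntegral_comp_comm h
    simp only [Complex.reCLM_apply] at this
    rw [← this]
    exact intervalIntegral.integral_nonneg (by positivity) (fun θ _ => hw _ (circ_mem h1 θ))
  · rw [intervalIntegral.integral_undef h]; simp

lemma mn_zero (U : ℂ → ℂ) : (mn (fun z => z * U z) 0).re = 0 := by
  simp [mn, circ]

lemma mono_aux {g g' : ℝ → ℝ} (hc : ContinuousOn g (Set.Ico 0 1)) (h0 : g 0 = 0)
    (hd : ∀ r, 0 < r → r < 1 → HasDerivAt g (g' r) r) (hn : ∀ r, 0 < r → r < 1 → 0 ≤ g' r)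
    {r : ℝ} (hr : 0 < r) (hr1 : r < 1) : 0 ≤ g r := by
  have : MonotoneOn g (Set.Ico 0 1) := by
    refine monotoneOn_of_deriv_nonneg (convex_Ico 0 1) hc ?_ ?_ <;> rw [interior_Ico]
    · intro x hx; exact (hd x hx.1 hx.2).differentiableAt.differentiableWithinAt
    · intro x hx; rw [(hd x hx.1 hx.2).deriv]; exact hn x hx.1 hx.2
  rw [← h0]
  exact this ⟨le_rfl, one_pos⟩ ⟨hr.le, hr1⟩ hr.le

lemma convex_abs {u u1 v v1 w a b c d : ℂ → ℂ}
    (su : ContDiffOn ℝ 1 u (ball 0 1)) (su1 : ContDiffOn ℝ 1 u1 (ball 0 1))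
    (sv : ContDiffOn ℝ 1 v (ball 0 1)) (sv1 : ContDiffOn ℝ 1 v1 (ball 0 1))
    (hu : ∀ z ∈ ball (0 : ℂ) 1, HasW u (u1 z) (a z) z)
    (hu1 : ∀ z ∈ ball (0 : ℂ) 1, HasW u1 (b z) (v z) z)
    (hv : ∀ z ∈ ball (0 : ℂ) 1, HasW v (v1 z) (c z) z)
    (hv1 : ∀ z ∈ ball (0 : ℂ) 1, HasW v1 (d z) (w z) z)
    (hw : ∀ z ∈ ball (0 : ℂ) 1, 0 ≤ (w z).re) :
    ConvexOn ℝ (Set.Ioo (0 : ℝ) 1) (fun r => (mn u r).re) := by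
  have cont : ∀ U : ℂ → ℂ, ContDiffOn ℝ 1 U (ball 0 1) →
      ContinuousOn (fun r => (mn U r).re) (Set.Ico 0 1) := fun U hU =>
    Complex.continuous_re.comp_continuousOn
      ((mn_cont hU.continuousOn).mono (fun x hx => hx.2))
  have N : ∀ r, 0 < r → r < 1 → 0 ≤ (mn (fun z => z * v1 z) r).re := fun r hr hr1 =>
    mono_aux (g := fun r => (mn (fun z => z * v1 z) r).re) (cont _ (contDiffOn_id.mul sv1))
      (mn_zero _) (fun r h0 h1 => mn_deriv2 sv1 hv1 h0 h1) (fun r h0 h1 => mn_nonneg hw h1) hr hr1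
  have D : ∀ r, 0 < r → r < 1 →
      0 ≤ r * (mn v r).re - (mn (fun z => z * u1 z) r).re := fun r hr hr1 =>
    mono_aux (g := fun r => r * (mn v r).re - (mn (fun z => z * u1 z) r).re)
      (g' := fun r => (mn (fun z => z * v1 z) r).re)
      ((continuousOn_id.mul (cont _ sv)).sub (cont _ (contDiffOn_id.mul su1)))
      (by simp [mn_zero])
      (fun r h0 h1 => by
        refine (((hasDerivAt_id r).mul (mn_deriv1 sv hv h0 h1)).sub
          (mn_deriv2 su1 hu1 h0 h1)).congr_deriv ?_
        simp only [id]; field_simp; ring) N hr hr1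
  have ev : ∀ r ∈ Set.Ioo (0:ℝ) 1, HasDerivAt (deriv fun r => (mn u r).re)
      ((r * (mn v r).re - (mn (fun z => z * u1 z) r).re) / r ^ 2) r := by
    intro r hr
    have h := (mn_deriv2 su1 hu1 hr.1 hr.2).div (hasDerivAt_id r) hr.1.ne'
    refine (h.congr_of_eventuallyEq ?_).congr_deriv ?_
    · filter_upwards [Ioo_mem_nhds hr.1 hr.2] with x hx
      rw [(mn_deriv1 su hu hx.1 hx.2).deriv]; rfl
    · simp only [id]; ring
  refine convexOn_of_deriv2_nonneg' (convex_Ioo 0 1) ?_ ?_ ?_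
  · intro r hr; exact (mn_deriv1 su hu hr.1 hr.2).differentiableAt.differentiableWithinAt
  · intro r hr; exact (ev r hr).differentiableAt.differentiableWithinAt
  · intro r hr
    simp only [Function.iterate_succ, Function.iterate_zero, Function.comp, id]
    rw [(ev r hr).deriv]
    exact div_nonneg (D r hr.1 hr.2) (sq_nonneg r)

lemma quad_nonneg {al t ε c T q q1 q2 : ℝ} {X f f1 : ℂ} (hal : 1 ≤ al) (hε : 0 < ε) (hc : 0 < c)
    (ht : t = Complex.normSq f) (hT : T = t + ε)
    (hq : q = c * T ^ 2 * (al * t + ε)) (hq1 : q1 = (al - 1) * (c * T) * (al * t + 2 * ε))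
    (hq2 : q2 = (al - 1) * (al - 2) * c * (al * t + 3 * ε)) :
    0 ≤ q * Complex.normSq X + 2 * q1 * ((starRingEnd ℂ) X * (f1 ^ 2 * (starRingEnd ℂ) f)).re
      + (Complex.normSq f1) ^ 2 * (q1 + t * q2) := by
  have ht0 : 0 ≤ t := ht ▸ Complex.normSq_nonneg f
  have hT0 : 0 < T := by linarith
  have hqpos : 0 < q := by rw [hq]; positivity
  have hdisc : 0 ≤ q * (q1 + t * q2) - t * q1 ^ 2 := by
    have : q * (q1 + t * q2) - t * q1 ^ 2 = (al - 1) * c ^ 2 * T ^ 2 *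
        (2 * al * t * ε ^ 2 + al * (al - 1) * t ^ 2 * ε + 2 * ε ^ 3) := by
      rw [hq, hq1, hq2, hT]; ring
    rw [this]
    have : 0 ≤ al - 1 := by linarith
    positivity
  have key : q * (q * Complex.normSq X
      + 2 * q1 * ((starRingEnd ℂ) X * (f1 ^ 2 * (starRingEnd ℂ) f)).re
      + (Complex.normSq f1) ^ 2 * (q1 + t * q2)) =
      Complex.normSq ((q : ℂ) * X + (q1 : ℂ) * (f1 ^ 2 * (starRingEnd ℂ) f)) +
        (Complex.normSq f1) ^ 2 * (q * (q1 + t * q2) - t * q1 ^ 2) := by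
    rw [Complex.normSq_add, ht]
    simp only [map_mul, map_pow, Complex.normSq_conj, Complex.normSq_ofReal, Complex.conj_ofReal,
      Complex.conj_conj]
    have : ((q : ℂ) * X * ((q1 : ℂ) * ((starRingEnd ℂ) f1 ^ 2 * f))).re =
       q * q1 * ((starRingEnd ℂ) X * (f1 ^ 2 * (starRingEnd ℂ) f)).re := by
      rw [← Complex.conj_re]
      simp only [map_mul, map_pow, Complex.conj_ofReal, Complex.conj_conj]
      rw [← Complex.re_ofReal_mul]
      congr 1; push_cast; ring
    rw [this]; ring
  have : 0 ≤ q * (q * Complex.normSq X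
      + 2 * q1 * ((starRingEnd ℂ) X * (f1 ^ 2 * (starRingEnd ℂ) f)).re
      + (Complex.normSq f1) ^ 2 * (q1 + t * q2)) := by
    rw [key]
    have := Complex.normSq_nonneg ((q : ℂ) * X + (q1 : ℂ) * (f1 ^ 2 * (starRingEnd ℂ) f))
    positivity
  exact nonneg_of_mul_nonneg_right this hqpos

lemma convex_eps {al ε : ℝ} (hal : 1 ≤ al) (hε : 0 < ε) {f : ℂ → ℂ}
    (hf : DifferentiableOn ℂ f (ball (0 : ℂ) 1)) :
    ConvexOn ℝ (Set.Ioo (0 : ℝ) 1)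
      (fun r => (mn (fun z => (f z * (starRingEnd ℂ) (f z) + ε) ^ (al : ℂ)) r).re) := by
  have hf1 : DifferentiableOn ℂ (deriv f) (ball (0 : ℂ) 1) := hf.deriv isOpen_ball
  have hf2 : DifferentiableOn ℂ (deriv (deriv f)) (ball (0 : ℂ) 1) := hf1.deriv isOpen_ball
  have hol : ∀ g : ℂ → ℂ, DifferentiableOn ℂ g (ball (0 : ℂ) 1) → ∀ z ∈ ball (0 : ℂ) 1,
      HasW g (deriv g z) 0 z := fun g hg z hz =>
    HasW.holo (hg.differentiableAt (isOpen_ball.mem_nhds hz)).hasDerivAt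
  have smo : ∀ g : ℂ → ℂ, DifferentiableOn ℂ g (ball (0 : ℂ) 1) →
      ContDiffOn ℝ 1 g (ball (0 : ℂ) 1) := fun g hg =>
    ((hg.contDiffOn isOpen_ball : ContDiffOn ℂ 1 g _)).restrict_scalars ℝ
  have smc : ∀ g : ℂ → ℂ, ContDiffOn ℝ 1 g (ball (0 : ℂ) 1) →
      ContDiffOn ℝ 1 (fun z => (starRingEnd ℂ) (g z)) (ball (0 : ℂ) 1) := fun g hg =>
    (Complex.conjCLE : ℂ →L[ℝ] ℂ).contDiff.comp_contDiffOn hg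
  have s0 := smo f hf
  have s1 := smo _ hf1
  have s2 := smo _ hf2
  have t0 := smc _ s0
  have t1 := smc _ s1
  have t2 := smc _ s2
  set T : ℂ → ℂ := fun z => f z * (starRingEnd ℂ) (f z) + ε with hTdef
  have sT : ContDiffOn ℝ 1 T (ball (0 : ℂ) 1) := (s0.mul t0).add contDiffOn_const
  have Treal : ∀ z, T z = ((Complex.normSq (f z) + ε : ℝ) : ℂ) := by
    intro z; simp [hTdef, Complex.mul_conj]
  have Tpos : ∀ z, 0 < Complex.normSq (f z) + ε := fun z => by
    have := Complex.normSq_nonneg (f z); linarith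
  have Tslit : ∀ z, T z ∈ Complex.slitPlane := by
    intro z; rw [Treal]; exact Complex.ofReal_mem_slitPlane.2 (Tpos z)
  have sP : ∀ c : ℂ, ContDiffOn ℝ 1 (fun z => T z ^ c) (ball (0 : ℂ) 1) := by
    intro c z hz
    have h : ContDiffAt ℂ 1 (fun x : ℂ => x ^ c) (T z) :=
      (analyticAt_id.cpow analyticAt_const (Tslit z)).contDiffAt
    exact (h.restrict_scalars ℝ).comp_contDiffWithinAt z (sT z hz)
  have wT : ∀ z ∈ ball (0 : ℂ) 1, HasW T (deriv f z * (starRingEnd ℂ) (f z))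
      (f z * (starRingEnd ℂ) (deriv f z)) z := by
    intro z hz
    have := ((hol f hf z hz).mul (hol f hf z hz).conj).add (HasW.const (ε : ℂ) z)
    simpa using this
  have wP : ∀ (c : ℂ), ∀ z ∈ ball (0 : ℂ) 1,
      HasW (fun z => T z ^ c) (c * T z ^ (c - 1) * (deriv f z * (starRingEnd ℂ) (f z)))
      (c * T z ^ (c - 1) * (f z * (starRingEnd ℂ) (deriv f z))) z := by
    intro c z hz
    have h : HasDerivAt (fun x : ℂ => x ^ c) (c * T z ^ (c - 1)) (T z) := by
      simpa using (hasDerivAt_id (T z)).cpow_const (c := c) (Tslit z)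
    exact HasW.comp (g := fun x : ℂ => x ^ c) h (wT z hz)
  -- shift lemma
  have shift : ∀ (z c : ℂ), T z ^ (c + 1) = T z ^ c * T z := by
    intro z c
    rw [Complex.cpow_add _ _ (Complex.slitPlane_ne_zero (Tslit z)), Complex.cpow_one]
  set A : ℂ := (al : ℂ) with hA
  let q : ℂ → ℂ := fun z => A * T z ^ (A - 1) - ((A - 1) * ε) * T z ^ (A - 2)
  let q1 : ℂ → ℂ := fun z => (A - 1) * (A * T z ^ (A - 2) - ((A - 2) * ε) * T z ^ (A - 3))
  let q2 : ℂ → ℂ := fun z => (A - 1) * (A - 2) * (A * T z ^ (A - 3) - ((A - 3) * ε) * T z ^ (A - 4))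
  have sq : ContDiffOn ℝ 1 q (ball 0 1) :=
    (contDiffOn_const.mul (sP _)).sub (contDiffOn_const.mul (sP _))
  have sq1 : ContDiffOn ℝ 1 q1 (ball 0 1) :=
    contDiffOn_const.mul ((contDiffOn_const.mul (sP _)).sub (contDiffOn_const.mul (sP _)))
  have e1 : A - 1 - 1 = A - 2 := by ring
  have e2 : A - 2 - 1 = A - 3 := by ring
  have e3 : A - 3 - 1 = A - 4 := by ring
  have wq : ∀ z ∈ ball (0 : ℂ) 1, HasW q (q1 z * (deriv f z * (starRingEnd ℂ) (f z)))
      (q1 z * (f z * (starRingEnd ℂ) (deriv f z))) z := by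
    intro z hz
    have := ((HasW.const A z).mul (wP (A - 1) z hz)).sub
      ((HasW.const ((A - 1) * ε) z).mul (wP (A - 2) z hz))
    rw [e1, e2] at this
    convert this using 1 <;> simp only [q1] <;> ring
  have wq1 : ∀ z ∈ ball (0 : ℂ) 1, HasW q1 (q2 z * (deriv f z * (starRingEnd ℂ) (f z)))
      (q2 z * (f z * (starRingEnd ℂ) (deriv f z))) z := by
    intro z hz
    have := (HasW.const (A - 1) z).mul (((HasW.const A z).mul (wP (A - 2) z hz)).sub
      ((HasW.const ((A - 2) * ε) z).mul (wP (A - 3) z hz)))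
    rw [e2, e3] at this
    convert this using 1 <;> simp only [q2] <;> ring
  let u1 : ℂ → ℂ := fun z => A * T z ^ (A - 1) * (deriv f z * (starRingEnd ℂ) (f z))
  let v : ℂ → ℂ := fun z => A * (deriv f z * (starRingEnd ℂ) (deriv f z)) * q z
  let v1 : ℂ → ℂ := fun z => A * (starRingEnd ℂ) (deriv f z) *
    (deriv (deriv f) z * q z + deriv f z * deriv f z * (starRingEnd ℂ) (f z) * q1 z)
  have wu1 : ∀ z ∈ ball (0 : ℂ) 1, ∃ b, HasW u1 b (v z) z := by
    intro z hz
    have := ((HasW.const A z).mul (wP (A - 1) z hz)).mul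
      ((hol _ hf1 z hz).mul (hol f hf z hz).conj)
    rw [e1] at this
    refine ⟨_, HasW.cq this ?_⟩
    have h1 : T z ^ (A - 1) = T z ^ (A - 2) * T z := by rw [← shift]; congr 1; ring
    simp only [v, q, h1]
    simp only [hTdef]
    ring
  have wv : ∀ z ∈ ball (0 : ℂ) 1, ∃ c, HasW v (v1 z) c z := by
    intro z hz
    have := ((HasW.const A z).mul ((hol _ hf1 z hz).mul (hol _ hf1 z hz).conj)).mul (wq z hz)
    refine ⟨_, HasW.cp this ?_⟩
    simp only [v1, map_zero]
    ring
  have wv1 : ∀ z ∈ ball (0 : ℂ) 1, ∃ d w, HasW v1 d w z ∧ 0 ≤ w.re := by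
    intro z hz
    have := ((HasW.const A z).mul (hol _ hf1 z hz).conj).mul
      (((hol _ hf2 z hz).mul (wq z hz)).add
      ((((hol _ hf1 z hz).mul (hol _ hf1 z hz)).mul (hol f hf z hz).conj).mul (wq1 z hz)))
    refine ⟨_, _, this, ?_⟩
    set t := Complex.normSq (f z) with ht
    set c : ℝ := (t + ε) ^ (al - 4) with hc
    have c4 : T z ^ (A - 4) = (c : ℂ) := by
      rw [Treal, hc, Complex.ofReal_cpow (Tpos z).le]; push_cast; rfl
    have c3 : T z ^ (A - 3) = (c : ℂ) * T z := by
      rw [← c4, ← shift]; congr 1; ring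
    have c2 : T z ^ (A - 2) = (c : ℂ) * T z * T z := by
      rw [← c3, ← shift]; congr 1; ring
    have c1 : T z ^ (A - 1) = (c : ℂ) * T z * T z * T z := by
      rw [← c2, ← shift]; congr 1; ring
    have hc0 : 0 < c := Real.rpow_pos_of_pos (Tpos z) _
    have TR : T z = (t : ℂ) + ε := by rw [Treal]; push_cast; rfl
    have Q0 : q z = ((c * (t + ε) ^ 2 * (al * t + ε) : ℝ) : ℂ) := by
      simp only [q, c1, c2]; simp only [TR, hA]; push_cast; ring
    have Q1 : q1 z = (((al - 1) * (c * (t + ε)) * (al * t + 2 * ε) : ℝ) : ℂ) := by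
      simp only [q1, c2, c3]; simp only [TR, hA]; push_cast; ring
    have Q2 : q2 z = (((al - 1) * (al - 2) * c * (al * t + 3 * ε) : ℝ) : ℂ) := by
      simp only [q2, c3, c4]; simp only [TR, hA]; push_cast; ring
    have nn := quad_nonneg (X := deriv (deriv f) z) (f1 := deriv f z) hal hε hc0 ht rfl rfl rfl rfl
    set Q0r : ℝ := c * (t + ε) ^ 2 * (al * t + ε)
    set Q1r : ℝ := (al - 1) * (c * (t + ε)) * (al * t + 2 * ε)
    set Q2r : ℝ := (al - 1) * (al - 2) * c * (al * t + 3 * ε)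
    have := mul_nonneg (zero_le_one.trans hal) nn
    refine le_of_le_of_eq this ?_
    rw [Q0, Q1, Q2]
    have ht' : t = (f z).re * (f z).re + (f z).im * (f z).im := by rw [ht, Complex.normSq_apply]
    generalize deriv (deriv f) z = X
    generalize deriv f z = Y
    simp only [hA, Complex.normSq_apply, Complex.mul_re, Complex.mul_im, Complex.add_re,
      Complex.add_im, Complex.conj_re, Complex.conj_im, Complex.ofReal_re, Complex.ofReal_im,
      Complex.zero_re, Complex.zero_im, pow_two, map_zero]
    rw [ht']
    ring
  choose! b hb using wu1
  choose! c hc using wv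
  choose! d w hd using wv1
  exact convex_abs (u1 := u1) (v := v) (v1 := v1) (sP A)
    ((contDiffOn_const.mul (sP _)).mul (s1.mul t0))
    ((contDiffOn_const.mul (s1.mul t1)).mul sq)
    ((contDiffOn_const.mul t1).mul ((s2.mul sq).add (((s1.mul s1).mul t0).mul sq1)))
    (wP A) hb hc (fun z hz => (hd z hz).1) (fun z hz => (hd z hz).2)

end CM
end

theorem circle_means_convex_p_ge_two
    (p : ℝ) (hp : 2 ≤ p)
    (f : ℂ → ℂ) (hf : DifferentiableOn ℂ f (ball (0 : ℂ) 1)) :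
    ConvexOn ℝ (Set.Ioo (0 : ℝ) 1)
      (fun r => (1 / (2 * Real.pi)) *
        ∫ θ in (0 : ℝ)..(2 * Real.pi),
          ‖f ((Real.sqrt r : ℂ) * Complex.exp (θ * Complex.I))‖ ^ p) := by
  have hal : 1 ≤ p / 2 := by linarith
  let Ψ : ℝ → ℝ → ℝ := fun ε r => ∫ θ in (0 : ℝ)..(2 * Real.pi),
    (‖f (CM.circ r θ)‖ ^ 2 + ε) ^ (p / 2)
  have fc : ∀ r < 1, Continuous (fun θ => f (CM.circ r θ)) := fun r hr =>
    CM.comp_cont hf.continuousOn hr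
  have conv : ∀ ε, 0 < ε → ConvexOn ℝ (Set.Ioo (0 : ℝ) 1) (Ψ ε) := by
    intro ε hε
    refine (CM.convex_eps hal hε hf).congr ?_
    intro r hr
    have e : ∀ θ, (f (CM.circ r θ) * (starRingEnd ℂ) (f (CM.circ r θ)) + ε) ^ ((p / 2 : ℝ) : ℂ)
        = (((‖f (CM.circ r θ)‖ ^ 2 + ε) ^ (p / 2) : ℝ) : ℂ) := by
      intro θ
      rw [Complex.ofReal_cpow (by positivity), Complex.mul_conj, Complex.normSq_eq_norm_sq]
      push_cast; rfl
    simp only [CM.mn, e, Ψ]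
    rw [intervalIntegral.integral_ofReal, Complex.ofReal_re]
  have lim : ∀ r < 1, Filter.Tendsto (fun ε => Ψ ε r) (nhdsWithin 0 (Set.Ioi 0))
      (nhds (Ψ 0 r)) := by
    intro r hr
    have : Continuous (fun ε => Ψ ε r) := by
      apply intervalIntegral.continuous_parametric_intervalIntegral_of_continuous'
      have h1 := (fc r hr).comp (continuous_snd : Continuous (Prod.snd : ℝ × ℝ → ℝ))
      have h2 : Continuous (fun x : ℝ × ℝ => ‖f (CM.circ r x.2)‖ ^ 2 + x.1) :=
        (h1.norm.pow 2).add continuous_fst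
      exact h2.rpow_const (fun x => Or.inr (by linarith))
    exact (this.tendsto 0).mono_left nhdsWithin_le_nhds
  have c0 : ConvexOn ℝ (Set.Ioo (0 : ℝ) 1) (Ψ 0) := by
    refine ⟨convex_Ioo 0 1, ?_⟩
    intro x hx y hy a b ha hb hab
    have hz := convex_Ioo (0:ℝ) 1 hx hy ha hb hab
    refine le_of_tendsto_of_tendsto (lim _ hz.2)
      (((lim x hx.2).const_smul a).add ((lim y hy.2).const_smul b)) ?_
    filter_upwards [self_mem_nhdsWithin] with ε hε
    exact (conv ε hε).2 hx hy ha hb hab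
  have := c0.smul (c := 1 / (2 * Real.pi)) (by positivity)
  refine this.congr ?_
  intro r hr
  simp only [Ψ, smul_eq_mul]
  congr 2
  ext θ
  rw [add_zero, ← Real.rpow_natCast, ← Real.rpow_mul (norm_nonneg _)]
  congr 1
  push_cast; ring
end

section
/- Let 0 < p < 2 and let f be holomorphic and zero-free on the unit disk 𝔻 (f(z) ≠ 0 for all z ∈ 𝔻). Then the function Φ_p(r) = (1/2π) ∫₀^{2π} |f(√r · e^{iθ})|^p dθ is convex on the interval (0,1). -/
open MeasureTheory Metric

lemma aux_log (f : ℂ → ℂ) (hf : DifferentiableOn ℂ f (ball (0 : ℂ) 1))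
    (hf0 : ∀ z ∈ ball (0 : ℂ) 1, f z ≠ 0) :
    ∃ L : ℂ → ℂ, DifferentiableOn ℂ L (ball 0 1) ∧
      ∀ z ∈ ball (0 : ℂ) 1, f z = Complex.exp (L z) := by
  have hd : DifferentiableOn ℂ (fun z => deriv f z / f z) (ball 0 1) :=
    (hf.deriv isOpen_ball).div hf hf0
  obtain ⟨L, hL0, hL⟩ := hd.isExactOn_ball.with_val_at 0 (Complex.log (f 0))
  have h0 : (0 : ℂ) ∈ ball (0 : ℂ) 1 := by simp
  refine ⟨L, fun z hz => (hL z hz).differentiableAt.differentiableWithinAt, fun z hz => ?_⟩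
  have hder : ∀ w ∈ ball (0 : ℂ) 1,
      HasDerivAt (fun w => f w * Complex.exp (-L w)) 0 w := by
    intro w hw
    have h1 := (hf.differentiableAt (isOpen_ball.mem_nhds hw)).hasDerivAt
    have h2 := h1.mul ((hL w hw).neg.cexp)
    have h3 := hf0 w hw
    have h4 : f w * (deriv f w / f w) = deriv f w := by field_simp
    have h5 : deriv f w * Complex.exp (-L w) +
        f w * (Complex.exp (-L w) * -(deriv f w / f w)) = 0 := by
      linear_combination (-Complex.exp (-L w)) * h4
    exact h5 ▸ h2
  have key := IsOpen.is_const_of_fderiv_eq_zero (𝕜 := ℂ) isOpen_ball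
    (convex_ball (0 : ℂ) 1).isPreconnected
    (fun w hw => (hder w hw).differentiableAt.differentiableWithinAt)
    (fun w hw => by
      have := (hder w hw).hasFDerivAt.fderiv
      rw [this]; ext; simp) hz h0
  simp only [hL0] at key
  rw [Complex.exp_neg, Complex.exp_neg, Complex.exp_log (hf0 0 h0),
    mul_inv_cancel₀ (hf0 0 h0)] at key
  have := Complex.exp_ne_zero (L z)
  field_simp at key
  exact key

lemma aux_parseval_fin (a : ℕ → ℂ) (s : ℝ) (N : ℕ) :
    (1 / (2 * Real.pi)) * ∫ θ in (0 : ℝ)..(2 * Real.pi),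
      ‖∑ n ∈ Finset.range N, a n * ((s : ℂ) * Complex.exp (θ * Complex.I)) ^ n‖ ^ 2
      = ∑ n ∈ Finset.range N, ‖a n‖ ^ 2 * (s ^ 2) ^ n := by
  set P : Polynomial ℂ := ∑ n ∈ Finset.range N, Polynomial.monomial n (a n * (s : ℂ) ^ n) with hP
  have hc : ∀ i, P.coeff i = if i < N then a i * (s : ℂ) ^ i else 0 := by
    intro i
    simp [hP, Polynomial.finsetSum_coeff, Polynomial.coeff_monomial]
  have h := Polynomial.sum_sq_norm_coeff_eq_circleAverage P
  rw [Real.circleAverage_def] at h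
  have h1 : ∑ i ∈ P.support, ‖P.coeff i‖ ^ 2 = ∑ n ∈ Finset.range N, ‖a n‖ ^ 2 * (s ^ 2) ^ n := by
    rw [Finset.sum_subset (s₂ := Finset.range N)]
    · refine Finset.sum_congr rfl fun i hi => ?_
      rw [hc, if_pos (Finset.mem_range.1 hi)]
      simp only [norm_mul, norm_pow, Complex.norm_real, Real.norm_eq_abs, mul_pow]
      rw [← pow_mul, mul_comm i 2, pow_mul, sq_abs]
    · intro i hi
      by_contra hN
      rw [Polynomial.mem_support_iff, hc, if_neg (by simpa using hN)] at hi
      exact hi rfl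
    · intro i _ hi
      rw [Polynomial.notMem_support_iff.1 hi]; simp
  rw [← h1, h, smul_eq_mul, one_div]
  congr 1
  refine intervalIntegral.integral_congr fun θ _ => ?_
  simp [hP, Polynomial.eval_finsetSum, circleMap, mul_pow, mul_assoc]

lemma aux_parseval (a : ℕ → ℂ) (g : ℂ → ℂ) (s : ℝ) (hs0 : 0 ≤ s) (hs : s < 1)
    (hg : ∀ z ∈ ball (0 : ℂ) 1, HasSum (fun n => a n * z ^ n) (g z)) :
    Filter.Tendsto (fun N => ∑ n ∈ Finset.range N, ‖a n‖ ^ 2 * (s ^ 2) ^ n) Filter.atTop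
      (nhds ((1 / (2 * Real.pi)) * ∫ θ in (0 : ℝ)..(2 * Real.pi),
        ‖g ((s : ℂ) * Complex.exp (θ * Complex.I))‖ ^ 2)) := by
  simp_rw [← aux_parseval_fin]
  refine Filter.Tendsto.const_mul _ ?_
  have hnorm : ∀ θ : ℝ, ‖(s : ℂ) * Complex.exp (θ * Complex.I)‖ = s := by
    intro θ
    rw [norm_mul, Complex.norm_exp_ofReal_mul_I]
    simp [abs_of_nonneg hs0]
  have hsum : Summable (fun n => ‖a n‖ * s ^ n) := by
    have := (hg (s : ℂ) (by simpa [abs_of_nonneg hs0] using hs)).summable.norm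
    simpa [abs_of_nonneg hs0] using this
  refine intervalIntegral.tendsto_integral_filter_of_dominated_convergence
    (fun _ => (∑' n, ‖a n‖ * s ^ n) ^ 2) ?_ ?_ ?_ ?_
  · refine Filter.Eventually.of_forall fun N => ?_
    refine Continuous.aestronglyMeasurable ?_
    fun_prop
  · refine Filter.Eventually.of_forall fun N => Filter.Eventually.of_forall fun θ _ => ?_
    rw [norm_pow, norm_norm]
    gcongr
    refine (norm_sum_le _ _).trans ?_
    simp_rw [norm_mul _ (_ ^ _), norm_pow, hnorm]
    exact hsum.sum_le_tsum _ (fun i _ => by positivity)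
  · simp
  · refine Filter.Eventually.of_forall fun θ _ => ?_
    exact ((hg _ (by rw [mem_ball_zero_iff, hnorm]; exact hs)).tendsto_sum_nat.norm.pow 2)

theorem circle_means_convex_zero_free
    (p : ℝ) (hp0 : 0 < p) (hp : p < 2)
    (f : ℂ → ℂ) (hf : DifferentiableOn ℂ f (ball (0 : ℂ) 1))
    (hf0 : ∀ z ∈ ball (0 : ℂ) 1, f z ≠ 0) :
    ConvexOn ℝ (Set.Ioo (0 : ℝ) 1)
      (fun r => (1 / (2 * Real.pi)) *
        ∫ θ in (0 : ℝ)..(2 * Real.pi),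
          ‖f ((Real.sqrt r : ℂ) * Complex.exp (θ * Complex.I))‖ ^ p) := by
  obtain ⟨L, hL, hfL⟩ := aux_log f hf hf0
  set g : ℂ → ℂ := fun z => Complex.exp ((p / 2 : ℝ) * L z) with hgdef
  have hgd : DifferentiableOn ℂ g (ball 0 1) := (hL.const_mul _).cexp
  have hfg : ∀ z ∈ ball (0 : ℂ) 1, ‖f z‖ ^ p = ‖g z‖ ^ 2 := by
    intro z hz
    rw [hfL z hz, hgdef]
    simp only [Complex.norm_exp, Complex.re_ofReal_mul]
    rw [← Real.exp_mul, ← Real.exp_nat_mul]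
    congr 1
    push_cast
    ring
  set a : ℕ → ℂ := fun n => (n.factorial : ℂ)⁻¹ * iteratedDeriv n g 0 with ha
  have hg : ∀ z ∈ ball (0 : ℂ) 1, HasSum (fun n => a n * z ^ n) (g z) := by
    intro z hz
    have h := Complex.hasSum_taylorSeries_on_ball hgd hz
    have e : (fun n => a n * z ^ n) =
        fun n : ℕ => (n.factorial : ℂ)⁻¹ • (z - 0) ^ n • iteratedDeriv n g 0 := by
      funext n
      simp only [ha, smul_eq_mul, sub_zero]
      ring
    rw [e]
    exact h
  have hT : ∀ r ∈ Set.Ioo (0 : ℝ) 1,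
      Filter.Tendsto (fun N => ∑ n ∈ Finset.range N, ‖a n‖ ^ 2 * r ^ n) Filter.atTop
      (nhds ((1 / (2 * Real.pi)) * ∫ θ in (0 : ℝ)..(2 * Real.pi),
        ‖f ((Real.sqrt r : ℂ) * Complex.exp (θ * Complex.I))‖ ^ p)) := by
    intro r hr
    have hs1 : Real.sqrt r < 1 := by
      rw [Real.sqrt_lt' one_pos]; simpa using hr.2
    have := aux_parseval a g (Real.sqrt r) (Real.sqrt_nonneg r) hs1 hg
    rw [Real.sq_sqrt hr.1.le] at this
    convert this using 3
    refine intervalIntegral.integral_congr fun θ _ => ?_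
    refine hfg _ ?_
    rw [mem_ball_zero_iff, norm_mul, Complex.norm_exp_ofReal_mul_I]
    simpa [abs_of_nonneg (Real.sqrt_nonneg r)] using hs1
  refine ⟨convex_Ioo 0 1, fun x hx y hy u v hu hv huv => ?_⟩
  have hxy := convex_Ioo (0 : ℝ) 1 hx hy hu hv huv
  refine le_of_tendsto_of_tendsto' (hT _ hxy)
    (((hT x hx).const_smul u).add ((hT y hy).const_smul v)) fun N => ?_
  simp only [smul_eq_mul, Finset.mul_sum, ← Finset.sum_add_distrib]
  refine Finset.sum_le_sum fun n _ => ?_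
  have := (convexOn_pow (𝕜 := ℝ) n).2 (Set.mem_Ici.2 hx.1.le) (Set.mem_Ici.2 hy.1.le) hu hv huv
  simp only [smul_eq_mul] at this
  calc _ ≤ ‖a n‖ ^ 2 * (u * x ^ n + v * y ^ n) := by gcongr
    _ = _ := by ring
end
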